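/- arXiv:1612.04880 — 3 statements merged into one kernel-verified Lean document; each statement's English description precedes it below -/
import Mathlib

section
/- Let I ⊂ ℝ be a bounded open interval, φ : I → ℝ a convex C² function, κ = φ'' ≥ 0, and μ the measure on I with density κ^{1/3} with respect to Lebesgue measure. Let χ ∈ 𝒮(ℝ) be even with ∫_ℝ χ = 1. Let 1 ≤ p < 4/3 and let q be defined by p' = 3q, with q' the conjugate exponent of q. For measurable functions ε', ε'' : I → (0,1), define the extension-type operator ℰ_{ε',ε''} g(ξ,η) = ∫_I χ̂(ε'(x)ξ) χ̂(ε''(x)η) e^{i(ξx + ηφ(x))} g(x) κ(x)^{1/3} dx. Then there is a constant C_p, independent of the functions ε' and ε'', such that ‖ℰ_{ε',ε''} g‖_{L^{p'}(ℝ²)} ≤ C_p ‖g‖_{L^{q'}(I,μ)} for all g ∈ C_c^∞(I). -/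
open MeasureTheory Set SchwartzMap ENNReal

/-- The Fourier transform on `ℝ`, `χ̂(ξ) = ∫ χ(u) e^{-iuξ} du`. -/
noncomputable def fourierTransform1 (χ : ℝ → ℂ) (ξ : ℝ) : ℂ :=
  ∫ u : ℝ, Complex.exp (-Complex.I * (u * ξ)) * χ u

lemma enn_mul_le_sq (a b : ℝ≥0∞) : a * b ≤ a ^ 2 + b ^ 2 := by
  rcases le_total a b with h | h
  · calc a * b ≤ b * b := by gcongr
      _ = b ^ 2 := by ring
      _ ≤ _ := le_add_self
  · calc a * b ≤ a * a := by gcongr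
      _ = a ^ 2 := by ring
      _ ≤ _ := le_self_add

/-- two dimensional Fourier integral -/
noncomputable def FT2 (h : ℝ × ℝ → ℂ) (w : ℝ × ℝ) : ℂ :=
  ∫ ζ : ℝ × ℝ, h ζ * Complex.exp (Complex.I * (ζ.1 * w.1 + ζ.2 * w.2))

lemma norm_phase (ζ w : ℝ × ℝ) :
    ‖Complex.exp (Complex.I * ((ζ.1 : ℂ) * w.1 + ζ.2 * w.2))‖ = 1 := by
  have : Complex.I * ((ζ.1 : ℂ) * w.1 + ζ.2 * w.2) = ((ζ.1 * w.1 + ζ.2 * w.2 : ℝ) : ℂ) * Complex.I := by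
    push_cast; ring
  rw [this, Complex.norm_exp_ofReal_mul_I]

lemma gauss_int (b : ℝ) (hb : 0 < b) (t : ℝ) :
    ∫ x : ℝ, Complex.exp (Complex.I * t * x) * Complex.exp (-b * x ^ 2) =
      ((Real.sqrt (Real.pi / b) * Real.exp (-t ^ 2 / (4 * b)) : ℝ) : ℂ) := by
  rw [fourierIntegral_gaussian (by simpa using hb)]
  push_cast
  congr 1
  rw [Real.sqrt_eq_rpow, Complex.ofReal_cpow (by positivity)]
  push_cast; rfl

/-- gaussian weight -/
noncomputable def gw (b : ℝ) (w : ℝ × ℝ) : ℝ := Real.exp (-b * w.1 ^ 2) * Real.exp (-b * w.2 ^ 2)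

lemma gw_integrable (b : ℝ) (hb : 0 < b) : Integrable (gw b) := by
  exact (integrable_exp_neg_mul_sq hb).mul_prod (integrable_exp_neg_mul_sq hb)

lemma gw_FT (b : ℝ) (hb : 0 < b) (t : ℝ × ℝ) :
    ∫ w : ℝ × ℝ, Complex.exp (Complex.I * (t.1 * w.1 + t.2 * w.2)) * (gw b w : ℂ) =
      ((Real.pi / b * gw (1 / (4 * b)) t : ℝ) : ℂ) := by
  have : ∀ w : ℝ × ℝ, Complex.exp (Complex.I * (t.1 * w.1 + t.2 * w.2)) * (gw b w : ℂ) =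
     (Complex.exp (Complex.I * t.1 * w.1) * Complex.exp (-b * w.1 ^ 2)) *
     (Complex.exp (Complex.I * t.2 * w.2) * Complex.exp (-b * w.2 ^ 2)) := by
    intro w
    rw [gw]; push_cast
    rw [mul_add, Complex.exp_add]
    simp only [mul_assoc]
    ring
  simp_rw [this]
  rw [show (volume : Measure (ℝ × ℝ)) = (volume : Measure ℝ).prod volume from rfl]
  rw [integral_prod_mul (f := fun x : ℝ => Complex.exp (Complex.I * t.1 * x) * Complex.exp (-b * x ^ 2))
    (g := fun x : ℝ => Complex.exp (Complex.I * t.2 * x) * Complex.exp (-b * x ^ 2))]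
  rw [gauss_int b hb, gauss_int b hb, ← Complex.ofReal_mul]
  congr 1
  rw [gw]
  have h1 : Real.sqrt (Real.pi / b) * Real.sqrt (Real.pi / b) = Real.pi / b :=
    Real.mul_self_sqrt (by positivity)
  have e : ∀ s : ℝ, -s ^ 2 / (4 * b) = -(1 / (4 * b)) * s ^ 2 := by intro s; ring
  rw [e, e, mul_mul_mul_comm, h1]

lemma gw_total (b : ℝ) (hb : 0 < b) :
    ∫⁻ t : ℝ × ℝ, ENNReal.ofReal (Real.pi / b * gw (1 / (4 * b)) t) =
      ENNReal.ofReal ((2 * Real.pi) ^ 2) := by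
  have hb' : 0 < 1 / (4 * b) := by positivity
  rw [← ofReal_integral_eq_lintegral_ofReal ((gw_integrable _ hb').const_mul _)
    (Filter.Eventually.of_forall fun t => by unfold gw; positivity)]
  congr 1
  rw [integral_const_mul]
  unfold gw
  rw [show (volume : Measure (ℝ × ℝ)) = (volume : Measure ℝ).prod volume from rfl]
  rw [integral_prod_mul (f := fun x : ℝ => Real.exp (-(1 / (4 * b)) * x ^ 2))
    (g := fun x : ℝ => Real.exp (-(1 / (4 * b)) * x ^ 2)), integral_gaussian,
    Real.mul_self_sqrt (by positivity)]
  field_simp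
  ring

lemma FT2_aux (h : ℝ × ℝ → ℂ) (hh : Integrable h) (b : ℝ) (hb : 0 < b) :
    ∫ w : ℝ × ℝ, (FT2 h w * (starRingEnd ℂ) (FT2 h w)) * (gw b w : ℂ) =
      ∫ z : (ℝ × ℝ) × (ℝ × ℝ), (h z.1 * (starRingEnd ℂ) (h z.2)) *
        ((Real.pi / b * gw (1 / (4 * b)) (z.1 - z.2) : ℝ) : ℂ) := by
  have e1 : ∀ w : ℝ × ℝ, (FT2 h w * (starRingEnd ℂ) (FT2 h w)) * (gw b w : ℂ) =
      ∫ z : (ℝ × ℝ) × (ℝ × ℝ), (h z.1 * (starRingEnd ℂ) (h z.2)) *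
       (Complex.exp (Complex.I * (((z.1 - z.2).1 : ℝ) * w.1 + ((z.1 - z.2).2 : ℝ) * w.2)) * (gw b w : ℂ)) := by
    intro w
    unfold FT2
    rw [← integral_conj, ← integral_prod_mul, ← integral_mul_const]
    congr 1
    ext z
    rw [map_mul, ← Complex.exp_conj]
    simp only [map_mul, map_add, Complex.conj_I, Complex.conj_ofReal]
    rw [show Complex.I * (((z.1 - z.2).1 : ℝ) * (w.1 : ℂ) + ((z.1 - z.2).2 : ℝ) * w.2) =
      Complex.I * (z.1.1 * w.1 + z.1.2 * w.2) + -Complex.I * (z.2.1 * w.1 + z.2.2 * w.2) by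
        simp only [Prod.fst_sub, Prod.snd_sub]; push_cast; ring, Complex.exp_add]
    ring
  simp_rw [e1]
  rw [integral_integral_swap]
  · congr 1
    ext z
    rw [integral_const_mul, gw_FT b hb]
  · have i1 : Integrable (fun q : (ℝ × ℝ) × ((ℝ × ℝ) × (ℝ × ℝ)) =>
        (gw b q.1 : ℂ) * (h q.2.1 * (starRingEnd ℂ) (h q.2.2))) := by
      refine Integrable.mul_prod (f := fun w => (gw b w : ℂ))
        (g := fun z : (ℝ × ℝ) × (ℝ × ℝ) => h z.1 * (starRingEnd ℂ) (h z.2)) (gw_integrable b hb).ofReal ?_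
      refine Integrable.mul_prod (f := h)
        (g := fun z => (starRingEnd ℂ) (h z)) hh ?_
      exact (Complex.conjCLE.toContinuousLinearMap).integrable_comp hh
    have := i1.bdd_mul (c := 1) (f := fun q : (ℝ × ℝ) × ((ℝ × ℝ) × (ℝ × ℝ)) =>
      Complex.exp (Complex.I * (((q.2.1 - q.2.2).1 : ℝ) * q.1.1 + ((q.2.1 - q.2.2).2 : ℝ) * q.1.2)))
      (Continuous.aestronglyMeasurable (by fun_prop))
      (Filter.Eventually.of_forall fun q => by rw [norm_phase])
    refine this.congr (Filter.Eventually.of_forall fun q => ?_)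
    simp only [Function.uncurry]
    ring

lemma FT2_continuous (h : ℝ × ℝ → ℂ) (hh : Integrable h) : Continuous (FT2 h) := by
  unfold FT2
  refine continuous_of_dominated (bound := fun ζ => ‖h ζ‖) ?_ ?_ hh.norm ?_
  · intro w
    exact hh.aestronglyMeasurable.mul (Continuous.aestronglyMeasurable (by fun_prop))
  · intro w
    refine Filter.Eventually.of_forall fun ζ => ?_
    rw [norm_mul, norm_phase, mul_one]
  · refine Filter.Eventually.of_forall fun ζ => ?_
    fun_prop

lemma FT2_bound (h : ℝ × ℝ → ℂ) (w : ℝ × ℝ) : ‖FT2 h w‖ ≤ ∫ ζ, ‖h ζ‖ := by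
  unfold FT2
  refine (norm_integral_le_integral_norm _).trans (le_of_eq ?_)
  congr 1; ext ζ
  rw [norm_mul, norm_phase, mul_one]

lemma FT2_gauss_bound (h : ℝ × ℝ → ℂ) (hh : Integrable h) (b : ℝ) (hb : 0 < b) :
    ∫⁻ w : ℝ × ℝ, ‖FT2 h w‖ₑ ^ 2 * ENNReal.ofReal (gw b w) ≤
      2 * ENNReal.ofReal ((2 * Real.pi) ^ 2) * ∫⁻ ζ, ‖h ζ‖ₑ ^ 2 := by
  have hgw0 : ∀ c w, 0 ≤ gw c w := fun c w => by unfold gw; positivity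
  have hgwc : ∀ c, Continuous (gw c) := fun c => by unfold gw; fun_prop
  have hInt : Integrable (fun w : ℝ × ℝ => ‖FT2 h w‖ ^ 2 * gw b w) := by
    refine (gw_integrable b hb).bdd_mul (c := (∫ ζ, ‖h ζ‖) ^ 2)
      (((FT2_continuous h hh).norm.pow 2).aestronglyMeasurable)
      (Filter.Eventually.of_forall fun w => ?_)
    rw [norm_pow, norm_norm]
    exact pow_le_pow_left₀ (norm_nonneg _) (FT2_bound h w) 2
  have e1 : ∫⁻ w : ℝ × ℝ, ‖FT2 h w‖ₑ ^ 2 * ENNReal.ofReal (gw b w) =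
      ENNReal.ofReal (∫ w : ℝ × ℝ, ‖FT2 h w‖ ^ 2 * gw b w) := by
    rw [ofReal_integral_eq_lintegral_ofReal hInt
      (Filter.Eventually.of_forall fun w => mul_nonneg (by positivity) (hgw0 b w))]
    congr 1; ext w
    rw [ENNReal.ofReal_mul (by positivity), ENNReal.ofReal_pow (norm_nonneg _), ofReal_norm]
  have e2 : ((∫ w : ℝ × ℝ, ‖FT2 h w‖ ^ 2 * gw b w : ℝ) : ℂ) =
     ∫ w : ℝ × ℝ, (FT2 h w * (starRingEnd ℂ) (FT2 h w)) * (gw b w : ℂ) := by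
    rw [← integral_complex_ofReal]
    congr 1; ext w
    rw [Complex.mul_conj, Complex.normSq_eq_norm_sq]; push_cast; rfl
  have e3 : ENNReal.ofReal (∫ w : ℝ × ℝ, ‖FT2 h w‖ ^ 2 * gw b w) ≤
     ‖((∫ w : ℝ × ℝ, ‖FT2 h w‖ ^ 2 * gw b w : ℝ) : ℂ)‖ₑ := by
    rw [← ofReal_norm, Complex.norm_real]
    exact ENNReal.ofReal_le_ofReal (le_abs_self _)
  rw [e1]
  refine e3.trans ?_
  rw [e2, FT2_aux h hh b hb]
  refine (enorm_integral_le_lintegral_enorm _).trans ?_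
  set K : ℝ × ℝ → ℝ≥0∞ := fun t => ENNReal.ofReal (Real.pi / b * gw (1 / (4 * b)) t) with hK
  have hKm : Measurable K := by
    have := (hgwc (1 / (4 * b))).measurable
    fun_prop
  have hhm := hh.aestronglyMeasurable.enorm
  have hKsub : AEMeasurable (fun z : (ℝ × ℝ) × (ℝ × ℝ) => K (z.1 - z.2)) (volume.prod volume) := by
    fun_prop
  have hKs : ∀ t, K (-t) = K t := by intro t; simp [hK, gw]
  have hKtot : ∫⁻ t, K t = ENNReal.ofReal ((2 * Real.pi) ^ 2) := gw_total b hb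
  calc _ = ∫⁻ z : (ℝ × ℝ) × (ℝ × ℝ), (‖h z.1‖ₑ * ‖h z.2‖ₑ) * K (z.1 - z.2) := by
        congr 1; ext z
        rw [enorm_mul, enorm_mul, hK]
        congr 1
        · congr 1
          rw [← ofReal_norm, RCLike.norm_conj, ofReal_norm]
        · rw [← ofReal_norm, Complex.norm_real, Real.norm_of_nonneg]
          exact mul_nonneg (by positivity) (hgw0 _ _)
    _ ≤ ∫⁻ z : (ℝ × ℝ) × (ℝ × ℝ), (‖h z.1‖ₑ ^ 2 * K (z.1 - z.2) + ‖h z.2‖ₑ ^ 2 * K (z.1 - z.2)) := by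
        refine lintegral_mono fun z => ?_
        rw [← add_mul]
        gcongr
        exact enn_mul_le_sq _ _
    _ = (∫⁻ z : (ℝ × ℝ) × (ℝ × ℝ), ‖h z.1‖ₑ ^ 2 * K (z.1 - z.2)) +
        ∫⁻ z : (ℝ × ℝ) × (ℝ × ℝ), ‖h z.2‖ₑ ^ 2 * K (z.1 - z.2) := by
        refine lintegral_add_left' ?_ _
        refine AEMeasurable.mul ?_ hKsub
        exact (hhm.comp_quasiMeasurePreserving Measure.quasiMeasurePreserving_fst).pow_const 2
    _ = (∫⁻ ζ, ‖h ζ‖ₑ ^ 2) * ENNReal.ofReal ((2 * Real.pi) ^ 2) +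
        (∫⁻ ζ, ‖h ζ‖ₑ ^ 2) * ENNReal.ofReal ((2 * Real.pi) ^ 2) := by
        congr 1
        · rw [show (volume : Measure ((ℝ × ℝ) × (ℝ × ℝ))) = (volume : Measure (ℝ × ℝ)).prod volume from rfl]
          rw [lintegral_prod]
          · simp only
            rw [← lintegral_mul_const'' _ (hhm.pow_const 2)]
            congr 1; ext x
            rw [lintegral_const_mul _ (by fun_prop), ← hKtot, lintegral_sub_left_eq_self K x]
          · refine AEMeasurable.mul ?_ hKsub
            exact (hhm.comp_quasiMeasurePreserving Measure.quasiMeasurePreserving_fst).pow_const 2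
        · rw [show (volume : Measure ((ℝ × ℝ) × (ℝ × ℝ))) = (volume : Measure (ℝ × ℝ)).prod volume from rfl]
          rw [lintegral_prod_symm]
          · simp only
            rw [← lintegral_mul_const'' _ (hhm.pow_const 2)]
            congr 1; ext x
            rw [lintegral_const_mul _ (by fun_prop), ← hKtot, lintegral_sub_right_eq_self K x]
          · refine AEMeasurable.mul ?_ hKsub
            exact (hhm.comp_quasiMeasurePreserving Measure.quasiMeasurePreserving_snd).pow_const 2
    _ = _ := by ring

lemma FT2_plancherel (h : ℝ × ℝ → ℂ) (hh : Integrable h) :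
    ∫⁻ w : ℝ × ℝ, ‖FT2 h w‖ₑ ^ 2 ≤
      2 * ENNReal.ofReal ((2 * Real.pi) ^ 2) * ∫⁻ ζ, ‖h ζ‖ₑ ^ 2 := by
  have hgwc : ∀ c, Continuous (gw c) := fun c => by unfold gw; fun_prop
  have hm := (FT2_continuous h hh).enorm.measurable
  refine (lintegral_mono (g := fun w => Filter.liminf (fun n : ℕ => ‖FT2 h w‖ₑ ^ 2 *
    ENNReal.ofReal (gw (1 / ((n : ℝ) + 1)) w)) Filter.atTop) fun w => ?_).trans ?_
  · apply le_of_eq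
    symm
    apply Filter.Tendsto.liminf_eq
    have h1 : Filter.Tendsto (fun n : ℕ => gw (1 / ((n : ℝ) + 1)) w) Filter.atTop (nhds (gw 0 w)) := by
      have hc : Continuous (fun c => gw c w) := by unfold gw; fun_prop
      exact (hc.tendsto 0).comp tendsto_one_div_add_atTop_nhds_zero_nat
    have h2 := ENNReal.Tendsto.const_mul (a := ‖FT2 h w‖ₑ ^ 2) (ENNReal.tendsto_ofReal h1)
      (Or.inr (by finiteness))
    simpa [gw] using h2
  · refine (lintegral_liminf_le' fun n => ?_).trans ?_
    · have := (hgwc (1 / ((n : ℝ) + 1))).measurable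
      fun_prop
    · refine (Filter.liminf_le_liminf (Filter.Eventually.of_forall fun n : ℕ =>
        FT2_gauss_bound h hh (1 / ((n : ℝ) + 1)) Nat.one_div_pos_of_nat)).trans ?_
      simp


/-- Poisson kernel -/
noncomputable def PK (s y : ℝ) : ℝ := s / (s ^ 2 + y ^ 2)

/-- Poisson kernel, extended nonnegative valued -/
noncomputable def pk (s y : ℝ) : ℝ≥0∞ := ENNReal.ofReal (PK s y)

lemma PK_nonneg {s : ℝ} (hs : 0 < s) (y : ℝ) : 0 ≤ PK s y := by unfold PK; positivity

lemma PK_pos {s : ℝ} (hs : 0 < s) (y : ℝ) : 0 < PK s y := by unfold PK; positivity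

lemma pk_measurable : Measurable (fun q : ℝ × ℝ => pk q.1 q.2) := by
  unfold pk PK; fun_prop

lemma pk_neg (s y : ℝ) : pk s (-y) = pk s y := by simp [pk, PK]

lemma pk_sub_comm (s x y : ℝ) : pk s (x - y) = pk s (y - x) := by
  rw [← pk_neg, neg_sub]

lemma pk_le {s : ℝ} (hs : 0 < s) (y : ℝ) : pk s y ≤ ENNReal.ofReal (1 / s) := by
  unfold pk PK
  apply ENNReal.ofReal_le_ofReal
  rw [div_le_div_iff₀ (by positivity) hs]
  nlinarith [sq_nonneg y]

lemma pk_total {s : ℝ} (hs : 0 < s) : ∫⁻ y, pk s y = ENNReal.ofReal Real.pi := by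
  have h1 : ∀ y, PK s y = s⁻¹ * (1 + (s⁻¹ * y) ^ 2)⁻¹ := by
    intro y; unfold PK; field_simp
  have hi : Integrable (fun y : ℝ => s⁻¹ * (1 + (s⁻¹ * y) ^ 2)⁻¹) :=
    (integrable_inv_one_add_sq.comp_mul_left' (inv_ne_zero hs.ne')).const_mul _
  unfold pk
  simp_rw [h1]
  rw [← ofReal_integral_eq_lintegral_ofReal hi (Filter.Eventually.of_forall fun y => by positivity)]
  congr 1
  rw [integral_const_mul, Measure.integral_comp_mul_left (fun y : ℝ => (1 + y ^ 2)⁻¹),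
    integral_univ_inv_one_add_sq]
  simp only [inv_inv, abs_of_pos hs, smul_eq_mul]
  field_simp

lemma pk_total' {s : ℝ} (hs : 0 < s) (x : ℝ) : ∫⁻ y, pk s (x - y) = ENNReal.ofReal Real.pi := by
  rw [lintegral_sub_left_eq_self (pk s) x, pk_total hs]

lemma PK_mul_le {s t : ℝ} (ht : 0 < t) (hts : t ≤ s) (A B : ℝ) :
    PK s A * PK t B ≤ 2 * PK s (A + B) * (PK s A + PK t B) := by
  have hs : 0 < s := ht.trans_le hts
  have h1 := PK_pos hs A
  have h2 := PK_pos ht B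
  have h3 := PK_pos hs (A + B)
  have key : 1 / PK s (A + B) ≤ 2 * (1 / PK s A + 1 / PK t B) := by
    unfold PK
    simp only [one_div_div]
    have e1 : (t ^ 2 + B ^ 2) / t = t + B ^ 2 / t := by field_simp
    have e2 : (s ^ 2 + A ^ 2) / s = s + A ^ 2 / s := by field_simp
    have e3 : (s ^ 2 + (A + B) ^ 2) / s = s + (A + B) ^ 2 / s := by field_simp
    rw [e1, e2, e3]
    have h4 : B ^ 2 / s ≤ B ^ 2 / t := by gcongr
    have h5 : (A + B) ^ 2 / s ≤ 2 * (A ^ 2 / s) + 2 * (B ^ 2 / s) := by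
      rw [← mul_div_assoc, ← mul_div_assoc, ← add_div]
      gcongr
      nlinarith [sq_nonneg (A - B)]
    linarith
  have e : 2 * (1 / PK s A + 1 / PK t B) = 2 * (PK s A + PK t B) / (PK s A * PK t B) := by
    field_simp
    ring
  rw [e, div_le_div_iff₀ h3 (by positivity)] at key
  linarith

lemma pk_conv_aux {s t : ℝ} (ht : 0 < t) (hts : t ≤ s) (x z : ℝ) :
    ∫⁻ y, pk s (x - y) * pk t (z - y) ≤ 4 * ENNReal.ofReal Real.pi * pk s (x - z) := by
  have hs : 0 < s := ht.trans_le hts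
  have hm : ∀ s w, Measurable (fun y => pk s (w - y)) := fun s w =>
    pk_measurable.comp (measurable_const.prodMk (measurable_const.sub measurable_id))
  calc ∫⁻ y, pk s (x - y) * pk t (z - y)
      ≤ ∫⁻ y, 2 * pk s (x - z) * (pk s (x - y) + pk t (z - y)) := by
        refine lintegral_mono fun y => ?_
        have := PK_mul_le ht hts (x - y) (y - z)
        rw [show x - y + (y - z) = x - z by ring] at this
        rw [pk_sub_comm t z y]
        unfold pk
        rw [← ENNReal.ofReal_mul (PK_nonneg hs _), ← ENNReal.ofReal_add (PK_nonneg hs _) (PK_nonneg ht _),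
          show (2 : ℝ≥0∞) = ENNReal.ofReal 2 by simp, ← ENNReal.ofReal_mul (by norm_num),
          ← ENNReal.ofReal_mul (by have := PK_nonneg hs (x - z); positivity)]
        exact ENNReal.ofReal_le_ofReal this
    _ = 2 * pk s (x - z) * (ENNReal.ofReal Real.pi + ENNReal.ofReal Real.pi) := by
        have hm1 := hm s x
        have hm2 := hm t z
        rw [lintegral_const_mul _ (by fun_prop), lintegral_add_left (hm _ _),
          pk_total' hs, pk_total' ht]
    _ = _ := by ring

lemma pk_conv {s t : ℝ} (hs : 0 < s) (ht : 0 < t) (x z : ℝ) :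
    ∫⁻ y, pk s (x - y) * pk t (z - y) ≤
      4 * ENNReal.ofReal Real.pi * (pk s (x - z) + pk t (z - x)) := by
  rcases le_total t s with h | h
  · refine (pk_conv_aux ht h x z).trans ?_
    gcongr
    exact le_self_add
  · simp_rw [mul_comm (pk s _)]
    refine (pk_conv_aux hs h z x).trans ?_
    gcongr
    exact le_add_self

lemma enn_two_mul_le (a b : ℝ≥0∞) : 2 * (a * b) ≤ a ^ 2 + b ^ 2 := by
  by_cases ha : a = ⊤
  · subst ha; simp
  by_cases hb : b = ⊤
  · subst hb; simp
  lift a to NNReal using ha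
  lift b to NNReal using hb
  norm_cast
  have := two_mul_le_add_sq a b
  rwa [mul_assoc] at this

/-- adjoint linearised maximal operator -/
noncomputable def Tst (e : ℝ → ℝ) (g : ℝ → ℝ≥0∞) (y : ℝ) : ℝ≥0∞ := ∫⁻ x, g x * pk (e x) (x - y)

lemma pk_comp_meas {e : ℝ → ℝ} (he : Measurable e) :
    Measurable (fun q : ℝ × ℝ => pk (e q.1) (q.1 - q.2)) :=
  pk_measurable.comp ((he.comp measurable_fst).prodMk (measurable_fst.sub measurable_snd))

lemma Tst_meas {e : ℝ → ℝ} (he : Measurable e) {g : ℝ → ℝ≥0∞} (hg : Measurable g) :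
    Measurable (Tst e g) := by
  unfold Tst
  exact Measurable.lintegral_prod_left' (f := fun q : ℝ × ℝ => g q.1 * pk (e q.1) (q.1 - q.2))
    ((hg.comp measurable_fst).mul (pk_comp_meas he))

lemma Tst_sq {e : ℝ → ℝ} (he : Measurable e) (hpos : ∀ x, 0 < e x) {g : ℝ → ℝ≥0∞} (hg : Measurable g) :
    ∫⁻ y, Tst e g y ^ 2 ≤ 8 * ENNReal.ofReal Real.pi * ∫⁻ y, g y * Tst e g y := by
  have hk := pk_comp_meas he
  have hk1 : ∀ x, Measurable (fun y => pk (e x) (x - y)) := fun x =>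
    hk.comp (measurable_const.prodMk measurable_id)
  have hk2 : ∀ y, Measurable (fun x => pk (e x) (x - y)) := fun x =>
    hk.comp (measurable_id.prodMk measurable_const)
  have e1 : ∫⁻ y, Tst e g y ^ 2 =
      ∫⁻ x, ∫⁻ z, g x * g z * ∫⁻ y, pk (e x) (x - y) * pk (e z) (z - y) := by
    have hJ : Measurable (fun q : ℝ × (ℝ × ℝ) =>
        (g q.2.1 * pk (e q.2.1) (q.2.1 - q.1)) * (g q.2.2 * pk (e q.2.2) (q.2.2 - q.1))) := by
      refine Measurable.mul (Measurable.mul (by fun_prop) ?_) (Measurable.mul (by fun_prop) ?_)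
      · exact hk.comp (f := fun q : ℝ × (ℝ × ℝ) => (q.2.1, q.1)) (by fun_prop)
      · exact hk.comp (f := fun q : ℝ × (ℝ × ℝ) => (q.2.2, q.1)) (by fun_prop)
    calc ∫⁻ y, Tst e g y ^ 2 = ∫⁻ y, ∫⁻ p : ℝ × ℝ,
          (g p.1 * pk (e p.1) (p.1 - y)) * (g p.2 * pk (e p.2) (p.2 - y)) := by
          congr 1; ext y
          rw [show (volume : Measure (ℝ × ℝ)) = (volume : Measure ℝ).prod volume from rfl]
          rw [lintegral_prod_mul (f := fun x => g x * pk (e x) (x - y))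
            (g := fun x => g x * pk (e x) (x - y)), pow_two, Tst]
          · exact (hg.mul (hk2 y)).aemeasurable
          · exact (hg.mul (hk2 y)).aemeasurable
      _ = ∫⁻ p : ℝ × ℝ, ∫⁻ y,
          (g p.1 * pk (e p.1) (p.1 - y)) * (g p.2 * pk (e p.2) (p.2 - y)) := by
          rw [lintegral_lintegral_swap]
          exact hJ.aemeasurable
      _ = ∫⁻ p : ℝ × ℝ, g p.1 * g p.2 * ∫⁻ y, pk (e p.1) (p.1 - y) * pk (e p.2) (p.2 - y) := by
          congr 1; ext p
          rw [← lintegral_const_mul]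
          · congr 1; ext y; ring
          · exact (hk1 _).mul (hk1 _)
      _ = _ := by
          rw [show (volume : Measure (ℝ × ℝ)) = (volume : Measure ℝ).prod volume from rfl]
          rw [lintegral_prod]
          refine Measurable.aemeasurable (Measurable.mul (by fun_prop) ?_)
          refine Measurable.lintegral_prod_right' (f := fun q : (ℝ × ℝ) × ℝ =>
            pk (e q.1.1) (q.1.1 - q.2) * pk (e q.1.2) (q.1.2 - q.2)) ?_
          have j1 := hk.comp (f := fun q : (ℝ × ℝ) × ℝ => (q.1.1, q.2)) (by fun_prop)
          have j2 := hk.comp (f := fun q : (ℝ × ℝ) × ℝ => (q.1.2, q.2)) (by fun_prop)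
          exact j1.mul j2
  have e3 : ∫⁻ x, ∫⁻ z, g x * g z * pk (e z) (z - x) = ∫⁻ y, g y * Tst e g y := by
    congr 1; ext x
    unfold Tst
    rw [← lintegral_const_mul]
    · congr 1; ext y; ring
    · exact hg.mul (hk2 x)
  have e2 : ∫⁻ x, ∫⁻ z, g x * g z * pk (e x) (x - z) = ∫⁻ y, g y * Tst e g y := by
    rw [← e3, lintegral_lintegral_swap]
    · congr 1; ext x; congr 1; ext y; ring
    · exact (((hg.comp measurable_fst).mul (hg.comp measurable_snd)).mul hk).aemeasurable
  rw [e1]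
  calc _ ≤ ∫⁻ x, ∫⁻ z, 4 * ENNReal.ofReal Real.pi *
        (g x * g z * pk (e x) (x - z) + g x * g z * pk (e z) (z - x)) := by
        refine lintegral_mono fun x => lintegral_mono fun z => ?_
        calc _ ≤ g x * g z * (4 * ENNReal.ofReal Real.pi * (pk (e x) (x - z) + pk (e z) (z - x))) := by
              gcongr
              exact pk_conv (hpos x) (hpos z) x z
          _ = _ := by ring
    _ = 4 * ENNReal.ofReal Real.pi * (∫⁻ x, ((∫⁻ z, g x * g z * pk (e x) (x - z)) +
          ∫⁻ z, g x * g z * pk (e z) (z - x))) := by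
        have hm1 : Measurable (fun q : ℝ × ℝ => g q.1 * g q.2 * pk (e q.1) (q.1 - q.2)) :=
          ((hg.comp measurable_fst).mul (hg.comp measurable_snd)).mul hk
        have hm2 : Measurable (fun q : ℝ × ℝ => g q.1 * g q.2 * pk (e q.2) (q.2 - q.1)) :=
          ((hg.comp measurable_fst).mul (hg.comp measurable_snd)).mul (hk.comp measurable_swap)
        have a1 : Measurable (fun x => ∫⁻ z, g x * g z * pk (e x) (x - z)) := hm1.lintegral_prod_right'
        have a2 : Measurable (fun x => ∫⁻ z, g x * g z * pk (e z) (z - x)) := hm2.lintegral_prod_right'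
        rw [← lintegral_const_mul]
        swap
        · exact a1.add a2
        congr 1; ext x
        have b1 : Measurable (fun z => g x * g z * pk (e x) (x - z)) :=
          hm1.comp (measurable_const.prodMk measurable_id)
        have b2 : Measurable (fun z => g x * g z * pk (e z) (z - x)) :=
          hm2.comp (measurable_const.prodMk measurable_id)
        rw [lintegral_const_mul _ (by fun_prop), lintegral_add_left b1]
    _ = _ := by
        have hm1 : Measurable (fun q : ℝ × ℝ => g q.1 * g q.2 * pk (e q.1) (q.1 - q.2)) :=
          ((hg.comp measurable_fst).mul (hg.comp measurable_snd)).mul hk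
        rw [lintegral_add_left hm1.lintegral_prod_right', e2, e3]
        ring

lemma Tst_bound {e : ℝ → ℝ} (he : Measurable e) (hpos : ∀ x, 0 < e x) {g : ℝ → ℝ≥0∞} (hg : Measurable g)
    (hfin : ∫⁻ y, Tst e g y ^ 2 ≠ ⊤) :
    ∫⁻ y, Tst e g y ^ 2 ≤ (8 * ENNReal.ofReal Real.pi) ^ 2 * ∫⁻ y, g y ^ 2 := by
  have h1 := Tst_sq he hpos hg
  set D := 8 * ENNReal.ofReal Real.pi
  have h2 : 2 * ∫⁻ y, Tst e g y ^ 2 ≤ D ^ 2 * (∫⁻ y, g y ^ 2) + ∫⁻ y, Tst e g y ^ 2 := by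
    calc 2 * ∫⁻ y, Tst e g y ^ 2 ≤ 2 * (D * ∫⁻ y, g y * Tst e g y) := by gcongr
      _ = ∫⁻ y, 2 * ((D * g y) * Tst e g y) := by
        have := Tst_meas he hg
        rw [← mul_assoc, ← lintegral_const_mul _ (by fun_prop)]
        congr 1; ext y; ring
      _ ≤ ∫⁻ y, ((D * g y) ^ 2 + Tst e g y ^ 2) := lintegral_mono fun y => enn_two_mul_le _ _
      _ = _ := by
        rw [lintegral_add_left (by fun_prop)]
        simp_rw [mul_pow]
        rw [lintegral_const_mul _ (by fun_prop)]
  rw [two_mul] at h2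
  exact (ENNReal.add_le_add_iff_right hfin).1 h2

lemma Tst_fin {e : ℝ → ℝ} (he : Measurable e) (hpos : ∀ x, 0 < e x) {g : ℝ → ℝ≥0∞} (hg : Measurable g)
    (n : ℕ) (hgn : ∀ x, g x ≤ n) (hgs : ∀ x, g x ≠ 0 → x ∈ Icc (-n : ℝ) n ∧ 1 / ((n : ℝ) + 1) ≤ e x) :
    ∫⁻ y, Tst e g y ^ 2 ≠ ⊤ := by
  have hg1 : ∫⁻ x, g x ≠ ⊤ := by
    have : ∫⁻ x, g x ≤ ∫⁻ x, (Icc (-n : ℝ) n).indicator (fun _ => (n : ℝ≥0∞)) x := by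
      refine lintegral_mono fun x => ?_
      by_cases h : g x = 0
      · simp [h]
      · rw [indicator_of_mem (hgs x h).1]; exact hgn x
    refine ne_top_of_le_ne_top ?_ this
    rw [lintegral_indicator measurableSet_Icc, setLIntegral_const, Real.volume_Icc]
    finiteness
  have hT1 : ∀ y, Tst e g y ≤ ENNReal.ofReal ((n : ℝ) + 1) * ∫⁻ x, g x := by
    intro y
    unfold Tst
    rw [← lintegral_const_mul _ hg]
    refine lintegral_mono fun x => ?_
    by_cases h : g x = 0
    · simp [h]
    · rw [mul_comm]
      gcongr
      refine (pk_le (hpos x) _).trans (ENNReal.ofReal_le_ofReal ?_)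
      have := (hgs x h).2
      rw [one_div_le (by positivity) (hpos x)] at this
      exact this
  have hT2 : ∫⁻ y, Tst e g y = ENNReal.ofReal Real.pi * ∫⁻ x, g x := by
    unfold Tst
    rw [lintegral_lintegral_swap]
    swap
    · exact (((hg.comp measurable_fst).mul (pk_comp_meas he)).comp measurable_swap).aemeasurable
    rw [← lintegral_const_mul _ hg]
    congr 1; ext x
    have hkx : Measurable (fun y => pk (e x) (x - y)) :=
      (pk_comp_meas he).comp (measurable_const.prodMk measurable_id)
    rw [lintegral_const_mul _ hkx, pk_total' (hpos x), mul_comm]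
  have : ∫⁻ y, Tst e g y ^ 2 ≤ (ENNReal.ofReal ((n : ℝ) + 1) * ∫⁻ x, g x) * ∫⁻ y, Tst e g y := by
    rw [← lintegral_const_mul _ (Tst_meas he hg)]
    refine lintegral_mono fun y => ?_
    rw [pow_two]
    gcongr
    exact hT1 y
  refine ne_top_of_le_ne_top ?_ this
  rw [hT2]
  finiteness

lemma trunc_lemma {α : Type*} [MeasurableSpace α] (m : Measure α) (F : α → ℝ≥0∞) (hF : Measurable F)
    (S : ℕ → Set α) (hS : Monotone S) (hSm : ∀ n, MeasurableSet (S n)) (hSu : ∀ x, ∃ n, x ∈ S n) (B : ℝ≥0∞)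
    (h : ∀ n : ℕ, ∫⁻ x, ((S n).indicator (fun x => min (F x) n) x) ^ 2 ∂m ≤ B) :
    ∫⁻ x, F x ^ 2 ∂m ≤ B := by
  refine (lintegral_mono (g := fun x => Filter.liminf (fun n : ℕ =>
    ((S n).indicator (fun x => min (F x) n) x) ^ 2) Filter.atTop) fun x => ?_).trans ?_
  · apply le_of_eq
    symm
    apply Filter.Tendsto.liminf_eq
    have h1 : Filter.Tendsto (fun n : ℕ => min (F x) n) Filter.atTop (nhds (min (F x) ⊤)) :=
      tendsto_const_nhds.min ENNReal.tendsto_nat_nhds_top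
    rw [min_eq_left le_top] at h1
    obtain ⟨N, hN⟩ := hSu x
    refine (ENNReal.Tendsto.pow h1).congr' ?_
    filter_upwards [Filter.eventually_ge_atTop N] with n hn
    rw [indicator_of_mem (hS hn hN)]
  · refine (lintegral_liminf_le fun n => ?_).trans ?_
    · have := (hF.min (measurable_const (a := (n : ℝ≥0∞)))).indicator (hSm n)
      exact this.pow_const 2
    · refine (Filter.liminf_le_liminf (Filter.Eventually.of_forall h)).trans ?_
      simp

/-- linearised maximal operator -/
noncomputable def AA (s : ℝ) (f : ℝ → ℝ≥0∞) (u : ℝ) : ℝ≥0∞ := ∫⁻ y, f y * pk s (u - y)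

lemma AA_meas {e : ℝ → ℝ} (he : Measurable e) {f : ℝ → ℝ≥0∞} (hf : Measurable f) :
    Measurable (fun u => AA (e u) f u) := by
  unfold AA
  exact Measurable.lintegral_prod_right' (f := fun q : ℝ × ℝ => f q.2 * pk (e q.1) (q.1 - q.2))
    ((hf.comp measurable_snd).mul (pk_comp_meas he))

lemma AA_bound {e : ℝ → ℝ} (he : Measurable e) (hpos : ∀ x, 0 < e x) {f : ℝ → ℝ≥0∞} (hf : Measurable f) :
    ∫⁻ u, AA (e u) f u ^ 2 ≤ (8 * ENNReal.ofReal Real.pi) ^ 2 * ∫⁻ y, f y ^ 2 := by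
  have hm := AA_meas he hf
  set D := 8 * ENNReal.ofReal Real.pi with hD
  have hD0 : D ≠ 0 := by simp [hD, Real.pi_pos]
  have hDt : D ≠ ⊤ := by finiteness
  refine trunc_lemma volume (fun u => AA (e u) f u) hm
    (fun n => {x | x ∈ Icc (-n : ℝ) n ∧ 1 / ((n : ℝ) + 1) ≤ e x}) ?_ ?_ ?_ _ ?_
  · intro n k hnk x hx
    have hnk' : (n : ℝ) ≤ k := by exact_mod_cast hnk
    refine ⟨⟨by linarith [hx.1.1], by linarith [hx.1.2]⟩, le_trans ?_ hx.2⟩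
    exact one_div_le_one_div_of_le (by positivity) (by linarith)
  · intro n
    exact measurableSet_Icc.inter (measurableSet_le measurable_const he)
  · intro x
    obtain ⟨n1, h1⟩ := exists_nat_ge |x|
    obtain ⟨n2, h2⟩ := exists_nat_one_div_lt (hpos x)
    refine ⟨max n1 n2, ?_, ?_⟩
    · have : |x| ≤ ((max n1 n2 : ℕ) : ℝ) := h1.trans (by exact_mod_cast le_max_left _ _)
      exact ⟨(abs_le.1 this).1, (abs_le.1 this).2⟩
    · refine le_trans ?_ h2.le
      refine one_div_le_one_div_of_le (by positivity) ?_
      have : (n2 : ℝ) ≤ ((max n1 n2 : ℕ) : ℝ) := by exact_mod_cast le_max_right _ _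
      linarith
  · intro n
    set S : Set ℝ := {x | x ∈ Icc (-n : ℝ) n ∧ 1 / ((n : ℝ) + 1) ≤ e x} with hSdef
    have hSm : MeasurableSet S := measurableSet_Icc.inter (measurableSet_le measurable_const he)
    set g : ℝ → ℝ≥0∞ := S.indicator (fun x => min (AA (e x) f x) n) with hg
    have hgm : Measurable g := (hm.min measurable_const).indicator hSm
    have hgn : ∀ x, g x ≤ n := fun x => by
      rw [hg]; refine indicator_apply_le' (fun _ => min_le_right _ _) (fun _ => bot_le)
    have hgs : ∀ x, g x ≠ 0 → x ∈ Icc (-n : ℝ) n ∧ 1 / ((n : ℝ) + 1) ≤ e x := fun x hx => by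
      have : x ∈ S := mem_of_indicator_ne_zero hx
      exact this
    have hgA : ∀ x, g x ≤ AA (e x) f x := fun x => by
      rw [hg]; refine indicator_apply_le' (fun _ => min_le_left _ _) (fun _ => bot_le)
    have hfin := Tst_fin he hpos hgm n hgn hgs
    have hb := Tst_bound he hpos hgm hfin
    have hgfin : ∫⁻ x, g x ^ 2 ≠ ⊤ := by
      have : ∫⁻ x, g x ^ 2 ≤ ∫⁻ x, (Icc (-n : ℝ) n).indicator (fun _ => (n : ℝ≥0∞) ^ 2) x := by
        refine lintegral_mono fun x => ?_
        by_cases h : g x = 0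
        · simp [h]
        · rw [indicator_of_mem (hgs x h).1]; exact pow_le_pow_left₀ bot_le (hgn x) 2
      refine ne_top_of_le_ne_top ?_ this
      rw [lintegral_indicator measurableSet_Icc, setLIntegral_const, Real.volume_Icc]
      finiteness
    have e1 : ∫⁻ x, g x ^ 2 ≤ ∫⁻ y, f y * Tst e g y := by
      calc ∫⁻ x, g x ^ 2 ≤ ∫⁻ x, g x * AA (e x) f x := by
            refine lintegral_mono fun x => ?_
            rw [pow_two]
            gcongr
            exact hgA x
        _ = ∫⁻ x, ∫⁻ y, g x * (f y * pk (e x) (x - y)) := by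
            congr 1; ext x
            unfold AA
            rw [lintegral_const_mul]
            exact hf.mul ((pk_comp_meas he).comp (measurable_const.prodMk measurable_id))
        _ = ∫⁻ y, ∫⁻ x, g x * (f y * pk (e x) (x - y)) := by
            rw [lintegral_lintegral_swap]
            exact ((hgm.comp measurable_fst).mul ((hf.comp measurable_snd).mul (pk_comp_meas he))).aemeasurable
        _ = _ := by
            congr 1; ext y
            unfold Tst
            rw [← lintegral_const_mul]
            · congr 1; ext x; ring
            · exact hgm.mul ((pk_comp_meas he).comp (measurable_id.prodMk measurable_const))
    have h2 : 2 * ∫⁻ x, g x ^ 2 ≤ D ^ 2 * (∫⁻ y, f y ^ 2) + ∫⁻ x, g x ^ 2 := by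
      calc 2 * ∫⁻ x, g x ^ 2 ≤ 2 * ∫⁻ y, f y * Tst e g y := by gcongr
        _ = ∫⁻ y, 2 * ((D * f y) * (D⁻¹ * Tst e g y)) := by
          have := Tst_meas he hgm
          rw [← lintegral_const_mul _ (by fun_prop)]
          congr 1; ext y
          rw [mul_mul_mul_comm, ENNReal.mul_inv_cancel hD0 hDt, one_mul]
        _ ≤ ∫⁻ y, ((D * f y) ^ 2 + (D⁻¹ * Tst e g y) ^ 2) := lintegral_mono fun y => enn_two_mul_le _ _
        _ = D ^ 2 * (∫⁻ y, f y ^ 2) + D⁻¹ ^ 2 * ∫⁻ y, Tst e g y ^ 2 := by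
          rw [lintegral_add_left (by fun_prop)]
          simp_rw [mul_pow]
          rw [lintegral_const_mul _ (by fun_prop), lintegral_const_mul _ ((Tst_meas he hgm).pow_const 2)]
        _ ≤ D ^ 2 * (∫⁻ y, f y ^ 2) + D⁻¹ ^ 2 * (D ^ 2 * ∫⁻ x, g x ^ 2) := by gcongr
        _ = _ := by
          rw [← mul_assoc, ← mul_pow (D⁻¹), ENNReal.inv_mul_cancel hD0 hDt, one_pow, one_mul]
    rw [two_mul] at h2
    exact (ENNReal.add_le_add_iff_right hgfin).1 h2

lemma AA_const_meas (s : ℝ) {f : ℝ → ℝ≥0∞} (hf : Measurable f) : Measurable (AA s f) :=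
  AA_meas (measurable_const (a := s)) hf

/-- scales -/
noncomputable def sc (n : ℕ) : ℝ := 1 / ((n : ℝ) + 1)

lemma sc_pos (n : ℕ) : 0 < sc n := Nat.one_div_pos_of_nat

lemma select (f : ℝ → ℝ≥0∞) (hf : Measurable f) (n : ℕ) :
    ∃ e : ℝ → ℝ, Measurable e ∧ (∀ x, 0 < e x) ∧ ∀ k ≤ n, ∀ x, AA (sc k) f x ≤ AA (e x) f x := by
  induction n with
  | zero =>
    refine ⟨fun _ => sc 0, measurable_const, fun _ => sc_pos 0, fun k hk x => ?_⟩
    rw [Nat.le_zero.1 hk]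
  | succ n ih =>
    obtain ⟨e, he, hpos, h⟩ := ih
    classical
    refine ⟨fun x => if AA (sc (n + 1)) f x ≤ AA (e x) f x then e x else sc (n + 1), ?_, ?_, ?_⟩
    · exact Measurable.ite (measurableSet_le (AA_const_meas _ hf) (AA_meas he hf)) he measurable_const
    · intro x
      dsimp only
      split_ifs
      · exact hpos x
      · exact sc_pos _
    · intro k hk x
      dsimp only
      split_ifs with hc
      · rcases Nat.le_succ_iff.1 hk with h1 | h1
        · exact h k h1 x
        · rw [h1]; exact hc
      · rcases Nat.le_succ_iff.1 hk with h1 | h1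
        · exact (h k h1 x).trans (not_le.1 hc).le
        · rw [h1]

/-- maximal operator in one dimension -/
noncomputable def MM (f : ℝ → ℝ≥0∞) (u : ℝ) : ℝ≥0∞ := ⨆ n : ℕ, AA (sc n) f u

lemma MM_bound {f : ℝ → ℝ≥0∞} (hf : Measurable f) :
    ∫⁻ u, MM f u ^ 2 ≤ (8 * ENNReal.ofReal Real.pi) ^ 2 * ∫⁻ y, f y ^ 2 := by
  refine (lintegral_mono (g := fun u => Filter.liminf (fun n : ℕ =>
    (⨆ k ∈ Finset.range (n + 1), AA (sc k) f u) ^ 2) Filter.atTop) fun u => ?_).trans ?_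
  · apply le_of_eq
    symm
    apply Filter.Tendsto.liminf_eq
    refine ENNReal.Tendsto.pow ?_
    have hmono : Monotone (fun n : ℕ => ⨆ k ∈ Finset.range (n + 1), AA (sc k) f u) := by
      intro n m hnm
      refine biSup_mono fun k hk => ?_
      simp only [Finset.mem_range] at *
      omega
    have h1 := tendsto_atTop_iSup hmono
    have h2 : (⨆ n : ℕ, ⨆ k ∈ Finset.range (n + 1), AA (sc k) f u) = MM f u := by
      apply le_antisymm
      · exact iSup_le fun n => iSup₂_le fun k _ => le_iSup (fun n => AA (sc n) f u) k
      · refine iSup_le fun k => le_iSup_of_le k ?_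
        exact le_iSup₂_of_le k (Finset.self_mem_range_succ k) le_rfl
    rwa [h2] at h1
  · refine (lintegral_liminf_le fun n => ?_).trans ?_
    · refine Measurable.pow_const ?_ 2
      exact Measurable.biSup _ (Finset.countable_toSet _) fun k _ => AA_const_meas _ hf
    · refine (Filter.liminf_le_liminf (v := fun _ => (8 * ENNReal.ofReal Real.pi) ^ 2 * ∫⁻ y, f y ^ 2)
        (Filter.Eventually.of_forall fun n => ?_)).trans ?_
      · obtain ⟨e, he, hpos, h⟩ := select f hf n
        refine le_trans (lintegral_mono fun u => ?_) (AA_bound he hpos hf)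
        refine pow_le_pow_left₀ bot_le (iSup₂_le fun k hk => h k ?_ u) 2
        simp only [Finset.mem_range] at hk
        omega
      · simp

/-- maximal operator in the first variable -/
noncomputable def M1 (f : ℝ × ℝ → ℝ≥0∞) (w : ℝ × ℝ) : ℝ≥0∞ := MM (fun u => f (u, w.2)) w.1

/-- maximal operator in the second variable -/
noncomputable def M2 (f : ℝ × ℝ → ℝ≥0∞) (w : ℝ × ℝ) : ℝ≥0∞ := MM (fun v => f (w.1, v)) w.2

lemma pk_sub_meas (s : ℝ) : Measurable (fun q : ℝ × ℝ => pk s (q.1 - q.2)) :=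
  pk_comp_meas (measurable_const (a := s))

lemma M1_meas {f : ℝ × ℝ → ℝ≥0∞} (hf : Measurable f) : Measurable (M1 f) := by
  unfold M1 MM AA
  refine Measurable.iSup fun n => ?_
  refine Measurable.lintegral_prod_right' (f := fun q : (ℝ × ℝ) × ℝ =>
    f (q.2, q.1.2) * pk (sc n) (q.1.1 - q.2)) ?_
  refine Measurable.mul (by fun_prop) ?_
  exact (pk_sub_meas (sc n)).comp (f := fun q : (ℝ × ℝ) × ℝ => (q.1.1, q.2)) (by fun_prop)

lemma M2_meas {f : ℝ × ℝ → ℝ≥0∞} (hf : Measurable f) : Measurable (M2 f) := by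
  unfold M2 MM AA
  refine Measurable.iSup fun n => ?_
  refine Measurable.lintegral_prod_right' (f := fun q : (ℝ × ℝ) × ℝ =>
    f (q.1.1, q.2) * pk (sc n) (q.1.2 - q.2)) ?_
  refine Measurable.mul (by fun_prop) ?_
  exact (pk_sub_meas (sc n)).comp (f := fun q : (ℝ × ℝ) × ℝ => (q.1.2, q.2)) (by fun_prop)

lemma M1_bound {f : ℝ × ℝ → ℝ≥0∞} (hf : Measurable f) :
    ∫⁻ w, M1 f w ^ 2 ≤ (8 * ENNReal.ofReal Real.pi) ^ 2 * ∫⁻ w, f w ^ 2 := by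
  rw [show (volume : Measure (ℝ × ℝ)) = (volume : Measure ℝ).prod volume from rfl]
  rw [lintegral_prod_symm' _ ((M1_meas hf).pow_const 2), lintegral_prod_symm' _ (hf.pow_const 2)]
  rw [← lintegral_const_mul _ (Measurable.lintegral_prod_left' (hf.pow_const 2))]
  refine lintegral_mono fun v => ?_
  exact MM_bound (f := fun u => f (u, v)) (by fun_prop)

lemma M2_bound {f : ℝ × ℝ → ℝ≥0∞} (hf : Measurable f) :
    ∫⁻ w, M2 f w ^ 2 ≤ (8 * ENNReal.ofReal Real.pi) ^ 2 * ∫⁻ w, f w ^ 2 := by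
  rw [show (volume : Measure (ℝ × ℝ)) = (volume : Measure ℝ).prod volume from rfl]
  rw [lintegral_prod _ ((M2_meas hf).pow_const 2).aemeasurable, lintegral_prod _ (hf.pow_const 2).aemeasurable]
  rw [← lintegral_const_mul _ (Measurable.lintegral_prod_right' (hf.pow_const 2))]
  refine lintegral_mono fun u => ?_
  exact MM_bound (f := fun v => f (u, v)) (by fun_prop)

/-- domination of Schwartz averages by the maximal operator -/
lemma avg_le_MM (f : ℝ → ℝ≥0∞) (hf : Measurable f) (c : ℝ → ℝ) (C : ℝ) (hC : 0 ≤ C)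
    (hc : ∀ a, |c a| ≤ C / (1 + a ^ 2)) (ε : ℝ) (hε : ε ∈ Ioo (0 : ℝ) 1) (u : ℝ) :
    ∫⁻ a, ENNReal.ofReal |c a| * f (u - ε * a) ≤ ENNReal.ofReal (2 * C) * MM f u := by
  have hε0 := hε.1
  obtain ⟨n, hn1, hn2⟩ : ∃ n : ℕ, ε ≤ sc n ∧ sc n ≤ 2 * ε := by
    have h1 : 1 ≤ 1 / ε := by rw [le_div_iff₀ hε0]; linarith [hε.2]
    have h2 : 1 ≤ ⌊1 / ε⌋₊ := Nat.le_floor (by simpa using h1)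
    obtain ⟨n, hn⟩ := Nat.exists_eq_add_of_le' h2
    have h3 : (⌊1 / ε⌋₊ : ℝ) ≤ 1 / ε := Nat.floor_le (by positivity)
    have h4 : 1 / ε < ⌊1 / ε⌋₊ + 1 := Nat.lt_floor_add_one _
    rw [hn] at h3 h4
    push_cast at h3 h4
    have h0 : (0 : ℝ) ≤ n := Nat.cast_nonneg n
    refine ⟨n, ?_, ?_⟩
    · unfold sc
      rw [le_div_iff₀ (by positivity)]
      rw [le_div_iff₀ hε0] at h3
      linarith
    · unfold sc
      rw [div_le_iff₀ (by positivity)]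
      rw [div_lt_iff₀ hε0] at h4
      nlinarith
  have h1 : ∀ a, ENNReal.ofReal |c a| ≤ ENNReal.ofReal (2 * C) * (ENNReal.ofReal ε * pk (sc n) (ε * a)) := by
    intro a
    unfold pk
    rw [← ENNReal.ofReal_mul hε0.le, ← ENNReal.ofReal_mul (by positivity)]
    apply ENNReal.ofReal_le_ofReal
    refine (hc a).trans ?_
    have hsn := sc_pos n
    unfold PK
    have : 1 / (1 + a ^ 2) ≤ 2 * (ε * (sc n / (sc n ^ 2 + (ε * a) ^ 2))) := by
      rw [← mul_div_assoc, ← mul_div_assoc, div_le_div_iff₀ (by positivity) (by positivity)]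
      have h3 : sc n ^ 2 ≤ 2 * ε * sc n := by nlinarith
      have h4 : ε ^ 2 * a ^ 2 ≤ 2 * (ε * sc n) * a ^ 2 := by
        gcongr
        nlinarith
      nlinarith
    calc C / (1 + a ^ 2) = C * (1 / (1 + a ^ 2)) := by ring
      _ ≤ C * (2 * (ε * (sc n / (sc n ^ 2 + (ε * a) ^ 2)))) := by gcongr
      _ = _ := by ring
  calc ∫⁻ a, ENNReal.ofReal |c a| * f (u - ε * a)
      ≤ ∫⁻ a, ENNReal.ofReal (2 * C) * (ENNReal.ofReal ε * (f (u - ε * a) * pk (sc n) (ε * a))) := by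
        refine lintegral_mono fun a => ?_
        calc _ ≤ ENNReal.ofReal (2 * C) * (ENNReal.ofReal ε * pk (sc n) (ε * a)) * f (u - ε * a) := by
              gcongr
              exact h1 a
          _ = _ := by ring
    _ = ENNReal.ofReal (2 * C) * AA (sc n) f u := by
        have hp : Measurable (fun y => pk (sc n) y) := pk_measurable.comp (measurable_const.prodMk measurable_id)
        have hG : Measurable (fun y => f (u - y) * pk (sc n) y) := by fun_prop
        rw [lintegral_const_mul _ (by fun_prop), lintegral_const_mul _ (by fun_prop)]
        congr 1
        have h5 := lintegral_map (μ := volume) hG (measurable_const_mul ε)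
        rw [Real.map_volume_mul_left hε0.ne', lintegral_smul_measure] at h5
        rw [← h5, smul_eq_mul, ← mul_assoc, ← ENNReal.ofReal_mul hε0.le, abs_of_pos (inv_pos.2 hε0),
          mul_inv_cancel₀ hε0.ne', ENNReal.ofReal_one, one_mul]
        unfold AA
        rw [← lintegral_sub_left_eq_self _ u]
        congr 1; ext y
        rw [_root_.sub_sub_cancel]
    _ ≤ _ := by
        gcongr
        exact le_iSup (fun n => AA (sc n) f u) n


lemma lint_rpow {a : ℝ} (ha : -1 < a) {L : ℝ} (hL : 0 ≤ L) :
    ∫⁻ t in Ioc 0 L, ENNReal.ofReal (t ^ a) = ENNReal.ofReal (L ^ (a + 1) / (a + 1)) := by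
  have h1 := intervalIntegral.intervalIntegrable_rpow' (a := 0) (b := L) ha
  rw [intervalIntegrable_iff_integrableOn_Ioc_of_le hL] at h1
  rw [← ofReal_integral_eq_lintegral_ofReal h1]
  · rw [← intervalIntegral.integral_of_le hL, integral_rpow (Or.inl ha), Real.zero_rpow (by linarith), sub_zero]
  · refine (ae_restrict_iff' measurableSet_Ioc).2 (Filter.Eventually.of_forall fun t ht => ?_)
    exact Real.rpow_nonneg ht.1.le _

section interp
variable {X Z : Type*} [MeasurableSpace X] [MeasurableSpace Z]

lemma interp_weak (m : Measure X) [SFinite m] (ν : Measure Z)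
    (Φ : X → Z → ℂ) (hΦ : Measurable (Function.uncurry Φ)) (B B2 : ℝ) (hB : 0 < B)
    (hΦB : ∀ᵐ x ∂m, ∀ z, ‖Φ x z‖ ≤ B)
    (hL2 : ∀ G : X → ℂ, Measurable G → Integrable G m →
      ∫⁻ z, ‖∫ x, G x * Φ x z ∂m‖ₑ ^ 2 ∂ν ≤ ENNReal.ofReal B2 * ∫⁻ x, ‖G x‖ₑ ^ 2 ∂m)
    (s r : ℝ) (hs : 2 < s) (hr : r = s / (s - 1)) (G : X → ℂ) (hG : Measurable G) (hGi : Integrable G m)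
    (N : ℝ) (hN : 0 < N) (hGN : ∫⁻ x, ‖G x‖ₑ ^ r ∂m = ENNReal.ofReal N) (t : ℝ) (ht : 0 < t) :
    ν {z | t < ‖∫ x, G x * Φ x z ∂m‖} ≤ ENNReal.ofReal (4 * t ^ (-2 : ℝ)) * (ENNReal.ofReal B2 *
      ∫⁻ x, {x | ‖G x‖ ≤ (2 * B * N / t) ^ (s - 1)}.indicator (fun x => ‖G x‖ₑ ^ 2) x ∂m) := by
  set τ : ℝ := (2 * B * N / t) ^ (s - 1) with hτ
  have hτ0 : 0 < τ := by positivity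
  set S : Set X := {x | ‖G x‖ ≤ τ} with hS
  have hSm : MeasurableSet S := measurableSet_le hG.norm measurable_const
  have hr1 : 1 < r := by rw [hr, lt_div_iff₀ (by linarith)]; linarith
  have hΦx : ∀ z, Measurable (fun x => Φ x z) := fun z => hΦ.comp (measurable_id.prodMk measurable_const)
  have hInt : ∀ G' : X → ℂ, Integrable G' m → ∀ z, Integrable (fun x => G' x * Φ x z) m := by
    intro G' hG' z
    refine hG'.mul_bdd (c := B) (hΦx z).aestronglyMeasurable ?_
    filter_upwards [hΦB] with x hx using hx z
  -- high part
  have hhigh : ∀ z, ‖∫ x, Sᶜ.indicator G x * Φ x z ∂m‖ ≤ t / 2 := by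
    intro z
    have h1 : ‖∫ x, Sᶜ.indicator G x * Φ x z ∂m‖ₑ ≤ ENNReal.ofReal (t / 2) := by
      refine (enorm_integral_le_lintegral_enorm _).trans ?_
      calc ∫⁻ x, ‖Sᶜ.indicator G x * Φ x z‖ₑ ∂m
          ≤ ∫⁻ x, ENNReal.ofReal (B * τ ^ (1 - r)) * ‖G x‖ₑ ^ r ∂m := by
            refine lintegral_mono_ae ?_
            filter_upwards [hΦB] with x hx
            by_cases hxS : x ∈ S
            · simp [hxS]
            · rw [indicator_of_mem (by exact hxS), enorm_mul, ENNReal.ofReal_mul hB.le]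
              have hxt : τ < ‖G x‖ := not_le.1 hxS
              have h2 : ‖Φ x z‖ₑ ≤ ENNReal.ofReal B := by
                rw [← ofReal_norm]; exact ENNReal.ofReal_le_ofReal (hx z)
              have h3 : ‖G x‖ₑ ≤ ENNReal.ofReal (τ ^ (1 - r)) * ‖G x‖ₑ ^ r := by
                rw [← ofReal_norm, ENNReal.ofReal_rpow_of_pos (hτ0.trans hxt), ← ENNReal.ofReal_mul (by positivity)]
                apply ENNReal.ofReal_le_ofReal
                have h4 : ‖G x‖ ^ (1 - r) ≤ τ ^ (1 - r) :=
                  Real.rpow_le_rpow_of_nonpos hτ0 hxt.le (by linarith)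
                calc ‖G x‖ = ‖G x‖ ^ (1 - r) * ‖G x‖ ^ r := by
                      rw [← Real.rpow_add (hτ0.trans hxt)]; simp
                  _ ≤ _ := by gcongr
              calc ‖G x‖ₑ * ‖Φ x z‖ₑ ≤ (ENNReal.ofReal (τ ^ (1 - r)) * ‖G x‖ₑ ^ r) * ENNReal.ofReal B := by
                    gcongr
                _ = _ := by ring
        _ = ENNReal.ofReal (B * τ ^ (1 - r)) * ENNReal.ofReal N := by
            rw [lintegral_const_mul _ (by fun_prop), hGN]
        _ ≤ ENNReal.ofReal (t / 2) := by
            rw [← ENNReal.ofReal_mul (by positivity)]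
            apply ENNReal.ofReal_le_ofReal
            apply le_of_eq
            have : τ ^ (1 - r) = t / (2 * B * N) := by
              rw [hτ, ← Real.rpow_mul (by positivity),
                show (s - 1) * (1 - r) = -1 by
                  have : s - 1 ≠ 0 := by linarith
                  rw [hr]; field_simp; ring, Real.rpow_neg_one, inv_div]
            rw [this]; field_simp
    rw [← ofReal_norm] at h1
    exact (ENNReal.ofReal_le_ofReal_iff (by positivity)).1 h1
  have hsplit : ∀ z, ∫ x, G x * Φ x z ∂m = (∫ x, S.indicator G x * Φ x z ∂m) + ∫ x, Sᶜ.indicator G x * Φ x z ∂m := by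
    intro z
    rw [← integral_add (hInt _ (hGi.indicator hSm) z) (hInt _ (hGi.indicator hSm.compl) z)]
    congr 1; ext x
    rw [← add_mul]
    congr 1
    exact (congrFun (indicator_self_add_compl S G) x).symm
  have hlow := hL2 (S.indicator G) (hG.indicator hSm) (hGi.indicator hSm)
  have hsub : {z | t < ‖∫ x, G x * Φ x z ∂m‖} ⊆
      {z | ENNReal.ofReal ((t / 2) ^ 2) ≤ ‖∫ x, S.indicator G x * Φ x z ∂m‖ₑ ^ 2} := by
    intro z hz
    simp only [mem_setOf_eq] at hz ⊢
    have h1 : t / 2 ≤ ‖∫ x, S.indicator G x * Φ x z ∂m‖ := by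
      have := norm_add_le (∫ x, S.indicator G x * Φ x z ∂m) (∫ x, Sᶜ.indicator G x * Φ x z ∂m)
      rw [← hsplit] at this
      linarith [hhigh z]
    rw [← ofReal_norm, ← ENNReal.ofReal_pow (norm_nonneg _)]
    exact ENNReal.ofReal_le_ofReal (pow_le_pow_left₀ (by positivity) h1 2)
  refine (measure_mono hsub).trans ?_
  have hEm : Measurable (fun z => ∫ x, S.indicator G x * Φ x z ∂m) := by
    have : StronglyMeasurable (fun q : X × Z => S.indicator G q.1 * Φ q.1 q.2) :=
      (((hG.indicator hSm).comp measurable_fst).mul hΦ).stronglyMeasurable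
    exact this.integral_prod_left'.measurable
  have hmk := mul_meas_ge_le_lintegral₀ (μ := ν)
    (f := fun z => ‖∫ x, S.indicator G x * Φ x z ∂m‖ₑ ^ 2) (hEm.enorm.pow_const 2).aemeasurable (ENNReal.ofReal ((t / 2) ^ 2))
  have hinv : ENNReal.ofReal (4 * t ^ (-2 : ℝ)) * ENNReal.ofReal ((t / 2) ^ 2) = 1 := by
    rw [← ENNReal.ofReal_mul (by positivity), Real.rpow_neg ht.le,
      show (2 : ℝ) = ((2 : ℕ) : ℝ) by norm_num, Real.rpow_natCast]
    rw [show 4 * (t ^ 2)⁻¹ * (t / ((2 : ℕ) : ℝ)) ^ 2 = 1 by push_cast; field_simp; norm_num, ENNReal.ofReal_one]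
  calc _ = ENNReal.ofReal (4 * t ^ (-2 : ℝ)) * (ENNReal.ofReal ((t / 2) ^ 2) *
        ν {z | ENNReal.ofReal ((t / 2) ^ 2) ≤ ‖∫ x, S.indicator G x * Φ x z ∂m‖ₑ ^ 2}) := by
        rw [← mul_assoc, hinv, one_mul]
    _ ≤ ENNReal.ofReal (4 * t ^ (-2 : ℝ)) * (ENNReal.ofReal B2 * ∫⁻ x, ‖S.indicator G x‖ₑ ^ 2 ∂m) := by
        exact mul_le_mul' le_rfl (hmk.trans hlow)

    _ = _ := by
        congr 3; ext x
        by_cases hx : x ∈ S <;> simp [hx]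

lemma interp (m : Measure X) [SFinite m] (ν : Measure Z)
    (Φ : X → Z → ℂ) (hΦ : Measurable (Function.uncurry Φ)) (B B2 : ℝ) (hB : 0 < B) (hB2 : 0 < B2)
    (hΦB : ∀ᵐ x ∂m, ∀ z, ‖Φ x z‖ ≤ B)
    (hL2 : ∀ G : X → ℂ, Measurable G → Integrable G m →
      ∫⁻ z, ‖∫ x, G x * Φ x z ∂m‖ₑ ^ 2 ∂ν ≤ ENNReal.ofReal B2 * ∫⁻ x, ‖G x‖ₑ ^ 2 ∂m)
    (s r : ℝ) (hs : 2 < s) (hr : r = s / (s - 1)) (G : X → ℂ) (hG : Measurable G) (hGi : Integrable G m) :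
    ∫⁻ z, ‖∫ x, G x * Φ x z ∂m‖ₑ ^ s ∂ν ≤
      ENNReal.ofReal (s * (4 * B2 * (2 * B) ^ (s - 2) / (s - 2))) * (∫⁻ x, ‖G x‖ₑ ^ r ∂m) ^ (s - 1) := by
  have hr1 : 1 < r := by rw [hr, lt_div_iff₀ (by linarith)]; linarith
  have hC : 0 < s * (4 * B2 * (2 * B) ^ (s - 2) / (s - 2)) := by
    have : 0 < s - 2 := by linarith
    positivity
  by_cases htop : ∫⁻ x, ‖G x‖ₑ ^ r ∂m = ⊤
  · rw [htop, ENNReal.top_rpow_of_pos (by linarith), ENNReal.mul_top (by simpa using hC)]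
    exact le_top
  by_cases hzero : ∫⁻ x, ‖G x‖ₑ ^ r ∂m = 0
  · have h0 : G =ᵐ[m] 0 := by
      rw [lintegral_eq_zero_iff (by fun_prop)] at hzero
      filter_upwards [hzero] with x hx
      have : ‖G x‖ₑ = 0 := by
        simpa [ENNReal.rpow_eq_zero_iff, show 0 < r by linarith, show ¬ r < 0 by linarith] using hx
      simpa using this
    have h1 : ∀ z, ∫ x, G x * Φ x z ∂m = 0 := by
      intro z
      rw [integral_eq_zero_of_ae]
      filter_upwards [h0] with x hx
      simp [hx]
    simp [h1, show 0 < s by linarith]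
  set N := (∫⁻ x, ‖G x‖ₑ ^ r ∂m).toReal with hNdef
  have hGN : ∫⁻ x, ‖G x‖ₑ ^ r ∂m = ENNReal.ofReal N := (ENNReal.ofReal_toReal htop).symm
  have hN : 0 < N := ENNReal.toReal_pos hzero htop
  have hweak := interp_weak m ν Φ hΦ B B2 hB hΦB hL2 s r hs hr G hG hGi N hN hGN
  have hEm : Measurable (fun z => ∫ x, G x * Φ x z ∂m) := by
    have : StronglyMeasurable (fun q : X × Z => G q.1 * Φ q.1 q.2) :=
      ((hG.comp measurable_fst).mul hΦ).stronglyMeasurable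
    exact this.integral_prod_left'.measurable
  have hlc := lintegral_rpow_eq_lintegral_meas_lt_mul ν (f := fun z => ‖∫ x, G x * Φ x z ∂m‖)
    (Filter.Eventually.of_forall fun z => norm_nonneg _) hEm.norm.aemeasurable (p := s) (by linarith)
  have e0 : ∫⁻ z, ‖∫ x, G x * Φ x z ∂m‖ₑ ^ s ∂ν = ∫⁻ z, ENNReal.ofReal (‖∫ x, G x * Φ x z ∂m‖ ^ s) ∂ν := by
    congr 1; ext z
    rw [← ofReal_norm, ENNReal.ofReal_rpow_of_nonneg (norm_nonneg _) (by linarith)]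
  rw [e0, hlc, hGN]
  have hthr : Measurable (fun t : ℝ => (2 * B * N / t) ^ (s - 1)) := by fun_prop
  have hA : Measurable (fun q : ℝ × X => ENNReal.ofReal (q.1 ^ (s - 3)) *
      {q : ℝ × X | ‖G q.2‖ ≤ (2 * B * N / q.1) ^ (s - 1)}.indicator (fun q => ‖G q.2‖ₑ ^ 2) q) := by
    refine Measurable.mul (by fun_prop) (Measurable.indicator (by fun_prop) ?_)
    exact measurableSet_le (by fun_prop) (by fun_prop)
  have hx : ∀ x, ∫⁻ t in Ioi (0 : ℝ), ENNReal.ofReal (t ^ (s - 3)) *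
      {q : ℝ × X | ‖G q.2‖ ≤ (2 * B * N / q.1) ^ (s - 1)}.indicator (fun q => ‖G q.2‖ₑ ^ 2) (t, x) ≤
      ENNReal.ofReal ((2 * B * N) ^ (s - 2) / (s - 2)) * ‖G x‖ₑ ^ r := by
    intro x
    by_cases hGx : G x = 0
    · have : ∀ t : ℝ, {q : ℝ × X | ‖G q.2‖ ≤ (2 * B * N / q.1) ^ (s - 1)}.indicator (fun q => ‖G q.2‖ₑ ^ 2) (t, x) = 0 := by
        intro t
        rw [indicator_apply]; simp [hGx]
      simp [this]
    have hGpos : 0 < ‖G x‖ := norm_pos_iff.2 hGx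
    set L : ℝ := 2 * B * N * ‖G x‖ ^ (-(r - 1)) with hL
    have hL0 : 0 < L := by positivity
    calc _ ≤ ∫⁻ t in Ioi (0 : ℝ), (Iic L).indicator (fun t => ENNReal.ofReal (t ^ (s - 3)) * ‖G x‖ₑ ^ 2) t := by
          refine lintegral_mono_ae ((ae_restrict_iff' measurableSet_Ioi).2 (Filter.Eventually.of_forall fun t ht => ?_))
          have ht0 : (0 : ℝ) < t := ht
          by_cases hc : ‖G x‖ ≤ (2 * B * N / t) ^ (s - 1)
          · rw [indicator_of_mem (by exact hc), indicator_of_mem]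
            rw [mem_Iic, hL]
            have h1 : ‖G x‖ ^ (r - 1) ≤ 2 * B * N / t := by
              have := Real.rpow_le_rpow hGpos.le hc (show 0 ≤ r - 1 by linarith)
              rwa [← Real.rpow_mul (by positivity), show (s - 1) * (r - 1) = 1 by
                have : s - 1 ≠ 0 := by linarith
                rw [hr]; field_simp; ring, Real.rpow_one] at this
            rw [Real.rpow_neg hGpos.le, ← div_eq_mul_inv, le_div_iff₀ (by positivity)]
            rw [le_div_iff₀ ht0] at h1
            linarith
          · rw [indicator_of_notMem (by exact hc), mul_zero]
            exact bot_le
      _ = (∫⁻ t in Ioc 0 L, ENNReal.ofReal (t ^ (s - 3))) * ‖G x‖ₑ ^ 2 := by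
          rw [setLIntegral_indicator measurableSet_Iic, inter_comm, Ioi_inter_Iic, lintegral_mul_const _ (by fun_prop)]
      _ = _ := by
          rw [lint_rpow (by linarith) hL0.le, ← ofReal_norm, ← ENNReal.ofReal_pow (norm_nonneg _),
            ENNReal.ofReal_rpow_of_pos hGpos, ← ENNReal.ofReal_mul, ← ENNReal.ofReal_mul]
          · congr 1
            rw [show s - 3 + 1 = s - 2 by ring, hL, Real.mul_rpow (by positivity) (by positivity),
              ← Real.rpow_mul hGpos.le, ← Real.rpow_natCast, div_mul_eq_mul_div, mul_assoc, ← Real.rpow_add hGpos]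
            rw [show -(r - 1) * (s - 2) + ((2 : ℕ) : ℝ) = r by
              have : s - 1 ≠ 0 := by linarith
              rw [hr]; push_cast; field_simp; ring]
            ring
          · have : 0 < s - 2 := by linarith
            positivity
          · have : 0 < s - 3 + 1 := by linarith
            positivity
  calc _ ≤ ENNReal.ofReal s * ∫⁻ t in Ioi (0 : ℝ), ENNReal.ofReal (4 * B2) *
        ∫⁻ x, ENNReal.ofReal (t ^ (s - 3)) *
          {q : ℝ × X | ‖G q.2‖ ≤ (2 * B * N / q.1) ^ (s - 1)}.indicator (fun q => ‖G q.2‖ₑ ^ 2) (t, x) ∂m := by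
        refine mul_le_mul' le_rfl ?_
        refine lintegral_mono_ae ((ae_restrict_iff' measurableSet_Ioi).2 (Filter.Eventually.of_forall fun t ht => ?_))
        have ht0 : (0 : ℝ) < t := ht
        refine (mul_le_mul_left (hweak t ht0) _).trans (le_of_eq ?_)
        rw [lintegral_const_mul]
        · rw [ENNReal.ofReal_mul (by norm_num), ENNReal.ofReal_mul (p := 4) (q := B2) (by norm_num)]
          have : ENNReal.ofReal (t ^ (s - 3)) = ENNReal.ofReal (t ^ (-2 : ℝ)) * ENNReal.ofReal (t ^ (s - 1)) := by
            rw [← ENNReal.ofReal_mul (by positivity), ← Real.rpow_add ht0]; congr 2; ring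
          rw [this]
          have e : ∀ x, {q : ℝ × X | ‖G q.2‖ ≤ (2 * B * N / q.1) ^ (s - 1)}.indicator (fun q => ‖G q.2‖ₑ ^ 2) (t, x) =
            {x | ‖G x‖ ≤ (2 * B * N / t) ^ (s - 1)}.indicator (fun x => ‖G x‖ₑ ^ 2) x := by
            intro x; simp only [indicator_apply, mem_setOf_eq]
          simp_rw [e]
          ring
        · refine Measurable.indicator (f := fun q : ℝ × X => ‖G q.2‖ₑ ^ 2) (by fun_prop) ?_ |>.comp measurable_prodMk_left
          exact measurableSet_le (by fun_prop) (by fun_prop)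
    _ = ENNReal.ofReal s * (ENNReal.ofReal (4 * B2) * ∫⁻ x, (∫⁻ t in Ioi (0 : ℝ), ENNReal.ofReal (t ^ (s - 3)) *
          {q : ℝ × X | ‖G q.2‖ ≤ (2 * B * N / q.1) ^ (s - 1)}.indicator (fun q => ‖G q.2‖ₑ ^ 2) (t, x)) ∂m) := by
        rw [lintegral_const_mul, lintegral_lintegral_swap]
        rotate_right
        · exact hA.lintegral_prod_right'
        · exact hA.aemeasurable
    _ ≤ ENNReal.ofReal s * (ENNReal.ofReal (4 * B2) * ∫⁻ x, ENNReal.ofReal ((2 * B * N) ^ (s - 2) / (s - 2)) * ‖G x‖ₑ ^ r ∂m) := by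
        exact mul_le_mul' le_rfl (mul_le_mul' le_rfl (lintegral_mono fun x => hx x))

    _ = _ := by
        have h2 : 0 < s - 2 := by linarith
        rw [lintegral_const_mul _ (by fun_prop), hGN, ENNReal.ofReal_rpow_of_pos hN]
        simp only [← mul_assoc]
        rw [← ENNReal.ofReal_mul (by positivity), ← ENNReal.ofReal_mul (by positivity), ← ENNReal.ofReal_mul (by positivity),
          ← ENNReal.ofReal_mul (by positivity)]
        congr 1
        rw [Real.mul_rpow (by positivity) hN.le, show s - 1 = s - 2 + 1 by ring, Real.rpow_add_one hN.ne']
        field_simp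

end interp


lemma lint_even (H : ℝ → ℝ≥0∞) (hH : Measurable H) (h0 : H 0 = 0) (he : ∀ t, H (-t) = H t) :
    ∫⁻ t, H t ≤ 2 * ∫⁻ t in Ioi (0:ℝ), H t := by
  have h1 : ∫⁻ t, H t ≤ ∫⁻ t, ((Ioi (0:ℝ)).indicator H t + (Ioi (0:ℝ)).indicator H (-t)) := by
    refine lintegral_mono fun t => ?_
    rcases lt_trichotomy t 0 with h | h | h
    · have : -t ∈ Ioi (0:ℝ) := by simpa using h
      rw [indicator_of_mem this, he]; exact le_add_self
    · simp [h, h0]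
    · rw [indicator_of_mem (by exact h)]; exact le_self_add
  refine h1.trans (le_of_eq ?_)
  rw [lintegral_add_left (hH.indicator measurableSet_Ioi), lintegral_neg_eq_self (f := (Ioi (0:ℝ)).indicator H),
    lintegral_indicator measurableSet_Ioi, two_mul]

lemma near_int (lam R : ℝ) (h0 : 0 < lam) (h1 : lam < 1) (hR : 0 < R) (c : ℝ) :
    ∫⁻ t, ENNReal.ofReal ({u : ℝ | |u| ≤ R}.indicator (fun u => |u| ^ (-lam)) (c - t)) ≤
      ENNReal.ofReal (2 * R ^ (1 - lam) / (1 - lam)) := by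
  have hm : Measurable (fun u : ℝ => ENNReal.ofReal ({u : ℝ | |u| ≤ R}.indicator (fun u => |u| ^ (-lam)) u)) :=
    (Measurable.indicator (by fun_prop) (measurableSet_le (by fun_prop) (by fun_prop))).ennreal_ofReal
  rw [lintegral_sub_left_eq_self (fun u : ℝ => ENNReal.ofReal ({u : ℝ | |u| ≤ R}.indicator (fun u => |u| ^ (-lam)) u)) c]
  refine (lint_even _ hm ?_ ?_).trans ?_
  · simp [indicator_apply, Real.zero_rpow (show -lam ≠ 0 by linarith)]
  · intro t; simp [indicator_apply]
  · have : ∫⁻ t in Ioi (0:ℝ), ENNReal.ofReal ({u : ℝ | |u| ≤ R}.indicator (fun u => |u| ^ (-lam)) t) =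
      ∫⁻ t in Ioc 0 R, ENNReal.ofReal (t ^ (-lam)) := by
      rw [← Ioi_inter_Iic, inter_comm, ← setLIntegral_indicator measurableSet_Iic]
      refine setLIntegral_congr_fun measurableSet_Ioi fun t ht => ?_
      have ht0 : (0:ℝ) < t := ht
      simp only [indicator_apply, mem_setOf_eq, mem_Iic, abs_of_pos ht0]
      split_ifs <;> simp
    rw [this, lint_rpow (by linarith) hR.le, show (2:ℝ≥0∞) = ENNReal.ofReal 2 by simp, ← ENNReal.ofReal_mul (by norm_num)]
    apply ENNReal.ofReal_le_ofReal (le_of_eq _)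
    rw [show -lam + 1 = 1 - lam by ring]; ring

lemma far_int (R : ℝ) (hR : 0 < R) (c : ℝ) :
    ∫⁻ t, ENNReal.ofReal ({u : ℝ | R < |u|}.indicator (fun u => |u| ^ (-2 : ℝ)) (c - t)) ≤
      ENNReal.ofReal (2 / R) := by
  have hm : Measurable (fun u : ℝ => ENNReal.ofReal ({u : ℝ | R < |u|}.indicator (fun u => |u| ^ (-2:ℝ)) u)) :=
    (Measurable.indicator (by fun_prop) (measurableSet_lt (by fun_prop) (by fun_prop))).ennreal_ofReal
  rw [lintegral_sub_left_eq_self (fun u : ℝ => ENNReal.ofReal ({u : ℝ | R < |u|}.indicator (fun u => |u| ^ (-2:ℝ)) u)) c]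
  refine (lint_even _ hm ?_ ?_).trans ?_
  · simp [indicator_apply]
  · intro t; simp [indicator_apply]
  · have : ∫⁻ t in Ioi (0:ℝ), ENNReal.ofReal ({u : ℝ | R < |u|}.indicator (fun u => |u| ^ (-2:ℝ)) t) =
      ∫⁻ t in Ioi R, ENNReal.ofReal (t ^ (-2:ℝ)) := by
      rw [show Ioi R = Ioi R ∩ Ioi 0 by rw [Ioi_inter_Ioi]; simp [hR.le], ← setLIntegral_indicator measurableSet_Ioi]
      refine setLIntegral_congr_fun measurableSet_Ioi fun t ht => ?_
      have ht0 : (0:ℝ) < t := ht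
      simp only [indicator_apply, mem_setOf_eq, mem_Ioi, abs_of_pos ht0]
      split_ifs <;> simp
    rw [this, ← ofReal_integral_eq_lintegral_ofReal (integrableOn_Ioi_rpow_of_lt (by norm_num) hR), 
      integral_Ioi_rpow_of_lt (by norm_num) hR, show (2:ℝ≥0∞) = ENNReal.ofReal 2 by simp, ← ENNReal.ofReal_mul (by norm_num)]
    · apply ENNReal.ofReal_le_ofReal (le_of_eq _)
      rw [show (-2:ℝ) + 1 = -1 by norm_num, Real.rpow_neg_one]; field_simp
    · refine (ae_restrict_iff' measurableSet_Ioi).2 (Filter.Eventually.of_forall fun t ht => ?_)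
      have : 0 < t := hR.trans ht
      simp only [Pi.zero_apply]; positivity

lemma hls_inner (ν : Measure ℝ) (ψ : ℝ → ℝ) (hψ : Measurable ψ)
    (hν : ∀ G : ℝ → ℝ≥0∞, Measurable G → ∫⁻ y, G (ψ y) ∂ν ≤ ∫⁻ t, G t)
    (lam : ℝ) (h0 : 0 < lam) (h1 : lam < 1) (f : ℝ → ℝ) (hf : Measurable f) (hf0 : ∀ x, 0 ≤ f x)
    (N : ℝ) (hN : 0 < N) (hNf : ∫⁻ y, ENNReal.ofReal (f y ^ (2 / (2 - lam))) ∂ν = ENNReal.ofReal N)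
    (A : ℝ) (hA : 0 < A) (c : ℝ) :
    ∫⁻ y, {y | f y ≤ A}.indicator (fun y => ENNReal.ofReal (f y * |c - ψ y| ^ (-lam))) y ∂ν ≤
      ENNReal.ofReal ((2 / (1 - lam) + 2 ^ (lam / 2)) * N ^ (1 - lam) * A ^ (lam / (2 - lam))) := by
  have h2 : 0 < 2 - lam := by linarith
  have h3 : 0 < 1 - lam := by linarith
  set R : ℝ := N / A ^ (2 / (2 - lam)) with hR
  have hR0 : 0 < R := by positivity
  have hmn : Measurable (fun u : ℝ => ENNReal.ofReal ({u : ℝ | |u| ≤ R}.indicator (fun u => |u| ^ (-lam)) (c - u))) :=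
    ((Measurable.indicator (f := fun u : ℝ => |u| ^ (-lam)) (by fun_prop) (measurableSet_le (by fun_prop) (by fun_prop))).comp (by fun_prop : Measurable fun u : ℝ => c - u)).ennreal_ofReal
  have hmf1 : Measurable (fun u : ℝ => {u : ℝ | R < |u|}.indicator (fun u => |u| ^ (-lam)) (c - u)) :=
    ((Measurable.indicator (f := fun u : ℝ => |u| ^ (-lam)) (by fun_prop) (measurableSet_lt (by fun_prop) (by fun_prop))).comp (by fun_prop : Measurable fun u : ℝ => c - u))
  have hmf2 : Measurable (fun u : ℝ => ENNReal.ofReal ({u : ℝ | R < |u|}.indicator (fun u => |u| ^ (-2:ℝ)) (c - u))) :=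
    ((Measurable.indicator (f := fun u : ℝ => |u| ^ (-2:ℝ)) (by fun_prop) (measurableSet_lt (by fun_prop) (by fun_prop))).comp (by fun_prop : Measurable fun u : ℝ => c - u)).ennreal_ofReal
  have hnear : ∫⁻ y, ENNReal.ofReal A * ENNReal.ofReal ({u : ℝ | |u| ≤ R}.indicator (fun u => |u| ^ (-lam)) (c - ψ y)) ∂ν
      ≤ ENNReal.ofReal (2 / (1 - lam) * N ^ (1 - lam) * A ^ (lam / (2 - lam))) := by
    rw [lintegral_const_mul]
    swap
    · exact hmn.comp hψ
    refine (mul_le_mul' le_rfl ((hν _ hmn).trans (near_int lam R h0 h1 hR0 c))).trans ?_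
    rw [← ENNReal.ofReal_mul hA.le]
    apply ENNReal.ofReal_le_ofReal (le_of_eq _)
    rw [hR, Real.div_rpow hN.le (by positivity), ← Real.rpow_mul hA.le]
    have : A ^ (lam / (2 - lam)) = A / A ^ (2 / (2 - lam) * (1 - lam)) := by
      rw [_root_.eq_div_iff (by positivity), ← Real.rpow_add hA]
      rw [show lam / (2 - lam) + 2 / (2 - lam) * (1 - lam) = 1 by field_simp; ring, Real.rpow_one]
    rw [this]; field_simp
  have hfar : ∫⁻ y, ENNReal.ofReal (f y) * ENNReal.ofReal ({u : ℝ | R < |u|}.indicator (fun u => |u| ^ (-lam)) (c - ψ y)) ∂ν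
      ≤ ENNReal.ofReal (2 ^ (lam / 2) * N ^ (1 - lam) * A ^ (lam / (2 - lam))) := by
    have hpq : (2 / (2 - lam)).HolderConjugate (2 / lam) := by
      rw [Real.holderConjugate_iff]
      constructor
      · rw [lt_div_iff₀ h2]; linarith
      · field_simp; ring
    have hH := ENNReal.lintegral_mul_le_Lp_mul_Lq ν hpq (f := fun y => ENNReal.ofReal (f y))
      (g := fun y => ENNReal.ofReal ({u : ℝ | R < |u|}.indicator (fun u => |u| ^ (-lam)) (c - ψ y)))
      hf.ennreal_ofReal.aemeasurable (hmf1.comp hψ).ennreal_ofReal.aemeasurable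
    refine hH.trans ?_
    have e1 : ∫⁻ a, ENNReal.ofReal (f a) ^ (2 / (2 - lam)) ∂ν = ENNReal.ofReal N := by
      rw [← hNf]; congr 1; ext a
      rw [ENNReal.ofReal_rpow_of_nonneg (hf0 a) (by positivity)]
    have e2 : ∫⁻ a, ENNReal.ofReal ({u : ℝ | R < |u|}.indicator (fun u => |u| ^ (-lam)) (c - ψ a)) ^ (2 / lam) ∂ν
        ≤ ENNReal.ofReal (2 / R) := by
      refine le_trans (le_of_eq ?_) ((hν _ hmf2).trans (far_int R hR0 c))
      congr 1; ext a
      rw [ENNReal.ofReal_rpow_of_nonneg (indicator_nonneg (fun u _ => by positivity) _) (by positivity)]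
      congr 1
      simp only [indicator_apply]
      split_ifs
      · rw [← Real.rpow_mul (abs_nonneg _)]; congr 1; field_simp
      · rw [Real.zero_rpow (by positivity)]
    rw [e1]
    refine (mul_le_mul' le_rfl (ENNReal.rpow_le_rpow e2 (by positivity))).trans ?_
    rw [ENNReal.ofReal_rpow_of_pos hN, ENNReal.ofReal_rpow_of_pos (by positivity), ← ENNReal.ofReal_mul (by positivity)]
    apply ENNReal.ofReal_le_ofReal (le_of_eq _)
    rw [hR, Real.div_rpow (by positivity) (by positivity), Real.div_rpow (by positivity) (by positivity), ← Real.rpow_mul hA.le]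
    rw [one_div_div, one_div_div, show 2 / (2 - lam) * (lam / 2) = lam / (2 - lam) by field_simp]
    rw [show (1 - lam) = (2 - lam) / 2 - lam / 2 by ring, Real.rpow_sub hN]
    field_simp
  refine le_trans (b := ∫⁻ y, (ENNReal.ofReal A * ENNReal.ofReal ({u : ℝ | |u| ≤ R}.indicator (fun u => |u| ^ (-lam)) (c - ψ y)) +
     ENNReal.ofReal (f y) * ENNReal.ofReal ({u : ℝ | R < |u|}.indicator (fun u => |u| ^ (-lam)) (c - ψ y))) ∂ν) ?_ ?_
  · refine lintegral_mono fun y => ?_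
    by_cases hy : f y ≤ A
    · rw [indicator_of_mem (by exact hy), ENNReal.ofReal_mul (hf0 y)]
      by_cases hc : |c - ψ y| ≤ R
      · refine le_trans ?_ le_self_add
        rw [indicator_of_mem (by exact hc)]
        gcongr
      · refine le_trans ?_ le_add_self
        rw [indicator_of_mem (by exact not_le.1 hc)]
    · rw [indicator_of_notMem (by exact hy)]; exact bot_le
  · rw [lintegral_add_right]
    · refine (add_le_add hnear hfar).trans (le_of_eq ?_)
      rw [← ENNReal.ofReal_add (by positivity) (by positivity)]
      congr 1; ring
    · have := (hmf1.comp hψ).ennreal_ofReal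
      exact hf.ennreal_ofReal.mul this

lemma hls (ν : Measure ℝ) [SFinite ν] (ψ : ℝ → ℝ) (hψ : Measurable ψ)
    (hν : ∀ G : ℝ → ℝ≥0∞, Measurable G → ∫⁻ y, G (ψ y) ∂ν ≤ ∫⁻ t, G t)
    (lam : ℝ) (h0 : 0 < lam) (h1 : lam < 1) (f : ℝ → ℝ) (hf : Measurable f) (hf0 : ∀ x, 0 ≤ f x) :
    ∫⁻ x, (∫⁻ y, ENNReal.ofReal (f x * (f y * |ψ x - ψ y| ^ (-lam))) ∂ν) ∂ν ≤
      ENNReal.ofReal (2 * (2 / (1 - lam) + 2 ^ (lam / 2))) *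
        (∫⁻ y, ENNReal.ofReal (f y ^ (2 / (2 - lam))) ∂ν) ^ (2 - lam) := by
  have h2 : 0 < 2 - lam := by linarith
  have h3 : 0 < 1 - lam := by linarith
  have hC : 0 < 2 * (2 / (1 - lam) + 2 ^ (lam / 2)) := by positivity
  by_cases htop : ∫⁻ y, ENNReal.ofReal (f y ^ (2 / (2 - lam))) ∂ν = ⊤
  · rw [htop, ENNReal.top_rpow_of_pos h2, ENNReal.mul_top (by simpa using hC)]
    exact le_top
  by_cases hzero : ∫⁻ y, ENNReal.ofReal (f y ^ (2 / (2 - lam))) ∂ν = 0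
  · have hz : ∀ᵐ x ∂ν, f x = 0 := by
      rw [lintegral_eq_zero_iff (by fun_prop)] at hzero
      filter_upwards [hzero] with x hx
      by_contra hne
      have : 0 < f x := lt_of_le_of_ne (hf0 x) (Ne.symm hne)
      have h4 : 0 < f x ^ (2 / (2 - lam)) := by positivity
      simp only [Pi.zero_apply, ENNReal.ofReal_eq_zero] at hx
      linarith
    refine le_trans (le_of_eq ?_) bot_le
    rw [lintegral_eq_zero_of_ae_eq_zero]; · rfl
    filter_upwards [hz] with x hx
    simp [hx]
  obtain ⟨N, hN, hNf⟩ : ∃ N : ℝ, 0 < N ∧ ∫⁻ y, ENNReal.ofReal (f y ^ (2 / (2 - lam))) ∂ν = ENNReal.ofReal N :=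
    ⟨_, ENNReal.toReal_pos hzero htop, (ENNReal.ofReal_toReal htop).symm⟩
  set K : ℝ → ℝ → ℝ≥0∞ := fun x y => {q : ℝ × ℝ | f q.2 ≤ f q.1}.indicator
    (fun q => ENNReal.ofReal (f q.1 * (f q.2 * |ψ q.1 - ψ q.2| ^ (-lam)))) (x, y) with hK
  have hKm : Measurable (Function.uncurry K) := by
    have : Measurable ({q : ℝ × ℝ | f q.2 ≤ f q.1}.indicator
      (fun q => ENNReal.ofReal (f q.1 * (f q.2 * |ψ q.1 - ψ q.2| ^ (-lam))))) :=
      Measurable.indicator (by fun_prop) (measurableSet_le (by fun_prop) (by fun_prop))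
    exact this
  have hKb : ∫⁻ x, (∫⁻ y, K x y ∂ν) ∂ν ≤ ENNReal.ofReal (2 / (1 - lam) + 2 ^ (lam / 2)) * ENNReal.ofReal N ^ (2 - lam) := by
    calc _ ≤ ∫⁻ x, ENNReal.ofReal ((2 / (1 - lam) + 2 ^ (lam / 2)) * N ^ (1 - lam)) * ENNReal.ofReal (f x ^ (2 / (2 - lam))) ∂ν := by
          refine lintegral_mono fun x => ?_
          rcases (hf0 x).eq_or_lt with hx | hx
          · refine le_trans (le_of_eq ?_) bot_le
            rw [lintegral_eq_zero_of_ae_eq_zero]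
            · rfl
            · refine Filter.Eventually.of_forall fun y => ?_
              simp [hK, indicator_apply, ← hx]
          · have hin := hls_inner ν ψ hψ hν lam h0 h1 f hf hf0 N hN hNf (f x) hx (ψ x)
            calc _ = ENNReal.ofReal (f x) * ∫⁻ y, {y | f y ≤ f x}.indicator (fun y => ENNReal.ofReal (f y * |ψ x - ψ y| ^ (-lam))) y ∂ν := by
                  rw [← lintegral_const_mul _ (Measurable.indicator (by fun_prop) (measurableSet_le (by fun_prop) (by fun_prop)))]
                  congr 1; ext y
                  simp only [hK, indicator_apply, mem_setOf_eq]
                  split_ifs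
                  · rw [ENNReal.ofReal_mul hx.le]
                  · simp
              _ ≤ _ := mul_le_mul' le_rfl hin
              _ = _ := by
                  rw [← ENNReal.ofReal_mul hx.le, ← ENNReal.ofReal_mul (by positivity)]
                  congr 1
                  rw [show 2 / (2 - lam) = lam / (2 - lam) + 1 by field_simp; ring, Real.rpow_add_one hx.ne']
                  ring
      _ = _ := by
          rw [lintegral_const_mul _ (by fun_prop), hNf, ENNReal.ofReal_rpow_of_pos hN, ← ENNReal.ofReal_mul (by positivity),
            ← ENNReal.ofReal_mul (by positivity), show 2 - lam = (1 - lam) + 1 by ring, Real.rpow_add_one hN.ne', mul_assoc]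
  rw [hNf]
  calc _ ≤ ∫⁻ x, (∫⁻ y, (K x y + K y x) ∂ν) ∂ν := by
        refine lintegral_mono fun x => lintegral_mono fun y => ?_
        rcases le_total (f y) (f x) with h | h
        · refine le_trans (le_of_eq ?_) le_self_add
          simp [hK, indicator_apply, h]
        · refine le_trans (le_of_eq ?_) le_add_self
          simp only [hK, indicator_apply, mem_setOf_eq, h, if_true]
          rw [abs_sub_comm]; congr 1; ring
    _ = (∫⁻ x, (∫⁻ y, K x y ∂ν) ∂ν) + ∫⁻ x, (∫⁻ y, K y x ∂ν) ∂ν := by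
        have hl : Measurable (fun x => ∫⁻ y, K x y ∂ν) := hKm.lintegral_prod_right'
        rw [← lintegral_add_left hl]
        congr 1; ext x
        have hl2 : Measurable (fun y => K x y) := hKm.comp measurable_prodMk_left
        rw [lintegral_add_left hl2]
    _ = (∫⁻ x, (∫⁻ y, K x y ∂ν) ∂ν) + ∫⁻ x, (∫⁻ y, K x y ∂ν) ∂ν := by
        congr 1
        rw [lintegral_lintegral_swap]
        exact (hKm.comp measurable_swap).aemeasurable
    _ ≤ _ := add_le_add hKb hKb
    _ = _ := by rw [← two_mul, ENNReal.ofReal_mul (by norm_num), ENNReal.ofReal_ofNat, mul_assoc]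


/-- The part of the interval where the curvature is positive. -/
def KK (a b : ℝ) (κ : ℝ → ℝ) : Set ℝ := {x | x ∈ Ioo a b ∧ 0 < κ x}
/-- Ordered pairs of points with positive curvature. -/
def XX (a b : ℝ) (κ : ℝ → ℝ) : Set (ℝ × ℝ) := {w | w.1 ∈ KK a b κ ∧ w.2 ∈ KK a b κ ∧ w.1 < w.2}

lemma KK_meas (a b : ℝ) (κ : ℝ → ℝ) (h : Measurable κ) : MeasurableSet (KK a b κ) :=
  measurableSet_Ioo.inter (measurableSet_lt measurable_const h)

lemma XX_meas (a b : ℝ) (κ : ℝ → ℝ) (h : Measurable κ) : MeasurableSet (XX a b κ) :=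
  (measurable_fst (KK_meas a b κ h)).inter
    ((measurable_snd (KK_meas a b κ h)).inter (measurableSet_lt measurable_fst measurable_snd))

section geo
variable (a b : ℝ) (φ ψ κ : ℝ → ℝ)

lemma psi_mono (hψ : ∀ x ∈ Ioo a b, HasDerivAt ψ (κ x) x)
    (hκ : ∀ x ∈ Ioo a b, 0 ≤ κ x) : MonotoneOn ψ (Ioo a b) := by
  refine monotoneOn_of_deriv_nonneg (convex_Ioo a b) (fun x hx => (hψ x hx).continuousAt.continuousWithinAt) ?_ ?_
  · rw [interior_Ioo]; exact fun x hx => (hψ x hx).differentiableAt.differentiableWithinAt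
  · rw [interior_Ioo]; intro x hx; rw [(hψ x hx).deriv]; exact hκ x hx

lemma psi_lt (hψ : ∀ x ∈ Ioo a b, HasDerivAt ψ (κ x) x)
    (hκ : ∀ x ∈ Ioo a b, 0 ≤ κ x) {x y : ℝ} (hx : x ∈ KK a b κ) (hy : y ∈ Ioo a b) (hxy : x < y) : ψ x < ψ y := by
  have hm := psi_mono a b ψ κ hψ hκ
  refine lt_of_le_of_ne (hm hx.1 hy hxy.le) fun he => ?_
  have hc : ∀ z ∈ Icc x y, ψ z = ψ x := by
    intro z hz
    have hzI : z ∈ Ioo a b := ⟨hx.1.1.trans_le hz.1, hz.2.trans_lt hy.2⟩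
    exact le_antisymm ((hm hzI hy hz.2).trans he.ge) (hm hx.1 hzI hz.1)
  have h1 : HasDerivWithinAt ψ (κ x) (Icc x y) x := (hψ x hx.1).hasDerivWithinAt
  have h2 : HasDerivWithinAt ψ 0 (Icc x y) x :=
    (hasDerivWithinAt_const x (Icc x y) (ψ x)).congr hc rfl
  have := (uniqueDiffOn_Icc hxy x (left_mem_Icc.2 hxy.le)).eq_deriv _ h1 h2
  exact hx.2.ne' this

lemma cov1 (hκm : Measurable κ) (hψ : ∀ x ∈ Ioo a b, HasDerivAt ψ (κ x) x)
    (hκ : ∀ x ∈ Ioo a b, 0 ≤ κ x) (G : ℝ → ℝ≥0∞) :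
    ∫⁻ y in KK a b κ, ENNReal.ofReal (κ y) * G (ψ y) ≤ ∫⁻ t, G t := by
  have hinj : InjOn ψ (KK a b κ) := by
    intro x hx y hy hxy
    rcases lt_trichotomy x y with h | h | h
    · exact absurd hxy (psi_lt a b ψ κ hψ hκ hx hy.1 h).ne
    · exact h
    · exact absurd hxy.symm (psi_lt a b ψ κ hψ hκ hy hx.1 h).ne
  have := lintegral_image_eq_lintegral_abs_deriv_mul (KK_meas a b κ hκm)
    (fun x hx => (hψ x hx.1).hasDerivWithinAt) hinj G
  refine le_trans (le_of_eq ?_) (setLIntegral_le_lintegral (ψ '' KK a b κ) G)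
  rw [this]
  refine setLIntegral_congr_fun (KK_meas a b κ hκm) fun x hx => ?_
  simp only [abs_of_pos hx.2]

/-- The sum map. -/
def PP (φ : ℝ → ℝ) (w : ℝ × ℝ) : ℝ × ℝ := (w.1 + w.2, φ w.1 + φ w.2)

lemma PP_inj_aux (hφ : ∀ x ∈ Ioo a b, HasDerivAt φ (ψ x) x) (hψ : ∀ x ∈ Ioo a b, HasDerivAt ψ (κ x) x)
    (hκ : ∀ x ∈ Ioo a b, 0 ≤ κ x) (w w' : ℝ × ℝ) (hw : w ∈ XX a b κ) (hw' : w' ∈ XX a b κ)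
    (h : PP φ w = PP φ w') : ¬ w.1 < w'.1 := by
  obtain ⟨x, y⟩ := w
  obtain ⟨x', y'⟩ := w'
  simp only [PP, Prod.mk.injEq] at h ⊢
  obtain ⟨h1, h2⟩ := h
  obtain ⟨hx, hy, hxy⟩ := hw
  obtain ⟨hx', hy', hxy'⟩ := hw'
  simp only at hx hy hxy hx' hy' hxy'
  intro hlt
  have hlt2 : y' < y := by linarith
  have hm := psi_mono a b ψ κ hψ hκ
  have hsub : ∀ {u v : ℝ}, u ∈ Ioo a b → v ∈ Ioo a b → ∀ z ∈ Icc u v, z ∈ Ioo a b :=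
    fun hu hv z hz => ⟨hu.1.trans_le hz.1, hz.2.trans_lt hv.2⟩
  obtain ⟨c1, hc1, e1⟩ := exists_hasDerivAt_eq_slope φ ψ hlt
    (fun z hz => (hφ z (hsub hx.1 hx'.1 z hz)).continuousAt.continuousWithinAt)
    (fun z hz => hφ z (hsub hx.1 hx'.1 z (Ioo_subset_Icc_self hz)))
  obtain ⟨c2, hc2, e2⟩ := exists_hasDerivAt_eq_slope φ ψ hlt2
    (fun z hz => (hφ z (hsub hy'.1 hy.1 z hz)).continuousAt.continuousWithinAt)
    (fun z hz => hφ z (hsub hy'.1 hy.1 z (Ioo_subset_Icc_self hz)))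
  have e3 : ψ c1 = ψ c2 := by
    rw [e1, e2, show φ x' - φ x = φ y - φ y' by linarith, show x' - x = y - y' by linarith]
  have i1 := hm (hsub hx.1 hx'.1 c1 (Ioo_subset_Icc_self hc1)) hx'.1 hc1.2.le
  have i2 := hm hy'.1 (hsub hy'.1 hy.1 c2 (Ioo_subset_Icc_self hc2)) hc2.1.le
  have i3 := psi_lt a b ψ κ hψ hκ hx' hy'.1 hxy'
  linarith

lemma PP_inj (hφ : ∀ x ∈ Ioo a b, HasDerivAt φ (ψ x) x) (hψ : ∀ x ∈ Ioo a b, HasDerivAt ψ (κ x) x)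
    (hκ : ∀ x ∈ Ioo a b, 0 ≤ κ x) : InjOn (PP φ) (XX a b κ) := by
  intro w hw w' hw' h
  have h1 := PP_inj_aux a b φ ψ κ hφ hψ hκ w w' hw hw' h
  have h2 := PP_inj_aux a b φ ψ κ hφ hψ hκ w' w hw' hw h.symm
  have h3 : w.1 = w'.1 := le_antisymm (not_lt.1 h2) (not_lt.1 h1)
  have h4 : w.1 + w.2 = w'.1 + w'.2 := congrArg Prod.fst h
  exact Prod.ext h3 (by linarith)

lemma PP_deriv (hφ : ∀ x ∈ Ioo a b, HasDerivAt φ (ψ x) x) (w : ℝ × ℝ) (h1 : w.1 ∈ Ioo a b) (h2 : w.2 ∈ Ioo a b) :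
    HasFDerivAt (PP φ) (LinearMap.toContinuousLinearMap (Matrix.toLin (Module.Basis.finTwoProd ℝ) (Module.Basis.finTwoProd ℝ)
      !![1, 1; ψ w.1, ψ w.2])) w := by
  rw [Matrix.toLin_finTwoProd_toContinuousLinearMap]
  convert! HasFDerivAt.prodMk (𝕜 := ℝ) ((hasFDerivAt_fst (p := w)).add hasFDerivAt_snd)
    (((hφ _ h1).comp_hasFDerivAt w hasFDerivAt_fst).add ((hφ _ h2).comp_hasFDerivAt w hasFDerivAt_snd)) using 2 <;> simp

lemma cov2 (hκm : Measurable κ) (hφ : ∀ x ∈ Ioo a b, HasDerivAt φ (ψ x) x) (hψ : ∀ x ∈ Ioo a b, HasDerivAt ψ (κ x) x)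
    (hκ : ∀ x ∈ Ioo a b, 0 ≤ κ x) (G : ℝ × ℝ → ℝ≥0∞) :
    ∫⁻ w in XX a b κ, ENNReal.ofReal (ψ w.2 - ψ w.1) * G (PP φ w) ≤ ∫⁻ z, G z := by
  have := lintegral_image_eq_lintegral_abs_det_fderiv_mul volume (XX_meas a b κ hκm)
    (fun w hw => (PP_deriv a b φ ψ hφ w hw.1.1 hw.2.1.1).hasFDerivWithinAt) (PP_inj a b φ ψ κ hφ hψ hκ) G
  refine le_trans (le_of_eq ?_) (setLIntegral_le_lintegral (PP φ '' XX a b κ) G)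
  rw [this]
  refine setLIntegral_congr_fun (XX_meas a b κ hκm) fun w hw => ?_
  have i3 := psi_lt a b ψ κ hψ hκ hw.1 hw.2.1.1 hw.2.2
  simp only [ContinuousLinearMap.det, LinearMap.coe_toContinuousLinearMap, LinearMap.det_toLin, Matrix.det_fin_two_of]
  rw [one_mul, one_mul, abs_of_pos (by linarith)]

end geo



/-- Fourier transform of the cutoff. -/
noncomputable def hat (χ : 𝓢(ℝ, ℝ)) (ξ : ℝ) : ℂ := fourierTransform1 (fun u => (χ u : ℂ)) ξ

lemma chi_decay (χ : 𝓢(ℝ, ℝ)) : ∃ C : ℝ, 0 < C ∧ ∀ a, |χ a| ≤ C / (1 + a ^ 2) := by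
  obtain ⟨C0, h0, hC0⟩ := χ.decay 0 0
  obtain ⟨C2, h2, hC2⟩ := χ.decay 2 0
  refine ⟨C0 + C2, by positivity, fun a => ?_⟩
  have i0 := hC0 a
  have i2 := hC2 a
  simp only [norm_iteratedFDeriv_zero, pow_zero, one_mul, Real.norm_eq_abs, sq_abs] at i0 i2
  rw [le_div_iff₀ (by positivity)]
  linarith

lemma hat_cont (χ : 𝓢(ℝ, ℝ)) : Continuous (hat χ) := by
  unfold hat fourierTransform1
  refine continuous_of_dominated (bound := fun u => |χ u|) ?_ ?_ χ.integrable.norm ?_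
  · intro ξ
    have := χ.continuous
    exact Continuous.aestronglyMeasurable (by fun_prop)
  · intro ξ
    refine Filter.Eventually.of_forall fun u => ?_
    rw [norm_mul, show -Complex.I * ((u:ℂ) * ξ) = ((-(u * ξ) : ℝ) : ℂ) * Complex.I by push_cast; ring,
      Complex.norm_exp_ofReal_mul_I]
    simp
  · refine Filter.Eventually.of_forall fun u => ?_
    fun_prop

lemma hat_bound (χ : 𝓢(ℝ, ℝ)) (ξ : ℝ) : ‖hat χ ξ‖ ≤ (∫ u, |χ u|) + 1 := by
  unfold hat fourierTransform1
  refine (norm_integral_le_integral_norm _).trans ?_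
  have : (fun u : ℝ => ‖Complex.exp (-Complex.I * (u * ξ)) * (χ u : ℂ)‖) = fun u => |χ u| := by
    ext u
    rw [norm_mul, show -Complex.I * ((u:ℂ) * ξ) = ((-(u * ξ) : ℝ) : ℂ) * Complex.I by push_cast; ring,
      Complex.norm_exp_ofReal_mul_I]
    simp
  rw [this]; linarith

lemma factor_int (χ : 𝓢(ℝ, ℝ)) (H : ℝ × ℝ → ℂ) (hH : Integrable H) (l : ℝ × ℝ → ℝ) (hl : Continuous l) :
    Integrable (fun ζ => H ζ * hat χ (l ζ)) := by
  have := hat_cont χ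
  exact hH.mul_bdd (Continuous.aestronglyMeasurable (by fun_prop)) (Filter.Eventually.of_forall fun ζ => hat_bound χ _)

lemma factor (χ : 𝓢(ℝ, ℝ)) (H : ℝ × ℝ → ℂ) (hH : Integrable H) (e : ℝ) (d w : ℝ × ℝ) :
    FT2 (fun ζ => H ζ * hat χ (e * (ζ.1 * d.1 + ζ.2 * d.2))) w =
      ∫ u : ℝ, (χ u : ℂ) * FT2 H (w.1 - e * u * d.1, w.2 - e * u * d.2) := by
  have hc := χ.continuous
  have h1 : Integrable (Function.uncurry fun (ζ : ℝ × ℝ) (u : ℝ) => (H ζ * (χ u : ℂ)) *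
      Complex.exp (Complex.I * (ζ.1 * ((w.1 - e * u * d.1 : ℝ) : ℂ) + ζ.2 * ((w.2 - e * u * d.2 : ℝ) : ℂ))))
      (volume.prod volume) := by
    have h2 := hH.mul_prod (Integrable.ofReal (𝕜 := ℂ) (χ.integrable (μ := volume)))
    refine h2.mul_bdd (c := 1) (g := fun q : (ℝ × ℝ) × ℝ => Complex.exp (Complex.I * (q.1.1 * ((w.1 - e * q.2 * d.1 : ℝ) : ℂ) + q.1.2 * ((w.2 - e * q.2 * d.2 : ℝ) : ℂ)))) ?_ ?_
    · exact Continuous.aestronglyMeasurable (by fun_prop)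
    · refine Filter.Eventually.of_forall fun q => ?_
      exact (norm_phase q.1 (w.1 - e * q.2 * d.1, w.2 - e * q.2 * d.2)).le
  have h3 := integral_integral_swap h1
  calc _ = ∫ ζ : ℝ × ℝ, ∫ u : ℝ, (H ζ * (χ u : ℂ)) *
      Complex.exp (Complex.I * (ζ.1 * ((w.1 - e * u * d.1 : ℝ) : ℂ) + ζ.2 * ((w.2 - e * u * d.2 : ℝ) : ℂ))) := by
        unfold FT2
        congr 1; ext ζ
        unfold hat fourierTransform1
        beta_reduce
        rw [← integral_const_mul, ← integral_mul_const]
        congr 1; ext u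
        rw [show H ζ * (Complex.exp (-Complex.I * (u * ((e * (ζ.1 * d.1 + ζ.2 * d.2) : ℝ) : ℂ))) * (χ u : ℂ)) *
          Complex.exp (Complex.I * (ζ.1 * w.1 + ζ.2 * w.2)) = (H ζ * (χ u : ℂ)) *
          (Complex.exp (-Complex.I * (u * ((e * (ζ.1 * d.1 + ζ.2 * d.2) : ℝ) : ℂ))) * Complex.exp (Complex.I * (ζ.1 * w.1 + ζ.2 * w.2))) by ring,
          ← Complex.exp_add]
        congr 2
        push_cast; ring
    _ = _ := h3
    _ = _ := by
        congr 1; ext u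
        unfold FT2
        rw [← integral_const_mul]
        congr 1; ext ζ
        ring

lemma factor1 (χ : 𝓢(ℝ, ℝ)) (C : ℝ) (hC : 0 < C) (hχ : ∀ a, |χ a| ≤ C / (1 + a ^ 2))
    (H : ℝ × ℝ → ℂ) (hH : Integrable H) (f : ℝ × ℝ → ℝ≥0∞) (hf : Measurable f)
    (hHf : ∀ w, ‖FT2 H w‖ₑ ≤ f w) (e : ℝ) (he : e ∈ Ioo (0:ℝ) 1) (w : ℝ × ℝ) :
    ‖FT2 (fun ζ => H ζ * hat χ (e * ζ.1)) w‖ₑ ≤ ENNReal.ofReal (2 * C) * M1 f w := by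
  have h := factor χ H hH e (1, 0) w
  simp only [mul_one, mul_zero, add_zero, sub_zero] at h
  rw [h]
  refine (enorm_integral_le_lintegral_enorm _).trans (le_trans ?_
    (avg_le_MM (fun u => f (u, w.2)) (by fun_prop) χ C hC.le hχ e he w.1))
  refine lintegral_mono fun u => ?_
  rw [enorm_mul, ← ofReal_norm (χ u : ℂ), Complex.norm_real, Real.norm_eq_abs]
  exact mul_le_mul' le_rfl (hHf _)

lemma factor2 (χ : 𝓢(ℝ, ℝ)) (C : ℝ) (hC : 0 < C) (hχ : ∀ a, |χ a| ≤ C / (1 + a ^ 2))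
    (H : ℝ × ℝ → ℂ) (hH : Integrable H) (f : ℝ × ℝ → ℝ≥0∞) (hf : Measurable f)
    (hHf : ∀ w, ‖FT2 H w‖ₑ ≤ f w) (e : ℝ) (he : e ∈ Ioo (0:ℝ) 1) (w : ℝ × ℝ) :
    ‖FT2 (fun ζ => H ζ * hat χ (e * ζ.2)) w‖ₑ ≤ ENNReal.ofReal (2 * C) * M2 f w := by
  have h := factor χ H hH e (0, 1) w
  simp only [mul_one, mul_zero, zero_add, sub_zero] at h
  rw [h]
  refine (enorm_integral_le_lintegral_enorm _).trans (le_trans ?_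
    (avg_le_MM (fun u => f (w.1, u)) (by fun_prop) χ C hC.le hχ e he w.2))
  refine lintegral_mono fun u => ?_
  rw [enorm_mul, ← ofReal_norm (χ u : ℂ), Complex.norm_real, Real.norm_eq_abs]
  exact mul_le_mul' le_rfl (hHf _)

/-- The bilinear kernel. -/
noncomputable def Phi (χ : 𝓢(ℝ, ℝ)) (φ e1 e2 : ℝ → ℝ) (w ζ : ℝ × ℝ) : ℂ :=
  hat χ (e1 w.1 * ζ.1) * hat χ (e1 w.2 * ζ.1) * hat χ (e2 w.1 * ζ.2) * hat χ (e2 w.2 * ζ.2) *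
    Complex.exp (Complex.I * (ζ.1 * (PP φ w).1 + ζ.2 * (PP φ w).2))

lemma Phi_meas (χ : 𝓢(ℝ, ℝ)) (φ e1 e2 : ℝ → ℝ) (hφ : Measurable φ) (h1 : Measurable e1) (h2 : Measurable e2) :
    Measurable (Function.uncurry (Phi χ φ e1 e2)) := by
  have := (hat_cont χ).measurable
  unfold Phi PP Function.uncurry
  fun_prop

lemma Phi_bound (χ : 𝓢(ℝ, ℝ)) (φ e1 e2 : ℝ → ℝ) (w ζ : ℝ × ℝ) :
    ‖Phi χ φ e1 e2 w ζ‖ ≤ ((∫ u, |χ u|) + 1) ^ 4 := by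
  unfold Phi
  rw [norm_mul, norm_phase, mul_one, norm_mul, norm_mul, norm_mul]
  have h0 : 0 ≤ ∫ u, |χ u| := integral_nonneg fun u => abs_nonneg _
  calc _ ≤ ((∫ u, |χ u|) + 1) * ((∫ u, |χ u|) + 1) * ((∫ u, |χ u|) + 1) * ((∫ u, |χ u|) + 1) := by
        gcongr <;> exact hat_bound χ _
    _ = _ := by ring

/-- The dominating iterated maximal function. -/
noncomputable def TT (C : ℝ) (f : ℝ × ℝ → ℝ≥0∞) (w : ℝ × ℝ) : ℝ≥0∞ :=
  ENNReal.ofReal (2 * C) * M2 (fun w => ENNReal.ofReal (2 * C) * M2 (fun w => ENNReal.ofReal (2 * C) *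
    M1 (fun w => ENNReal.ofReal (2 * C) * M1 f w) w) w) w

lemma TT_meas (C : ℝ) {f : ℝ × ℝ → ℝ≥0∞} (hf : Measurable f) : Measurable (TT C f) := by
  have m1 := (M1_meas hf).const_mul (ENNReal.ofReal (2 * C))
  have m2 := (M1_meas m1).const_mul (ENNReal.ofReal (2 * C))
  have m3 := (M2_meas m2).const_mul (ENNReal.ofReal (2 * C))
  exact (M2_meas m3).const_mul (ENNReal.ofReal (2 * C))

lemma sq_step1 (c : ℝ≥0∞) {f : ℝ × ℝ → ℝ≥0∞} (hf : Measurable f) :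
    ∫⁻ w, (c * M1 f w) ^ 2 ≤ (c * (8 * ENNReal.ofReal Real.pi)) ^ 2 * ∫⁻ w, f w ^ 2 := by
  simp_rw [mul_pow c]
  rw [lintegral_const_mul _ ((M1_meas hf).pow_const 2), mul_assoc]
  exact mul_le_mul' le_rfl (M1_bound hf)

lemma sq_step2 (c : ℝ≥0∞) {f : ℝ × ℝ → ℝ≥0∞} (hf : Measurable f) :
    ∫⁻ w, (c * M2 f w) ^ 2 ≤ (c * (8 * ENNReal.ofReal Real.pi)) ^ 2 * ∫⁻ w, f w ^ 2 := by
  simp_rw [mul_pow c]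
  rw [lintegral_const_mul _ ((M2_meas hf).pow_const 2), mul_assoc]
  exact mul_le_mul' le_rfl (M2_bound hf)

lemma TT_bound (C : ℝ) (hC : 0 < C) {f : ℝ × ℝ → ℝ≥0∞} (hf : Measurable f) :
    ∫⁻ w, TT C f w ^ 2 ≤ ENNReal.ofReal ((2 * C * (8 * Real.pi)) ^ 8) * ∫⁻ w, f w ^ 2 := by
  have m1 := (M1_meas hf).const_mul (ENNReal.ofReal (2 * C))
  have m2 := (M1_meas m1).const_mul (ENNReal.ofReal (2 * C))
  have m3 := (M2_meas m2).const_mul (ENNReal.ofReal (2 * C))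
  have s1 := sq_step1 (ENNReal.ofReal (2 * C)) hf
  have s2 := sq_step1 (ENNReal.ofReal (2 * C)) m1
  have s3 := sq_step2 (ENNReal.ofReal (2 * C)) m2
  have s4 := sq_step2 (ENNReal.ofReal (2 * C)) m3
  have e : ENNReal.ofReal (2 * C) * (8 * ENNReal.ofReal Real.pi) = ENNReal.ofReal (2 * C * (8 * Real.pi)) := by
    rw [ENNReal.ofReal_mul (p := 2 * C) (q := 8 * Real.pi) (by positivity),
      ENNReal.ofReal_mul (p := 8) (by norm_num : (0:ℝ) ≤ 8), ENNReal.ofReal_ofNat]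
  rw [e] at s1 s2 s3 s4
  rw [ENNReal.ofReal_pow (by positivity)]
  refine s4.trans ((mul_le_mul' le_rfl (s3.trans (mul_le_mul' le_rfl (s2.trans (mul_le_mul' le_rfl s1))))).trans (le_of_eq ?_))
  ring

lemma S_bound (χ : 𝓢(ℝ, ℝ)) (C : ℝ) (hC : 0 < C) (hχ : ∀ a, |χ a| ≤ C / (1 + a ^ 2)) (φ e1 e2 : ℝ → ℝ)
    (h : ℝ × ℝ → ℂ) (hh : Integrable h) (w : ℝ × ℝ) (h1 : e1 w.1 ∈ Ioo (0:ℝ) 1) (h2 : e1 w.2 ∈ Ioo (0:ℝ) 1)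
    (h3 : e2 w.1 ∈ Ioo (0:ℝ) 1) (h4 : e2 w.2 ∈ Ioo (0:ℝ) 1) :
    ‖∫ ζ, h ζ * Phi χ φ e1 e2 w ζ‖ₑ ≤ TT C (fun w => ‖FT2 h w‖ₑ) (PP φ w) := by
  have hf : Measurable (fun w => ‖FT2 h w‖ₑ) := (FT2_continuous h hh).measurable.enorm
  have m1 := (M1_meas hf).const_mul (ENNReal.ofReal (2 * C))
  have m2 := (M1_meas m1).const_mul (ENNReal.ofReal (2 * C))
  have m3 := (M2_meas m2).const_mul (ENNReal.ofReal (2 * C))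
  have i1 := factor_int χ h hh (fun ζ => e1 w.1 * ζ.1) (by fun_prop)
  have i2 := factor_int χ _ i1 (fun ζ => e1 w.2 * ζ.1) (by fun_prop)
  have i3 := factor_int χ _ i2 (fun ζ => e2 w.1 * ζ.2) (by fun_prop)
  have s1 := factor1 χ C hC hχ h hh _ hf (fun w => le_rfl) (e1 w.1) h1
  have s2 := factor1 χ C hC hχ _ i1 _ m1 s1 (e1 w.2) h2
  have s3 := factor2 χ C hC hχ _ i2 _ m2 s2 (e2 w.1) h3
  have s4 := factor2 χ C hC hχ _ i3 _ m3 s3 (e2 w.2) h4 (PP φ w)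
  refine le_trans (le_of_eq ?_) s4
  unfold FT2 Phi
  congr 2; ext ζ; ring


/-- The weighted measure on ordered pairs. -/
noncomputable def mm (a b : ℝ) (ψ κ : ℝ → ℝ) : Measure (ℝ × ℝ) :=
  (volume.restrict (XX a b κ)).withDensity (fun w => ENNReal.ofReal (ψ w.2 - ψ w.1))

instance (a b : ℝ) (ψ κ : ℝ → ℝ) : SFinite (mm a b ψ κ) := by unfold mm; infer_instance

lemma L2_bound (χ : 𝓢(ℝ, ℝ)) (C : ℝ) (hC : 0 < C) (hχ : ∀ a, |χ a| ≤ C / (1 + a ^ 2))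
    (a b : ℝ) (φ ψ κ : ℝ → ℝ) (hφm : Measurable φ) (hψm : Measurable ψ) (hκm : Measurable κ)
    (hφ : ∀ x ∈ Ioo a b, HasDerivAt φ (ψ x) x) (hψ : ∀ x ∈ Ioo a b, HasDerivAt ψ (κ x) x)
    (hκ : ∀ x ∈ Ioo a b, 0 ≤ κ x) (e1 e2 : ℝ → ℝ) (hm1 : Measurable e1) (hm2 : Measurable e2)
    (he1 : ∀ x ∈ Ioo a b, e1 x ∈ Ioo (0 : ℝ) 1) (he2 : ∀ x ∈ Ioo a b, e2 x ∈ Ioo (0 : ℝ) 1)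
    (G : ℝ × ℝ → ℂ) (hG : Measurable G) (hGi : Integrable G (mm a b ψ κ)) :
    ∫⁻ ζ, ‖∫ w, G w * Phi χ φ e1 e2 w ζ ∂(mm a b ψ κ)‖ₑ ^ 2 ≤
      ENNReal.ofReal ((2 * C * (8 * Real.pi)) ^ 8 * (2 * (2 * Real.pi) ^ 2)) * ∫⁻ w, ‖G w‖ₑ ^ 2 ∂(mm a b ψ κ) := by
  set m := mm a b ψ κ with hmdef
  set B := ((∫ u, |χ u|) + 1) ^ 4 with hB
  have hΦ := Phi_meas χ φ e1 e2 hφm hm1 hm2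
  set E : ℝ × ℝ → ℂ := fun ζ => ∫ w, G w * Phi χ φ e1 e2 w ζ ∂m with hE
  have hEm : Measurable E := by
    have : StronglyMeasurable (fun q : (ℝ × ℝ) × (ℝ × ℝ) => G q.1 * Phi χ φ e1 e2 q.1 q.2) :=
      ((hG.comp measurable_fst).mul hΦ).stronglyMeasurable
    exact this.integral_prod_left'.measurable
  have hEb : ∀ ζ, ‖E ζ‖ ≤ (∫ w, ‖G w‖ ∂m) * B := by
    intro ζ
    refine (norm_integral_le_integral_norm _).trans ?_
    rw [← integral_mul_const]
    refine integral_mono_of_nonneg (Filter.Eventually.of_forall fun _ => norm_nonneg _) (hGi.norm.mul_const _)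
      (Filter.Eventually.of_forall fun w => ?_)
    simp only [norm_mul]
    exact mul_le_mul_of_nonneg_left (Phi_bound _ _ _ _ _ _) (norm_nonneg _)
  refine lintegral_le_of_forall_fin_meas_le _ fun Q hQ hQf => ?_
  set h : ℝ × ℝ → ℂ := Q.indicator (fun ζ => (starRingEnd ℂ) (E ζ)) with hh
  have hhm : Measurable h := (Complex.continuous_conj.measurable.comp hEm).indicator hQ
  have hhi : Integrable h := by
    rw [hh, integrable_indicator_iff hQ]
    refine Measure.integrableOn_of_bounded (M := (∫ w, ‖G w‖ ∂m) * B) hQf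
      (Complex.continuous_conj.measurable.comp hEm).aestronglyMeasurable ?_
    refine Filter.Eventually.of_forall fun ζ => ?_
    rw [RCLike.norm_conj]; exact hEb ζ
  set T := ∫⁻ ζ in Q, ‖E ζ‖ₑ ^ 2 with hT
  have hTh : ∫⁻ ζ, ‖h ζ‖ₑ ^ 2 = T := by
    rw [hT, ← lintegral_indicator hQ]
    congr 1; ext ζ
    by_cases hz : ζ ∈ Q <;> simp [hh, hz]
  have hTfin : T ≠ ⊤ := by
    have : T ≤ ∫⁻ ζ in Q, ENNReal.ofReal ((∫ w, ‖G w‖ ∂m) * B) ^ 2 := by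
      refine lintegral_mono fun ζ => ?_
      rw [← ofReal_norm]
      gcongr; exact hEb ζ
    refine ne_top_of_le_ne_top ?_ this
    rw [setLIntegral_const]
    exact ENNReal.mul_ne_top (by finiteness) hQf
  -- duality
  have hprod : Integrable (Function.uncurry fun (ζ w : ℝ × ℝ) => h ζ * (G w * Phi χ φ e1 e2 w ζ)) (volume.prod m) := by
    have h2 := (hhi.mul_prod hGi).mul_bdd (c := B) (g := fun q : (ℝ × ℝ) × (ℝ × ℝ) => Phi χ φ e1 e2 q.2 q.1)
      (hΦ.comp measurable_swap).aestronglyMeasurable (Filter.Eventually.of_forall fun q => Phi_bound _ _ _ _ _ _)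
    refine h2.congr (Filter.Eventually.of_forall fun q => ?_)
    simp only [Function.uncurry]; ring
  have hdual : T ≤ ∫⁻ w, ‖G w‖ₑ * ‖∫ ζ, h ζ * Phi χ φ e1 e2 w ζ‖ₑ ∂m := by
    have e1' : ∫ ζ, h ζ * E ζ = ∫ w, G w * (∫ ζ, h ζ * Phi χ φ e1 e2 w ζ) ∂m := by
      have := integral_integral_swap hprod
      calc _ = ∫ ζ, ∫ w, h ζ * (G w * Phi χ φ e1 e2 w ζ) ∂m := by
            congr 1; ext ζ; rw [integral_const_mul]
        _ = _ := this
        _ = _ := by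
            congr 1; ext w
            rw [← integral_const_mul]; congr 1; ext ζ; ring
    have e2' : ∀ ζ, h ζ * E ζ = ((Q.indicator (fun ζ => ‖E ζ‖ ^ 2) ζ : ℝ) : ℂ) := by
      intro ζ
      by_cases hz : ζ ∈ Q
      · simp only [hh, indicator_of_mem hz]
        rw [mul_comm, Complex.mul_conj, Complex.normSq_eq_norm_sq]
      · simp [hh, hz]
    have hInt : Integrable (fun ζ => Q.indicator (fun ζ => ‖E ζ‖ ^ 2) ζ) := by
      rw [integrable_indicator_iff hQ]
      refine Measure.integrableOn_of_bounded (M := ((∫ w, ‖G w‖ ∂m) * B) ^ 2) hQf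
        (hEm.norm.pow_const 2).aestronglyMeasurable ?_
      refine Filter.Eventually.of_forall fun ζ => ?_
      rw [Real.norm_of_nonneg (by positivity)]
      gcongr; exact hEb ζ
    have e3 : T = ‖∫ ζ, h ζ * E ζ‖ₑ := by
      simp_rw [e2']
      rw [integral_complex_ofReal, ← ofReal_norm, Complex.norm_real, Real.norm_eq_abs, abs_of_nonneg, 
        ofReal_integral_eq_lintegral_ofReal hInt, hT, ← lintegral_indicator hQ]
      · congr 1; ext ζ
        by_cases hz : ζ ∈ Q
        · simp only [indicator_of_mem hz]
          rw [← ofReal_norm, ENNReal.ofReal_pow (norm_nonneg _)]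
        · simp [hz]
      · exact Filter.Eventually.of_forall fun ζ => indicator_nonneg (fun _ _ => by positivity) _
      · exact integral_nonneg fun ζ => indicator_nonneg (fun _ _ => by positivity) _
    rw [e3, e1']
    refine (enorm_integral_le_lintegral_enorm _).trans (le_of_eq ?_)
    simp_rw [enorm_mul]
  set K : ℝ := (2 * C * (8 * Real.pi)) ^ 8 * (2 * (2 * Real.pi) ^ 2) with hK
  have hK0 : 0 < K := by positivity
  have hf : Measurable (fun w => ‖FT2 h w‖ₑ) := (FT2_continuous h hhi).measurable.enorm
  have hTTm := TT_meas C hf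
  have hPPm : Measurable (PP φ) := by unfold PP; fun_prop
  have hS : ∫⁻ w, ‖∫ ζ, h ζ * Phi χ φ e1 e2 w ζ‖ₑ ^ 2 ∂m ≤ ENNReal.ofReal K * T := by
    calc _ ≤ ∫⁻ w, TT C (fun w => ‖FT2 h w‖ₑ) (PP φ w) ^ 2 ∂m := by
          refine lintegral_mono_ae ?_
          have : ∀ᵐ w ∂m, w ∈ XX a b κ :=
            (withDensity_absolutelyContinuous _ _).ae_le (ae_restrict_mem (XX_meas a b κ hκm))
          filter_upwards [this] with w hw
          gcongr
          exact S_bound χ C hC hχ φ e1 e2 h hhi w (he1 _ hw.1.1) (he1 _ hw.2.1.1) (he2 _ hw.1.1) (he2 _ hw.2.1.1)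
      _ = ∫⁻ w in XX a b κ, ENNReal.ofReal (ψ w.2 - ψ w.1) * TT C (fun w => ‖FT2 h w‖ₑ) (PP φ w) ^ 2 := by
          have hcm : Measurable (fun w => TT C (fun w => ‖FT2 h w‖ₑ) (PP φ w) ^ 2) := (hTTm.comp hPPm).pow_const 2
          rw [hmdef, mm, lintegral_withDensity_eq_lintegral_mul _ (by fun_prop) hcm]
          rfl
      _ ≤ ∫⁻ z, TT C (fun w => ‖FT2 h w‖ₑ) z ^ 2 :=
          cov2 a b φ ψ κ hκm hφ hψ hκ (fun z => TT C (fun w => ‖FT2 h w‖ₑ) z ^ 2)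
      _ ≤ _ := TT_bound C hC hf
      _ ≤ _ := mul_le_mul' le_rfl (FT2_plancherel h hhi)
      _ = _ := by
          rw [hTh, hK, ENNReal.ofReal_mul (p := (2 * C * (8 * Real.pi)) ^ 8) (by positivity), ENNReal.ofReal_mul (p := 2) (by norm_num), ENNReal.ofReal_ofNat]
          ring
  set k := Real.sqrt K with hk
  have hk0 : 0 < k := Real.sqrt_pos.2 hK0
  have hkk : ENNReal.ofReal k ^ 2 = ENNReal.ofReal K := by
    rw [← ENNReal.ofReal_pow hk0.le, Real.sq_sqrt hK0.le]
  have hkinv : ENNReal.ofReal k * ENNReal.ofReal k⁻¹ = 1 := by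
    rw [← ENNReal.ofReal_mul hk0.le, mul_inv_cancel₀ hk0.ne', ENNReal.ofReal_one]
  have hSm : Measurable (fun w => ∫ ζ, h ζ * Phi χ φ e1 e2 w ζ) := by
    have : StronglyMeasurable (fun q : (ℝ × ℝ) × (ℝ × ℝ) => h q.2 * Phi χ φ e1 e2 q.1 q.2) :=
      ((hhm.comp measurable_snd).mul hΦ).stronglyMeasurable
    exact this.integral_prod_right'.measurable
  have h2T : 2 * T ≤ ENNReal.ofReal K * (∫⁻ w, ‖G w‖ₑ ^ 2 ∂m) + T := by
    calc 2 * T ≤ 2 * ∫⁻ w, ‖G w‖ₑ * ‖∫ ζ, h ζ * Phi χ φ e1 e2 w ζ‖ₑ ∂m := mul_le_mul' le_rfl hdual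
      _ = ∫⁻ w, 2 * (‖G w‖ₑ * ‖∫ ζ, h ζ * Phi χ φ e1 e2 w ζ‖ₑ) ∂m := by
          rw [lintegral_const_mul]
          have := hSm.enorm
          exact hG.enorm.mul this
      _ ≤ ∫⁻ w, (ENNReal.ofReal K * ‖G w‖ₑ ^ 2 + ENNReal.ofReal k⁻¹ ^ 2 * ‖∫ ζ, h ζ * Phi χ φ e1 e2 w ζ‖ₑ ^ 2) ∂m := by
          refine lintegral_mono fun w => ?_
          have := enn_two_mul_le (ENNReal.ofReal k * ‖G w‖ₑ) (ENNReal.ofReal k⁻¹ * ‖∫ ζ, h ζ * Phi χ φ e1 e2 w ζ‖ₑ)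
          rw [mul_pow, mul_pow, hkk] at this
          refine le_trans (le_of_eq ?_) this
          rw [mul_mul_mul_comm, hkinv, one_mul]
      _ = ENNReal.ofReal K * (∫⁻ w, ‖G w‖ₑ ^ 2 ∂m) + ENNReal.ofReal k⁻¹ ^ 2 * ∫⁻ w, ‖∫ ζ, h ζ * Phi χ φ e1 e2 w ζ‖ₑ ^ 2 ∂m := by
          rw [lintegral_add_left (by fun_prop), lintegral_const_mul _ (by fun_prop), lintegral_const_mul _ (hSm.enorm.pow_const 2)]
      _ ≤ ENNReal.ofReal K * (∫⁻ w, ‖G w‖ₑ ^ 2 ∂m) + ENNReal.ofReal k⁻¹ ^ 2 * (ENNReal.ofReal K * T) :=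
          add_le_add le_rfl (mul_le_mul' le_rfl hS)
      _ = _ := by
          rw [← hkk, ← mul_assoc, ← mul_pow, mul_comm (ENNReal.ofReal k⁻¹), hkinv, one_pow, one_mul]
  rw [two_mul] at h2T
  exact (ENNReal.add_le_add_iff_right hTfin).1 h2T


lemma sq_int (u : ℝ → ℂ) (hu : Integrable u) :
    (∫ x, u x) ^ 2 = 2 * ∫ w in {w : ℝ × ℝ | w.1 < w.2}, u w.1 * u w.2 := by
  have hi : Integrable (fun w : ℝ × ℝ => u w.1 * u w.2) (volume.prod volume) := hu.mul_prod hu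
  have hS : MeasurableSet {w : ℝ × ℝ | w.1 < w.2} := measurableSet_lt measurable_fst measurable_snd
  have hS2 : MeasurableSet {w : ℝ × ℝ | w.2 < w.1} := measurableSet_lt measurable_snd measurable_fst
  have hdiag : (volume : Measure (ℝ × ℝ)) {w : ℝ × ℝ | w.1 = w.2} = 0 := by
    rw [Measure.volume_eq_prod, Measure.measure_prod_null (measurableSet_eq_fun measurable_fst measurable_snd)]
    refine Filter.Eventually.of_forall fun x => ?_
    have : (Prod.mk x ⁻¹' {w : ℝ × ℝ | w.1 = w.2}) = {x} := by
      ext y; simp [eq_comm]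
    simp [this]
  have h1 : ∫ w in {w : ℝ × ℝ | w.1 < w.2}ᶜ, u w.1 * u w.2 = ∫ w in {w : ℝ × ℝ | w.2 < w.1}, u w.1 * u w.2 := by
    apply setIntegral_congr_set
    rw [Filter.eventuallyEq_set]
    have : ∀ᵐ w : ℝ × ℝ, ¬ (w.1 = w.2) := by rw [ae_iff]; simpa using hdiag
    filter_upwards [this] with w hw
    simp only [mem_compl_iff, mem_setOf_eq, not_lt]
    exact ⟨fun h => lt_of_le_of_ne h (Ne.symm hw), le_of_lt⟩
  have h2 : ∫ w in {w : ℝ × ℝ | w.2 < w.1}, u w.1 * u w.2 = ∫ w in {w : ℝ × ℝ | w.1 < w.2}, u w.1 * u w.2 := by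
    have := (Measure.measurePreserving_swap (μ := (volume : Measure ℝ)) (ν := (volume : Measure ℝ))).setIntegral_preimage_emb
      MeasurableEquiv.prodComm.measurableEmbedding (fun w : ℝ × ℝ => u w.1 * u w.2) {w : ℝ × ℝ | w.1 < w.2}
    rw [Measure.volume_eq_prod, ← this]
    congr 1; ext w; simp [mul_comm]
  have h3 := integral_add_compl hS hi
  rw [← Measure.volume_eq_prod, h1, h2] at h3
  rw [sq, ← integral_prod_mul, ← Measure.volume_eq_prod, ← h3]
  ring

/-- The weight of a pair divided by the Jacobian. -/
noncomputable def Gf (ψ κ : ℝ → ℝ) (g : ℝ → ℂ) (w : ℝ × ℝ) : ℂ :=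
  g w.1 * g w.2 * ((κ w.1 ^ ((1:ℝ)/3) * κ w.2 ^ ((1:ℝ)/3) : ℝ) : ℂ) / ((ψ w.2 - ψ w.1 : ℝ) : ℂ)

lemma Gf_meas (ψ κ : ℝ → ℝ) (g : ℝ → ℂ) (hψ : Measurable ψ) (hκ : Measurable κ) (hg : Measurable g) :
    Measurable (Gf ψ κ g) := by
  unfold Gf; fun_prop

lemma Gr_pt (ψx ψy kx ky gx gy r : ℝ) (hx : 0 < kx) (hy : 0 < ky) (hJ : ψx < ψy) (hgx : 0 ≤ gx) (hgy : 0 ≤ gy) :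
    (ψy - ψx) * (gx * gy * (kx ^ ((1:ℝ)/3) * ky ^ ((1:ℝ)/3)) / (ψy - ψx)) ^ r =
      kx * (ky * ((gx ^ r * kx ^ (r / 3 - 1)) * ((gy ^ r * ky ^ (r / 3 - 1)) * |ψx - ψy| ^ (-(r - 1))))) := by
  have hJ0 : 0 < ψy - ψx := by linarith
  rw [abs_sub_comm, abs_of_pos hJ0, Real.div_rpow (by positivity) hJ0.le, Real.mul_rpow (by positivity) (by positivity),
    Real.mul_rpow hgx hgy, Real.mul_rpow (by positivity) (by positivity), ← Real.rpow_mul hx.le, ← Real.rpow_mul hy.le,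
    Real.rpow_sub_one hx.ne', Real.rpow_sub_one hy.ne', Real.rpow_neg hJ0.le, Real.rpow_sub_one hJ0.ne',
    show (1:ℝ) / 3 * r = r / 3 by ring]
  field_simp

lemma Gr_bound (a b : ℝ) (ψ κ : ℝ → ℝ) (hψm : Measurable ψ) (hκm : Measurable κ)
    (hψ : ∀ x ∈ Ioo a b, HasDerivAt ψ (κ x) x)
    (hκ : ∀ x ∈ Ioo a b, 0 ≤ κ x) (g : ℝ → ℂ) (hg : Measurable g) (r : ℝ) (h1 : 1 < r) (h2 : r < 2) :
    ∫⁻ w, ‖Gf ψ κ g w‖ₑ ^ r ∂(mm a b ψ κ) ≤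
      ENNReal.ofReal (2 * (2 / (1 - (r - 1)) + 2 ^ ((r - 1) / 2))) *
        (∫⁻ x in Ioo a b, ‖g x‖ₑ ^ (2 * r / (3 - r)) * ENNReal.ofReal (κ x ^ ((1:ℝ)/3))) ^ (3 - r) := by
  have hGm := Gf_meas ψ κ g hψm hκm hg
  have hKm := KK_meas a b κ hκm
  set f : ℝ → ℝ := fun x => ‖g x‖ ^ r * |κ x| ^ (r / 3 - 1) with hf
  have hfm : Measurable f := by fun_prop
  have hf0 : ∀ x, 0 ≤ f x := fun x => by positivity
  set ν : Measure ℝ := (volume.restrict (KK a b κ)).withDensity (fun x => ENNReal.ofReal (κ x)) with hν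
  have hνs : SFinite ν := by rw [hν]; infer_instance
  have hκe : Measurable (fun x => ENNReal.ofReal (κ x)) := hκm.ennreal_ofReal
  have hνint : ∀ h : ℝ → ℝ≥0∞, Measurable h → ∫⁻ x, h x ∂ν = ∫⁻ x in KK a b κ, ENNReal.ofReal (κ x) * h x := by
    intro h hh
    rw [hν, lintegral_withDensity_eq_lintegral_mul _ hκe hh]; rfl
  have hls := hls ν ψ hψm (fun G hG => by
      rw [hνint (fun y => G (ψ y)) (hG.comp hψm)]
      exact cov1 a b ψ κ hκm hψ hκ G) (r - 1) (by linarith) (by linarith) f hfm hf0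
  rw [show 2 - (r - 1) = 3 - r by ring] at hls
  have hkm : Measurable (fun q : ℝ × ℝ => ENNReal.ofReal (f q.1 * (f q.2 * |ψ q.1 - ψ q.2| ^ (-(r - 1))))) := by fun_prop
  have hfin : ∫⁻ y, ENNReal.ofReal (f y ^ (2 / (3 - r))) ∂ν ≤
      ∫⁻ x in Ioo a b, ‖g x‖ₑ ^ (2 * r / (3 - r)) * ENNReal.ofReal (κ x ^ ((1:ℝ)/3)) := by
    rw [hνint _ (by fun_prop)]
    refine le_trans (le_of_eq ?_) (lintegral_mono_set (s := KK a b κ) fun x hx => hx.1)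
    refine setLIntegral_congr_fun hKm fun x hx => ?_
    have hx0 := hx.2
    have h3 : 0 < 3 - r := by linarith
    rw [← ofReal_norm, ENNReal.ofReal_rpow_of_nonneg (norm_nonneg _) (by positivity), ← ENNReal.ofReal_mul hx0.le,
      ← ENNReal.ofReal_mul (by positivity)]
    congr 1
    simp only [hf]
    rw [abs_of_pos hx0, Real.mul_rpow (by positivity) (by positivity), ← Real.rpow_mul (norm_nonneg _), ← Real.rpow_mul hx0.le,
      show r * (2 / (3 - r)) = 2 * r / (3 - r) by ring, mul_left_comm]
    congr 1
    rw [mul_comm, ← Real.rpow_add_one hx0.ne']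
    congr 1; field_simp; ring
  refine le_trans ?_ (hls.trans (mul_le_mul' le_rfl (ENNReal.rpow_le_rpow hfin (by linarith))))
  calc _ = ∫⁻ w in XX a b κ, ENNReal.ofReal (ψ w.2 - ψ w.1) * ‖Gf ψ κ g w‖ₑ ^ r := by
        rw [mm, lintegral_withDensity_eq_lintegral_mul _ (by fun_prop) (by fun_prop)]; rfl
    _ = ∫⁻ w in XX a b κ, ENNReal.ofReal (κ w.1) * (ENNReal.ofReal (κ w.2) * 
          ENNReal.ofReal (f w.1 * (f w.2 * |ψ w.1 - ψ w.2| ^ (-(r - 1))))) := by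
        refine setLIntegral_congr_fun (XX_meas a b κ hκm) fun w hw => ?_
        have i3 := psi_lt a b ψ κ hψ hκ hw.1 hw.2.1.1 hw.2.2
        have k1 := hw.1.2
        have k2 := hw.2.1.2
        rw [← ofReal_norm, ENNReal.ofReal_rpow_of_nonneg (norm_nonneg _) (by positivity), ← ENNReal.ofReal_mul (by linarith),
          ← ENNReal.ofReal_mul k2.le, ← ENNReal.ofReal_mul k1.le]
        congr 1
        simp only [hf, abs_of_pos k1, abs_of_pos k2]
        rw [← Gr_pt (ψ w.1) (ψ w.2) (κ w.1) (κ w.2) ‖g w.1‖ ‖g w.2‖ r k1 k2 i3 (norm_nonneg _) (norm_nonneg _)]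
        congr 2
        unfold Gf
        rw [norm_div, norm_mul, norm_mul, Complex.norm_real, Complex.norm_real, Real.norm_of_nonneg (by positivity),
          Real.norm_of_nonneg (by linarith)]
    _ ≤ ∫⁻ w in KK a b κ ×ˢ KK a b κ, ENNReal.ofReal (κ w.1) * (ENNReal.ofReal (κ w.2) * 
          ENNReal.ofReal (f w.1 * (f w.2 * |ψ w.1 - ψ w.2| ^ (-(r - 1))))) :=
        lintegral_mono_set fun w hw => ⟨hw.1, hw.2.1⟩
    _ = ∫⁻ x in KK a b κ, ∫⁻ y in KK a b κ, ENNReal.ofReal (κ x) * (ENNReal.ofReal (κ y) * 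
          ENNReal.ofReal (f x * (f y * |ψ x - ψ y| ^ (-(r - 1))))) := by
        rw [Measure.volume_eq_prod, ← Measure.prod_restrict, lintegral_prod _ (by fun_prop)]
    _ = _ := by
        rw [hνint _ hkm.lintegral_prod_right']
        congr 1; ext x
        rw [lintegral_const_mul _ (by fun_prop), hνint _ (by fun_prop)]


lemma mm_integral (a b : ℝ) (ψ κ : ℝ → ℝ) (hψm : Measurable ψ) (hκm : Measurable κ)
    (hψ : ∀ x ∈ Ioo a b, HasDerivAt ψ (κ x) x)
    (hκ : ∀ x ∈ Ioo a b, 0 ≤ κ x) (H : ℝ × ℝ → ℂ) :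
    ∫ w, H w ∂(mm a b ψ κ) = ∫ w in XX a b κ, ((ψ w.2 - ψ w.1 : ℝ) : ℂ) * H w := by
  rw [mm, integral_withDensity_eq_integral_toReal_smul (by fun_prop) (Filter.Eventually.of_forall fun _ => ENNReal.ofReal_lt_top)]
  refine setIntegral_congr_fun (XX_meas a b κ hκm) fun w hw => ?_
  have i3 := psi_lt a b ψ κ hψ hκ hw.1 hw.2.1.1 hw.2.2
  rw [ENNReal.toReal_ofReal (by linarith), Complex.real_smul]

/-- The one-variable kernel. -/
noncomputable def UU (χ : 𝓢(ℝ, ℝ)) (φ e1 e2 : ℝ → ℝ) (ζ : ℝ × ℝ) (x : ℝ) : ℂ :=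
  hat χ (e1 x * ζ.1) * hat χ (e2 x * ζ.2) * Complex.exp (Complex.I * (ζ.1 * x + ζ.2 * φ x))

lemma UU_meas (χ : 𝓢(ℝ, ℝ)) (φ e1 e2 : ℝ → ℝ) (hφ : Measurable φ) (h1 : Measurable e1) (h2 : Measurable e2) (ζ : ℝ × ℝ) :
    Measurable (UU χ φ e1 e2 ζ) := by
  have := (hat_cont χ).measurable
  unfold UU
  fun_prop

lemma UU_bound (χ : 𝓢(ℝ, ℝ)) (φ e1 e2 : ℝ → ℝ) (ζ : ℝ × ℝ) (x : ℝ) :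
    ‖UU χ φ e1 e2 ζ x‖ ≤ ((∫ u, |χ u|) + 1) ^ 2 := by
  unfold UU
  have h0 : 0 ≤ ∫ u, |χ u| := integral_nonneg fun u => abs_nonneg _
  rw [norm_mul, norm_phase ζ (x, φ x), mul_one, norm_mul, sq]
  gcongr <;> exact hat_bound χ _

lemma UU_mul (χ : 𝓢(ℝ, ℝ)) (φ e1 e2 : ℝ → ℝ) (ζ w : ℝ × ℝ) :
    UU χ φ e1 e2 ζ w.1 * UU χ φ e1 e2 ζ w.2 = Phi χ φ e1 e2 w ζ := by
  unfold UU Phi PP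
  push_cast
  rw [show Complex.I * ((ζ.1 : ℂ) * (w.1 + w.2) + ζ.2 * (φ w.1 + φ w.2)) = Complex.I * (ζ.1 * w.1 + ζ.2 * φ w.1) +
    Complex.I * (ζ.1 * w.2 + ζ.2 * φ w.2) by ring, Complex.exp_add]
  ring

lemma square_id (χ : 𝓢(ℝ, ℝ))
    (a b : ℝ) (φ ψ κ : ℝ → ℝ) (hφm : Measurable φ) (hψm : Measurable ψ) (hκm : Measurable κ)
    (hψ : ∀ x ∈ Ioo a b, HasDerivAt ψ (κ x) x)
    (hκ : ∀ x ∈ Ioo a b, 0 ≤ κ x) (e1 e2 : ℝ → ℝ) (hm1 : Measurable e1) (hm2 : Measurable e2)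
    (g : ℝ → ℂ) (hgi : IntegrableOn (fun x => g x * ((κ x ^ ((1:ℝ)/3) : ℝ) : ℂ)) (Ioo a b)) (ζ : ℝ × ℝ) :
    (∫ x in Ioo a b, UU χ φ e1 e2 ζ x * g x * ((κ x ^ ((1:ℝ)/3) : ℝ) : ℂ)) ^ 2 =
      2 * ∫ w, Gf ψ κ g w * Phi χ φ e1 e2 w ζ ∂(mm a b ψ κ) := by
  have hKm := KK_meas a b κ hκm
  set u : ℝ → ℂ := (KK a b κ).indicator (fun x => UU χ φ e1 e2 ζ x * g x * ((κ x ^ ((1:ℝ)/3) : ℝ) : ℂ)) with hu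
  have hu1 : ∫ x in Ioo a b, UU χ φ e1 e2 ζ x * g x * ((κ x ^ ((1:ℝ)/3) : ℝ) : ℂ) = ∫ x, u x := by
    rw [← integral_indicator measurableSet_Ioo]
    congr 1; ext x
    by_cases hx : x ∈ KK a b κ
    · rw [hu, indicator_of_mem hx, indicator_of_mem hx.1]
    · rw [hu, indicator_of_notMem hx]
      by_cases hxI : x ∈ Ioo a b
      · have : κ x = 0 := le_antisymm (not_lt.1 fun h => hx ⟨hxI, h⟩) (hκ x hxI)
        rw [indicator_of_mem hxI, this, Real.zero_rpow (by norm_num)]; simp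
      · rw [indicator_of_notMem hxI]
  have hui : Integrable u := by
    rw [hu, integrable_indicator_iff hKm]
    have := (hgi.mono_set (s := KK a b κ) fun x hx => hx.1).bdd_mul (c := ((∫ u, |χ u|) + 1) ^ 2)
      (UU_meas χ φ e1 e2 hφm hm1 hm2 ζ).aestronglyMeasurable (Filter.Eventually.of_forall fun x => UU_bound χ φ e1 e2 ζ x)
    refine this.congr (Filter.Eventually.of_forall fun x => ?_)
    simp only; ring
  rw [hu1, sq_int u hui, mm_integral a b ψ κ hψm hκm hψ hκ]
  congr 1
  rw [← integral_indicator (measurableSet_lt measurable_fst measurable_snd), ← integral_indicator (XX_meas a b κ hκm)]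
  congr 1; ext w
  by_cases hw : w ∈ XX a b κ
  · have i3 := psi_lt a b ψ κ hψ hκ hw.1 hw.2.1.1 hw.2.2
    rw [indicator_of_mem hw, indicator_of_mem (by exact hw.2.2), hu, indicator_of_mem hw.1, indicator_of_mem hw.2.1, ← UU_mul, Gf]
    have : ((ψ w.2 - ψ w.1 : ℝ) : ℂ) ≠ 0 := by exact_mod_cast (sub_pos.2 i3).ne'
    rw [div_mul_eq_mul_div, mul_div_cancel₀ _ this]
    push_cast; ring
  · rw [indicator_of_notMem hw]
    by_cases hlt : w.1 < w.2
    · rw [indicator_of_mem (by exact hlt)]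
      by_cases h1 : w.1 ∈ KK a b κ
      · have h2 : w.2 ∉ KK a b κ := fun h2 => hw ⟨h1, h2, hlt⟩
        rw [hu, indicator_of_notMem h2, mul_zero]
      · rw [hu, indicator_of_notMem h1, zero_mul]
    · rw [indicator_of_notMem (by exact hlt)]

lemma Gf_integrable (a b : ℝ) (ψ κ : ℝ → ℝ) (hψm : Measurable ψ) (hκm : Measurable κ)
    (hψ : ∀ x ∈ Ioo a b, HasDerivAt ψ (κ x) x)
    (hκ : ∀ x ∈ Ioo a b, 0 ≤ κ x) 
    (g : ℝ → ℂ) (hgi : IntegrableOn (fun x => g x * ((κ x ^ ((1:ℝ)/3) : ℝ) : ℂ)) (Ioo a b)) :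
    Integrable (Gf ψ κ g) (mm a b ψ κ) := by
  rw [mm, integrable_withDensity_iff_integrable_smul' (by fun_prop) (Filter.Eventually.of_forall fun _ => ENNReal.ofReal_lt_top)]
  have h1 : Integrable (fun w : ℝ × ℝ => (g w.1 * ((κ w.1 ^ ((1:ℝ)/3) : ℝ) : ℂ)) * (g w.2 * ((κ w.2 ^ ((1:ℝ)/3) : ℝ) : ℂ)))
      ((volume.restrict (Ioo a b)).prod (volume.restrict (Ioo a b))) := hgi.mul_prod hgi
  rw [Measure.prod_restrict, ← Measure.volume_eq_prod] at h1
  have h2 : IntegrableOn (fun w : ℝ × ℝ => (g w.1 * ((κ w.1 ^ ((1:ℝ)/3) : ℝ) : ℂ)) * (g w.2 * ((κ w.2 ^ ((1:ℝ)/3) : ℝ) : ℂ)))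
      (XX a b κ) := IntegrableOn.mono_set h1 fun w hw => ⟨hw.1.1, hw.2.1.1⟩
  refine IntegrableOn.congr_fun h2 (fun w hw => ?_) (XX_meas a b κ hκm)
  have i3 := psi_lt a b ψ κ hψ hκ hw.1 hw.2.1.1 hw.2.2
  have : ((ψ w.2 - ψ w.1 : ℝ) : ℂ) ≠ 0 := by exact_mod_cast (sub_pos.2 i3).ne'
  rw [ENNReal.toReal_ofReal (by linarith), Complex.real_smul, Gf, mul_div_cancel₀ _ this]
  push_cast; ring

lemma core (χ : 𝓢(ℝ, ℝ)) 
    (a b : ℝ) (φ ψ κ : ℝ → ℝ) (hφm : Measurable φ) (hψm : Measurable ψ) (hκm : Measurable κ)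
    (hφ : ∀ x ∈ Ioo a b, HasDerivAt φ (ψ x) x) (hψ : ∀ x ∈ Ioo a b, HasDerivAt ψ (κ x) x)
    (hκ : ∀ x ∈ Ioo a b, 0 ≤ κ x) (s r : ℝ) (hs : 2 < s) (hr : r = s / (s - 1)) :
    ∃ C0 : ℝ, 0 < C0 ∧ ∀ (e1 e2 : ℝ → ℝ), Measurable e1 → Measurable e2 →
    (∀ x ∈ Ioo a b, e1 x ∈ Ioo (0 : ℝ) 1) → (∀ x ∈ Ioo a b, e2 x ∈ Ioo (0 : ℝ) 1) →
    ∀ g : ℝ → ℂ, Measurable g → IntegrableOn (fun x => g x * ((κ x ^ ((1:ℝ)/3) : ℝ) : ℂ)) (Ioo a b) →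
    ∫⁻ ζ, ‖∫ x in Ioo a b, UU χ φ e1 e2 ζ x * g x * ((κ x ^ ((1:ℝ)/3) : ℝ) : ℂ)‖ₑ ^ (2 * s) ≤
      ENNReal.ofReal C0 * (∫⁻ x in Ioo a b, ‖g x‖ₑ ^ (2 * r / (3 - r)) * ENNReal.ofReal (κ x ^ ((1:ℝ)/3))) ^ ((3 - r) * (s - 1)) := by
  obtain ⟨C, hC, hχ⟩ := chi_decay χ
  have h1 : 1 < r := by rw [hr, lt_div_iff₀ (by linarith)]; linarith
  have h2 : r < 2 := by rw [hr, div_lt_iff₀ (by linarith)]; linarith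
  have hB0 : 0 ≤ ∫ u, |χ u| := integral_nonneg fun u => abs_nonneg _
  set B := ((∫ u, |χ u|) + 1) ^ 4 with hB
  have hBpos : 0 < B := by positivity
  set B2 := ((2 * C * (8 * Real.pi)) ^ 8 * (2 * (2 * Real.pi) ^ 2)) with hB2
  have hB2pos : 0 < B2 := by positivity
  set c1 := s * (4 * B2 * (2 * B) ^ (s - 2) / (s - 2)) with hc1
  have hc1pos : 0 < c1 := by
    have : 0 < s - 2 := by linarith
    positivity
  set c2 := 2 * (2 / (1 - (r - 1)) + 2 ^ ((r - 1) / 2)) with hc2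
  have hc2pos : 0 < c2 := by
    have : 0 < 1 - (r - 1) := by linarith
    positivity
  refine ⟨2 ^ s * (c1 * c2 ^ (s - 1)), by positivity, ?_⟩
  intro e1 e2 hm1 hm2 he1 he2 g hg hgi
  have hGm := Gf_meas ψ κ g hψm hκm hg
  have hGi := Gf_integrable a b ψ κ hψm hκm hψ hκ g hgi
  have hI := interp (mm a b ψ κ) volume (Phi χ φ e1 e2) (Phi_meas χ φ e1 e2 hφm hm1 hm2) B B2 hBpos hB2pos
    (Filter.Eventually.of_forall fun w ζ => Phi_bound χ φ e1 e2 w ζ)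
    (fun G hG hGi => L2_bound χ C hC hχ a b φ ψ κ hφm hψm hκm hφ hψ hκ e1 e2 hm1 hm2 he1 he2 G hG hGi)
    s r hs hr (Gf ψ κ g) hGm hGi
  rw [← hc1] at hI
  have hGr := Gr_bound a b ψ κ hψm hκm hψ hκ g hg r h1 h2
  rw [← hc2] at hGr
  have hpt : ∀ ζ, ‖∫ x in Ioo a b, UU χ φ e1 e2 ζ x * g x * ((κ x ^ ((1:ℝ)/3) : ℝ) : ℂ)‖ₑ ^ (2 * s) =
      ENNReal.ofReal (2 ^ s) * ‖∫ w, Gf ψ κ g w * Phi χ φ e1 e2 w ζ ∂(mm a b ψ κ)‖ₑ ^ s := by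
    intro ζ
    have h := square_id χ a b φ ψ κ hφm hψm hκm hψ hκ e1 e2 hm1 hm2 g hgi ζ
    rw [ENNReal.rpow_mul, show (2:ℝ) = ((2:ℕ):ℝ) by norm_num, ENNReal.rpow_natCast, ← enorm_pow, h, enorm_mul,
      ENNReal.mul_rpow_of_nonneg _ _ (by linarith)]
    congr 1
    rw [← ENNReal.ofReal_rpow_of_pos (by norm_num), ← ofReal_norm]
    simp
  simp_rw [hpt]
  have hEm : Measurable (fun ζ => ∫ w, Gf ψ κ g w * Phi χ φ e1 e2 w ζ ∂(mm a b ψ κ)) := by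
    have : StronglyMeasurable (fun q : (ℝ × ℝ) × (ℝ × ℝ) => Gf ψ κ g q.1 * Phi χ φ e1 e2 q.1 q.2) :=
      ((hGm.comp measurable_fst).mul (Phi_meas χ φ e1 e2 hφm hm1 hm2)).stronglyMeasurable
    exact this.integral_prod_left'.measurable
  rw [lintegral_const_mul _ (hEm.enorm.pow_const s)]
  refine (mul_le_mul' le_rfl (hI.trans (mul_le_mul' le_rfl (ENNReal.rpow_le_rpow hGr (by linarith))))).trans (le_of_eq ?_)
  rw [ENNReal.mul_rpow_of_nonneg _ _ (by linarith), ← ENNReal.rpow_mul, ENNReal.ofReal_rpow_of_pos hc2pos,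
    ENNReal.ofReal_mul (p := 2 ^ s) (by positivity), ENNReal.ofReal_mul (p := c1) (by positivity), mul_assoc, mul_assoc]


lemma exponents (p p' q q' : ℝ≥0∞) (hp1 : 1 < p) (hp : p < 4 / 3)
    (hp' : 1 / p + 1 / p' = 1) (hq : p' = 3 * q) (hq' : 1 / q + 1 / q' = 1) :
    p' ≠ 0 ∧ p' ≠ ⊤ ∧ q' ≠ 0 ∧ q' ≠ ⊤ ∧ ∃ s r : ℝ, 2 < s ∧ r = s / (s - 1) ∧ p'.toReal = 2 * s ∧
      q'.toReal = 2 * r / (3 - r) ∧ (3 - r) * (s - 1) * (1 / (2 * s)) = 1 / (2 * r / (3 - r)) := by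
  have hpt : p ≠ ⊤ := hp.ne_top
  have hp0 : p ≠ 0 := (zero_lt_one.trans hp1).ne'
  have h0 : p' ≠ 0 := by rintro rfl; simp at hp'
  have ht : p' ≠ ⊤ := by
    rintro rfl
    simp at hp'
    exact hp1.ne' hp'
  have hq0 : q ≠ 0 := by rintro rfl; simp at hq; exact h0 hq
  have hqt : q ≠ ⊤ := by rintro rfl; rw [ENNReal.mul_top (by norm_num)] at hq; exact ht hq
  have hq'0 : q' ≠ 0 := by rintro rfl; simp at hq'
  have i1 : ∀ x : ℝ≥0∞, x ≠ 0 → 1 / x ≠ ⊤ := by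
    intro x hx h
    rw [one_div, ENNReal.inv_eq_top] at h; exact hx h
  have e1 := congrArg ENNReal.toReal hp'
  rw [ENNReal.toReal_add (i1 p hp0) (i1 p' h0), ENNReal.toReal_div, ENNReal.toReal_div, ENNReal.toReal_one] at e1
  have e2 := congrArg ENNReal.toReal hq
  rw [ENNReal.toReal_mul] at e2
  have e3 := congrArg ENNReal.toReal hq'
  rw [ENNReal.toReal_add (i1 q hq0) (i1 q' hq'0), ENNReal.toReal_div, ENNReal.toReal_div, ENNReal.toReal_one] at e3
  have hP : p.toReal < 4 / 3 := by
    have := (ENNReal.toReal_lt_toReal hpt (ENNReal.div_lt_top (by norm_num) (by norm_num)).ne).2 hp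
    simpa using this
  have hP0 : 0 < p.toReal := ENNReal.toReal_pos hp0 hpt
  have hP'0 : 0 < p'.toReal := ENNReal.toReal_pos h0 ht
  have hQ0 : 0 < q.toReal := ENNReal.toReal_pos hq0 hqt
  have h3 : (3:ℝ≥0∞).toReal = 3 := by simp
  rw [h3] at e2
  have h4 : 4 < p'.toReal := by
    field_simp at e1
    nlinarith
  have hq't : q' ≠ ⊤ := by
    rintro rfl
    simp at e3
    linarith
  have hQ'0 : 0 < q'.toReal := ENNReal.toReal_pos hq'0 hq't
  obtain ⟨s, hs⟩ : ∃ s : ℝ, p'.toReal = 2 * s := ⟨p'.toReal / 2, by ring⟩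
  have hs1 : 0 < s - 1 := by linarith
  have h5 : 0 < 2 * s - 3 := by linarith
  have hr : 3 - s / (s - 1) = (2 * s - 3) / (s - 1) := by
    rw [_root_.eq_div_iff hs1.ne', sub_mul, div_mul_cancel₀ _ hs1.ne']; ring
  have hr2 : 2 * (s / (s - 1)) / (3 - s / (s - 1)) = 2 * s / (2 * s - 3) := by
    rw [hr]; field_simp
  refine ⟨h0, ht, hq'0, hq't, s, _, by linarith, rfl, hs, ?_, ?_⟩
  · rw [hr2]
    have hq3 : q.toReal = 2 * s / 3 := by linarith
    rw [hq3] at e3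
    rw [_root_.eq_div_iff h5.ne']
    have hs0 : 0 < s := by linarith
    field_simp at e3
    linarith
  · rw [hr2, hr, div_mul_cancel₀ _ hs1.ne']
    have hs0 : 0 < s := by linarith
    field_simp

lemma reduc (a b : ℝ) (φ : ℝ → ℝ) (hφ : ContDiffOn ℝ 2 φ (Ioo a b))
    (κ : ℝ → ℝ) (hκ : ∀ x ∈ Ioo a b, κ x = deriv (deriv φ) x) :
    ContinuousOn κ (Ioo a b) ∧
    ∃ φ' κ' : ℝ → ℝ, Measurable φ' ∧ Measurable κ' ∧ (∀ x ∈ Ioo a b, φ' x = φ x) ∧ (∀ x ∈ Ioo a b, κ' x = κ x) ∧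
      (∀ x ∈ Ioo a b, HasDerivAt φ' (deriv φ x) x) ∧ (∀ x ∈ Ioo a b, HasDerivAt (deriv φ) (κ' x) x) := by
  have ho : IsOpen (Ioo a b) := isOpen_Ioo
  have hd : ContDiffOn ℝ 1 (deriv φ) (Ioo a b) := ((contDiffOn_succ_iff_deriv_of_isOpen (n := 1) ho).1 (by simpa [one_add_one_eq_two] using hφ)).2.2
  have hdd : ContinuousOn (deriv (deriv φ)) (Ioo a b) := hd.continuousOn_deriv_of_isOpen ho le_rfl
  have hκc : ContinuousOn κ (Ioo a b) := hdd.congr hκ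
  refine ⟨hκc, (Ioo a b).indicator φ, deriv (deriv φ), ?_, measurable_deriv _, fun x hx => indicator_of_mem hx _, fun x hx => (hκ x hx).symm, ?_, ?_⟩
  · have := hφ.continuousOn.measurable_piecewise (g := fun _ => (0:ℝ)) continuousOn_const measurableSet_Ioo
    convert this using 1
    ext x; simp [indicator, piecewise]
  · intro x hx
    have h1 : HasDerivAt φ (deriv φ x) x := ((hφ.differentiableOn (by norm_num)).differentiableAt (ho.mem_nhds hx)).hasDerivAt
    refine h1.congr_of_eventuallyEq ?_
    filter_upwards [ho.mem_nhds hx] with y hy using indicator_of_mem hy _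
  · intro x hx
    exact ((hd.differentiableOn (by norm_num)).differentiableAt (ho.mem_nhds hx)).hasDerivAt

lemma g_int (a b : ℝ) (κ : ℝ → ℝ) (hκ : ContinuousOn κ (Ioo a b)) (g : ℝ → ℂ) (hg : Continuous g)
    (hc : HasCompactSupport g) (hs : tsupport g ⊆ Ioo a b) :
    IntegrableOn (fun x => g x * ((κ x ^ ((1:ℝ)/3) : ℝ) : ℂ)) (Ioo a b) := by
  have h1 : ContinuousOn (fun x => g x * ((κ x ^ ((1:ℝ)/3) : ℝ) : ℂ)) (tsupport g) := by
    refine hg.continuousOn.mul (Complex.continuous_ofReal.comp_continuousOn ?_)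
    exact (hκ.mono hs).rpow_const fun x _ => Or.inr (by norm_num)
  have h2 : IntegrableOn (fun x => g x * ((κ x ^ ((1:ℝ)/3) : ℝ) : ℂ)) (tsupport g) := h1.integrableOn_compact hc
  rw [integrableOn_iff_integrable_of_support_subset] at h2
  · exact h2.integrableOn
  · intro x hx
    apply subset_tsupport
    intro h
    exact hx (by simp [h])

/-- the linearized extension-type operator
`ℰ_{ε',ε''} g(ξ,η) = ∫_I χ̂(ε'(x)ξ) χ̂(ε''(x)η) e^{i(ξx + ηφ(x))} g(x) κ(x)^{1/3} dx`
satisfies `‖ℰ_{ε',ε''} g‖_{L^{p'}(ℝ²)} ≤ C_p ‖g‖_{L^{q'}(I,μ)}` for `g ∈ C_c^∞(I)`,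
uniformly in the measurable functions `ε', ε'' : I → (0,1)`, where `1 ≤ p < 4/3`,
`p' = 3q`, and `μ` has density `κ^{1/3}` on the bounded open interval `I`. -/
theorem maximal_restriction_stmt3
    (a b : ℝ) (hab : a < b)
    (φ : ℝ → ℝ) (hφ : ContDiffOn ℝ 2 φ (Ioo a b)) (hconv : ConvexOn ℝ (Ioo a b) φ)
    (κ : ℝ → ℝ) (hκ : ∀ x ∈ Ioo a b, κ x = deriv (deriv φ) x)
    (hκ0 : ∀ x ∈ Ioo a b, 0 ≤ κ x)
    (μ : Measure ℝ)
    (hμ : μ = (volume.restrict (Ioo a b)).withDensity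
      (fun x => ENNReal.ofReal (κ x ^ ((1 : ℝ) / 3))))
    (χ : 𝓢(ℝ, ℝ)) (hχeven : ∀ u, χ (-u) = χ u) (hχint : ∫ u, χ u = 1)
    (p p' q q' : ℝ≥0∞) (hp1 : 1 ≤ p) (hp : p < 4 / 3)
    (hp' : 1 / p + 1 / p' = 1) (hq : p' = 3 * q) (hq' : 1 / q + 1 / q' = 1) :
    ∃ C : ℝ, 0 < C ∧
      ∀ (ε' ε'' : ℝ → ℝ), Measurable ε' → Measurable ε'' →
        (∀ x ∈ Ioo a b, ε' x ∈ Ioo (0 : ℝ) 1) → (∀ x ∈ Ioo a b, ε'' x ∈ Ioo (0 : ℝ) 1) →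
        ∀ g : ℝ → ℂ, ContDiff ℝ (⊤ : ℕ∞) g → HasCompactSupport g → tsupport g ⊆ Ioo a b →
          eLpNorm (fun ξη : ℝ × ℝ => ∫ x in Ioo a b,
              fourierTransform1 (fun u => (χ u : ℂ)) (ε' x * ξη.1) *
              fourierTransform1 (fun u => (χ u : ℂ)) (ε'' x * ξη.2) *
              Complex.exp (Complex.I * (ξη.1 * x + ξη.2 * φ x)) * g x *
              ((κ x ^ ((1 : ℝ) / 3) : ℝ) : ℂ)) p' volume
            ≤ ENNReal.ofReal C * eLpNorm g q' μ := by
  obtain ⟨hκc, φ1, κ1, hfm1, hkm1, hφ1, hκ1, hd1, hd2⟩ := reduc a b φ hφ κ hκ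
  have hμ1 : μ = (volume.restrict (Ioo a b)).withDensity
      (fun x => ENNReal.ofReal (κ1 x ^ ((1 : ℝ) / 3))) := by
    rw [hμ]
    refine withDensity_congr_ae ?_
    filter_upwards [ae_restrict_mem measurableSet_Ioo] with x hx
    rw [hκ1 x hx]
  have hκ10 : ∀ x ∈ Ioo a b, 0 ≤ κ1 x := fun x hx => by rw [hκ1 x hx]; exact hκ0 x hx
  have hkc1 : ContinuousOn κ1 (Ioo a b) := hκc.congr hκ1
  have hdm : Measurable (fun x => ENNReal.ofReal (κ1 x ^ ((1 : ℝ) / 3))) := by fun_prop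
  have hInt : ∀ F : ℝ → ℝ≥0∞, Measurable F → ∫⁻ x, F x ∂μ =
      ∫⁻ x in Ioo a b, F x * ENNReal.ofReal (κ1 x ^ ((1 : ℝ) / 3)) := by
    intro F hF
    rw [hμ1, lintegral_withDensity_eq_lintegral_mul _ hdm hF]
    refine lintegral_congr fun x => ?_
    rw [Pi.mul_apply, mul_comm]
  have hop : ∀ (e1 e2 : ℝ → ℝ) (g : ℝ → ℂ) (ζ : ℝ × ℝ), ∫ x in Ioo a b,
              fourierTransform1 (fun u => (χ u : ℂ)) (e1 x * ζ.1) *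
              fourierTransform1 (fun u => (χ u : ℂ)) (e2 x * ζ.2) *
              Complex.exp (Complex.I * (ζ.1 * x + ζ.2 * φ x)) * g x *
              ((κ x ^ ((1 : ℝ) / 3) : ℝ) : ℂ) = ∫ x in Ioo a b, UU χ φ1 e1 e2 ζ x * g x * ((κ1 x ^ ((1:ℝ)/3) : ℝ) : ℂ) := by
    intro e1 e2 g ζ
    refine setIntegral_congr_fun measurableSet_Ioo fun x hx => ?_
    rw [UU, hφ1 x hx, hκ1 x hx]
    rfl
  simp_rw [hop]
  rcases hp1.eq_or_lt with rfl | hp1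
  · have ht : p' = ⊤ := by
      by_contra h
      have h1 : 0 < 1 / p' := by simpa [pos_iff_ne_zero] using h
      have h2 := ENNReal.lt_add_right (a := 1) (by simp) h1.ne'
      rw [one_div_one] at hp'
      exact h2.ne hp'.symm
    have hqt : q = ⊤ := by
      by_contra h
      rw [ht] at hq
      exact ENNReal.mul_ne_top (by norm_num) h hq.symm
    have hq1 : q' = 1 := by
      rw [hqt] at hq'
      simpa using hq'
    have hB0 : 0 ≤ ∫ u, |χ u| := integral_nonneg fun u => abs_nonneg _
    refine ⟨((∫ u, |χ u|) + 1) ^ 2, by positivity, ?_⟩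
    intro e1 e2 hm1 hm2 he1 he2 g hg hgc hgs
    rw [ht, hq1, eLpNorm_exponent_top, eLpNorm_one_eq_lintegral_enorm, hInt _ hg.continuous.measurable.enorm]
    refine eLpNormEssSup_le_of_ae_enorm_bound (Filter.Eventually.of_forall fun ζ => ?_)
    refine (enorm_integral_le_lintegral_enorm _).trans ?_
    have hmm : Measurable (fun x => ‖g x‖ₑ * ENNReal.ofReal (κ1 x ^ ((1 : ℝ) / 3))) := hg.continuous.measurable.enorm.mul hdm
    rw [← lintegral_const_mul _ hmm]
    refine setLIntegral_mono' measurableSet_Ioo fun x hx => ?_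
    rw [enorm_mul, enorm_mul, mul_assoc]
    have t1 : ‖UU χ φ1 e1 e2 ζ x‖ₑ ≤ ENNReal.ofReal (((∫ u, |χ u|) + 1) ^ 2) := by
      rw [← ofReal_norm]
      exact ENNReal.ofReal_le_ofReal (UU_bound χ φ1 e1 e2 ζ x)
    have t2 : ‖((κ1 x ^ ((1:ℝ)/3) : ℝ) : ℂ)‖ₑ = ENNReal.ofReal (κ1 x ^ ((1:ℝ)/3)) := by
      rw [← ofReal_norm, Complex.norm_real, Real.norm_of_nonneg (Real.rpow_nonneg (hκ10 x hx) _)]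
    rw [t2]
    exact mul_le_mul' t1 le_rfl
  · obtain ⟨h0, ht, hq0, hqt, s, r, hs, hr, hps, hqr, hex⟩ := exponents p p' q q' hp1 hp hp' hq hq'
    obtain ⟨C0, hC0, H⟩ := core χ a b φ1 (deriv φ) κ1 hfm1 (measurable_deriv _) hkm1 hd1 hd2 hκ10 s r hs hr
    refine ⟨C0 ^ (1 / (2 * s)), by positivity, ?_⟩
    intro e1 e2 hm1 hm2 he1 he2 g hg hgc hgs
    have h := H e1 e2 hm1 hm2 he1 he2 g hg.continuous.measurable (g_int a b κ1 hkc1 g hg.continuous hgc hgs)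
    have hs0 : 0 ≤ 1 / (2 * s) := by positivity
    rw [eLpNorm_eq_lintegral_rpow_enorm_toReal h0 ht, eLpNorm_eq_lintegral_rpow_enorm_toReal hq0 hqt, hps, hqr,
      hInt _ (hg.continuous.measurable.enorm.pow_const _)]
    refine (ENNReal.rpow_le_rpow h hs0).trans (le_of_eq ?_)
    rw [ENNReal.mul_rpow_of_nonneg _ _ hs0, ← ENNReal.rpow_mul, hex, ENNReal.ofReal_rpow_of_pos hC0]
end

section
/- Let χ ∈ 𝒮(ℝ) be even and let χ₀ : ℝ → ℝ be smooth, supported in [−2,2], and equal to 1 on [−1,1]. Let λ ≥ 1 and let ε'₁, ε'₂, ε''₁, ε''₂ : ℝ² → (0,1) be arbitrary functions. For z = (z₁,z₂), w = (w₁,w₂) ∈ ℝ², define K^λ(z,w) = ∫_{ℝ²} e^{−i(ξ(z₁−w₁) + η(z₂−w₂))} χ₀(ξ/λ)⁴ χ₀(η/λ)⁴ χ̂(ε'₁(z)ξ) χ̂(ε'₂(z)ξ) χ̂(ε'₁(w)ξ) χ̂(ε'₂(w)ξ) χ̂(ε''₁(z)η) χ̂(ε''₂(z)η) χ̂(ε''₁(w)η)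 χ̂(ε''₂(w)η) dξ dη, and set ε'(z,w,λ) = max{ε'₁(z), ε'₂(z), ε'₁(w), ε'₂(w), λ⁻¹} and ε''(z,w,λ) = max{ε''₁(z), ε''₂(z), ε''₁(w), ε''₂(w), λ⁻¹}. Then for every N ∈ ℕ there is a constant C_N, depending only on N, χ and χ₀ (not on λ, z, w, or the ε-functions), such that |K^λ(z,w)| ≤ C_N · (ε'(z,w,λ) ε''(z,w,λ))⁻¹ · (1 + |z₁−w₁|/ε'(z,w,λ))^{−N} · (1 + |z₂−w₂|/ε''(z,w,λ))^{−N}. -/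
open MeasureTheory Set SchwartzMap ENNReal

open scoped FourierTransform ContDiff

/-- Uniform weighted bounds on all derivatives of a family of smooth functions. -/
def UBd {ι : Type} (w : ι → ℝ → ℝ) (f : ι → ℝ → ℂ) : Prop :=
  (∀ i, ContDiff ℝ ∞ (f i)) ∧
    ∀ n : ℕ, ∃ C : ℝ, 0 ≤ C ∧ ∀ i x, ‖iteratedDeriv n (f i) x‖ ≤ C * w i x

lemma UBd.mul {ι : Type} {w w' : ι → ℝ → ℝ} {f g : ι → ℝ → ℂ}
    (hf : UBd w f) (hg : UBd w' g) :
    UBd (fun i x => w i x * w' i x) (fun i x => f i x * g i x) := by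
  refine ⟨fun i => (hf.1 i).mul (hg.1 i), fun n => ?_⟩
  choose A hA0 hA using hf.2
  choose B hB0 hB using hg.2
  refine ⟨∑ k ∈ Finset.range (n + 1), (n.choose k : ℝ) * A k * B (n - k),
    Finset.sum_nonneg fun k _ => mul_nonneg (mul_nonneg (by positivity) (hA0 k)) (hB0 _), ?_⟩
  intro i x
  have h := norm_iteratedFDeriv_mul_le (hf.1 i) (hg.1 i) x (n := n)
    (by exact_mod_cast le_top)
  simp only [norm_iteratedFDeriv_eq_norm_iteratedDeriv] at h
  refine h.trans ?_
  rw [Finset.sum_mul]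
  refine Finset.sum_le_sum fun k _ => ?_
  calc (n.choose k : ℝ) * ‖iteratedDeriv k (f i) x‖ * ‖iteratedDeriv (n - k) (g i) x‖
      ≤ (n.choose k : ℝ) * (A k * w i x) * (B (n - k) * w' i x) := by
        have h1 := hA k i x
        have h2 := hB (n - k) i x
        have h3 : 0 ≤ A k * w i x := (norm_nonneg _).trans h1
        gcongr
    _ = _ := by ring

lemma UBd.schwartz {ι : Type} (φ : 𝓢(ℝ, ℂ)) (c : ℝ) (hc : 0 < c) (hc1 : c ≤ 1)
    (q : ι → ℝ) (hq : ∀ i, q i ∈ Icc (0 : ℝ) 1) :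
    UBd (fun i x => (1 + (q i * x) ^ 2)⁻¹) (fun i x => φ ((c * q i) * x)) := by
  refine ⟨fun i => φ.smooth'.comp (contDiff_const.mul contDiff_id), fun n => ?_⟩
  obtain ⟨A, hA0, hA⟩ := φ.decay 0 n
  obtain ⟨B, hB0, hB⟩ := φ.decay 2 n
  refine ⟨A + B / c ^ 2, by positivity, fun i x => ?_⟩
  rw [iteratedDeriv_comp_const_smul (φ.smooth n)]
  have hA := hA (c * q i * x)
  have hB := hB (c * q i * x)
  simp only [norm_iteratedFDeriv_eq_norm_iteratedDeriv, pow_zero, one_mul, Real.norm_eq_abs,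
    sq_abs] at hA hB
  rw [norm_smul]
  have h1 : ‖(c * q i) ^ n‖ ≤ 1 := by
    rw [norm_pow]
    apply pow_le_one₀ (norm_nonneg _)
    rw [Real.norm_eq_abs, abs_of_nonneg (mul_nonneg hc.le (hq i).1)]
    exact mul_le_one₀ hc1 (hq i).1 (hq i).2
  rw [← div_eq_mul_inv, le_div_iff₀ (by positivity)]
  set D := ‖iteratedDeriv n (⇑φ) (c * q i * x)‖
  have hD : 0 ≤ D := norm_nonneg _
  have h2 : (q i * x) ^ 2 * D ≤ B / c ^ 2 := by
    rw [le_div_iff₀ (by positivity)]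
    calc _ = (c * q i * x) ^ 2 * D := by ring
      _ ≤ B := hB
  calc ‖(c * q i) ^ n‖ * D * (1 + (q i * x) ^ 2) ≤ 1 * D * (1 + (q i * x) ^ 2) := by gcongr
    _ = D + (q i * x) ^ 2 * D := by ring
    _ ≤ _ := add_le_add hA h2

lemma UBd.mono {ι : Type} {w w' : ι → ℝ → ℝ} {f : ι → ℝ → ℂ}
    (hf : UBd w f) (h : ∀ i x, w i x ≤ w' i x) : UBd w' f := by
  refine ⟨hf.1, fun n => ?_⟩
  obtain ⟨C, h0, hC⟩ := hf.2 n
  exact ⟨C, h0, fun i x => (hC i x).trans (mul_le_mul_of_nonneg_left (h i x) h0)⟩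

lemma fourier_scaled (g : ℝ → ℂ) (y : ℝ) :
    ∫ s : ℝ, Complex.exp (-Complex.I * (s * y)) * g s = 𝓕 g (y / (2 * Real.pi)) := by
  rw [Real.fourier_real_eq_integral_exp_smul]
  congr 1
  ext s
  rw [smul_eq_mul]
  congr 2
  have : (Real.pi : ℂ) ≠ 0 := by exact_mod_cast Real.pi_ne_zero
  push_cast
  field_simp

lemma UBd.decay {ι : Type} {f : ι → ℝ → ℂ} (hf : UBd (fun _ x => (1 + x ^ 2)⁻¹) f) (N : ℕ) :
    ∃ C : ℝ, 0 < C ∧ ∀ i (y : ℝ),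
      ‖∫ s : ℝ, Complex.exp (-Complex.I * (s * y)) * f i s‖ ≤ C * ((1 + |y|) ^ N)⁻¹ := by
  have hint : ∀ i n, Integrable (iteratedDeriv n (f i)) := by
    intro i n
    obtain ⟨C, h0, hC⟩ := hf.2 n
    refine (integrable_inv_one_add_sq.const_mul C).mono' ?_ (Filter.Eventually.of_forall (hC i))
    exact ((hf.1 i).continuous_iteratedDeriv n (by exact_mod_cast le_top)).aestronglyMeasurable
  have key : ∀ n : ℕ, ∃ C : ℝ, 0 ≤ C ∧ ∀ i (y : ℝ),
      |y| ^ n * ‖∫ s : ℝ, Complex.exp (-Complex.I * (s * y)) * f i s‖ ≤ C := by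
    intro n
    obtain ⟨C, h0, hC⟩ := hf.2 n
    refine ⟨C * Real.pi, by positivity, fun i y => ?_⟩
    rw [fourier_scaled]
    have h := congrFun (Real.fourier_iteratedDeriv (N := ⊤) (n := n) (hf.1 i)
      (fun m _ => hint i m) le_top) (y / (2 * Real.pi))
    have h2 : ‖(2 * Real.pi * Complex.I * ((y / (2 * Real.pi) : ℝ) : ℂ)) ^ n‖ = |y| ^ n := by
      rw [norm_pow]
      congr 1
      have : (2 * Real.pi * Complex.I * ((y / (2 * Real.pi) : ℝ) : ℂ)) = Complex.I * (y : ℂ) := by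
        have : (Real.pi : ℂ) ≠ 0 := by exact_mod_cast Real.pi_ne_zero
        push_cast
        field_simp
      rw [this]
      simp
    rw [← h2, ← norm_smul, ← h, Real.fourier_real_eq]
    have hI : C * Real.pi = ∫ x : ℝ, C * (1 + x ^ 2)⁻¹ := by
      rw [integral_const_mul, integral_univ_inv_one_add_sq]
    rw [hI]
    refine (norm_integral_le_integral_norm _).trans ?_
    refine integral_mono_of_nonneg (Filter.Eventually.of_forall fun x => ?_)
      (integrable_inv_one_add_sq.const_mul C) (Filter.Eventually.of_forall fun x => ?_)
    · exact norm_nonneg (E := ℂ) _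
    · simpa using hC i x
  obtain ⟨A, hA0, hA⟩ := key 0
  obtain ⟨B, hB0, hB⟩ := key N
  refine ⟨2 ^ (N - 1) * (A + B) + 1, by positivity, fun i y => ?_⟩
  rw [← div_eq_mul_inv, le_div_iff₀ (by positivity)]
  have hA := hA i y
  have hB := hB i y
  set D := ‖∫ s : ℝ, Complex.exp (-Complex.I * (s * y)) * f i s‖
  have hD : 0 ≤ D := norm_nonneg _
  have h1 := add_pow_le (zero_le_one' ℝ) (abs_nonneg y) N
  rw [one_pow] at h1
  calc D * (1 + |y|) ^ N ≤ D * (2 ^ (N - 1) * (1 + |y| ^ N)) := by gcongr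
    _ = 2 ^ (N - 1) * (|y| ^ 0 * D + |y| ^ N * D) := by ring
    _ ≤ 2 ^ (N - 1) * (A + B) := by gcongr
    _ ≤ _ := by linarith

lemma ft_schwartz (χ : 𝓢(ℝ, ℝ)) : ∃ φ : 𝓢(ℝ, ℂ), ∀ ξ : ℝ,
    fourierTransform1 (fun u => (χ u : ℂ)) ξ = φ ((2 * Real.pi)⁻¹ * ξ) := by
  let ψ : 𝓢(ℝ, ℂ) := SchwartzMap.postcompCLM (𝕜 := ℝ) Complex.ofRealCLM χ
  refine ⟨𝓕 ψ, fun ξ => ?_⟩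
  rw [fourierTransform1, fourier_scaled, SchwartzMap.fourier_coe, div_eq_inv_mul]
  rfl

lemma one_dim (χ : 𝓢(ℝ, ℝ)) (χ₀ : ℝ → ℝ) (hχ₀smooth : ContDiff ℝ (⊤ : ℕ∞) χ₀)
    (hχ₀supp : Function.support χ₀ ⊆ Icc (-2 : ℝ) 2) (N : ℕ) :
    ∃ C : ℝ, 0 < C ∧ ∀ lam : ℝ, 1 ≤ lam → ∀ a b c d : ℝ, 0 < a → 0 < b → 0 < c → 0 < d →
      ∀ x : ℝ,
      ‖∫ ξ : ℝ, Complex.exp (-Complex.I * (ξ * x)) * (((χ₀ (ξ / lam) ^ 4 : ℝ) : ℂ) *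
        fourierTransform1 (fun u => (χ u : ℂ)) (a * ξ) *
        fourierTransform1 (fun u => (χ u : ℂ)) (b * ξ) *
        fourierTransform1 (fun u => (χ u : ℂ)) (c * ξ) *
        fourierTransform1 (fun u => (χ u : ℂ)) (d * ξ))‖ ≤
      C * (max (max (max a b) (max c d)) lam⁻¹)⁻¹ *
        ((1 + |x| / max (max (max a b) (max c d)) lam⁻¹) ^ N)⁻¹ := by
  obtain ⟨φ, hφ⟩ := ft_schwartz χ
  have hcs : HasCompactSupport (fun x => ((χ₀ x ^ 4 : ℝ) : ℂ)) := by
    refine HasCompactSupport.intro (isCompact_Icc (a := (-2 : ℝ)) (b := 2)) fun x hx => ?_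
    have : χ₀ x = 0 := by
      by_contra h
      exact hx (hχ₀supp h)
    simp [this]
  have hsm : ContDiff ℝ ∞ (fun x => ((χ₀ x ^ 4 : ℝ) : ℂ)) :=
    Complex.ofRealCLM.contDiff.comp (hχ₀smooth.pow 4)
  let ψ : 𝓢(ℝ, ℂ) := hcs.toSchwartzMap hsm
  have hψ : ∀ x, ψ x = ((χ₀ x ^ 4 : ℝ) : ℂ) := fun x => rfl
  let ι : Type := {t : Fin 5 → ℝ // (∀ j, t j ∈ Icc (0 : ℝ) 1) ∧ ∃ j, t j = 1}
  have hpi : 0 < (2 * Real.pi)⁻¹ := by positivity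
  have hpi1 : (2 * Real.pi)⁻¹ ≤ 1 := inv_le_one_of_one_le₀ (by linarith [Real.pi_gt_three])
  have B (j : Fin 5) := UBd.schwartz (ι := ι) φ _ hpi hpi1 (fun t => t.1 j) (fun t => t.2.1 j)
  have B0 := UBd.schwartz (ι := ι) ψ 1 one_pos le_rfl (fun t => t.1 0) (fun t => t.2.1 0)
  have P := (((B0.mul (B 1)).mul (B 2)).mul (B 3)).mul (B 4)
  have P' := P.mono (w' := fun _ x => (1 + x ^ 2)⁻¹) (by
    rintro ⟨t, ht, j, hj⟩ x
    have e : ∀ k, 0 ≤ (1 + (t k * x) ^ 2)⁻¹ ∧ (1 + (t k * x) ^ 2)⁻¹ ≤ 1 := fun k =>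
      ⟨by positivity, inv_le_one_of_one_le₀ (by nlinarith [sq_nonneg (t k * x)])⟩
    have hp : ∏ k, (1 + (t k * x) ^ 2)⁻¹ ≤ (1 + (t j * x) ^ 2)⁻¹ := by
      rw [← Finset.mul_prod_erase _ _ (Finset.mem_univ j)]
      exact mul_le_of_le_one_right (e j).1
        (Finset.prod_le_one (fun k _ => (e k).1) (fun k _ => (e k).2))
    rw [hj, one_mul, Fin.prod_univ_five] at hp
    exact hp)
  obtain ⟨C, hC, hb⟩ := P'.decay N
  refine ⟨C, hC, fun lam hlam a b c d ha hb' hc hd x => ?_⟩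
  set ε := max (max (max a b) (max c d)) lam⁻¹ with hε
  have hl : 0 < lam⁻¹ := by positivity
  have hεpos : 0 < ε := lt_of_lt_of_le hl (le_max_right _ _)
  have ea : a ≤ ε := by simp [hε]
  have eb : b ≤ ε := by simp [hε]
  have ec : c ≤ ε := by simp [hε]
  have ed : d ≤ ε := by simp [hε]
  have el : lam⁻¹ ≤ ε := by simp [hε]
  have cases : ε = lam⁻¹ ∨ ε = a ∨ ε = b ∨ ε = c ∨ ε = d := by
    rw [hε]
    rcases max_choice (max (max a b) (max c d)) lam⁻¹ with h | h
    · rw [h]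
      rcases max_choice (max a b) (max c d) with h2 | h2
      · rw [h2]
        rcases max_choice a b with h3 | h3 <;> simp [h3]
      · rw [h2]
        rcases max_choice c d with h3 | h3 <;> simp [h3]
    · exact Or.inl h
  let t : ι := ⟨![lam⁻¹ / ε, a / ε, b / ε, c / ε, d / ε], by
    intro j
    have aux : ∀ r, 0 < r → r ≤ ε → r / ε ∈ Icc (0 : ℝ) 1 := fun r h0 h1 =>
      ⟨by positivity, (div_le_one hεpos).2 h1⟩
    fin_cases j
    · exact aux _ hl el
    · exact aux _ ha ea
    · exact aux _ hb' eb
    · exact aux _ hc ec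
    · exact aux _ hd ed, by
    have aux : ∀ r, ε = r → r / ε = 1 := fun r h => by rw [← h]; exact div_self hεpos.ne'
    rcases cases with h | h | h | h | h
    · exact ⟨0, aux _ h⟩
    · exact ⟨1, aux _ h⟩
    · exact ⟨2, aux _ h⟩
    · exact ⟨3, aux _ h⟩
    · exact ⟨4, aux _ h⟩⟩
  have hb := hb t (x / ε)
  set G : ℝ → ℂ := fun ξ => Complex.exp (-Complex.I * (ξ * x)) * (((χ₀ (ξ / lam) ^ 4 : ℝ) : ℂ) *
        fourierTransform1 (fun u => (χ u : ℂ)) (a * ξ) *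
        fourierTransform1 (fun u => (χ u : ℂ)) (b * ξ) *
        fourierTransform1 (fun u => (χ u : ℂ)) (c * ξ) *
        fourierTransform1 (fun u => (χ u : ℂ)) (d * ξ)) with hG
  have hs := Measure.integral_comp_div G ε
  have heq : (∫ s : ℝ, Complex.exp (-Complex.I * (s * (x / ε : ℝ))) *
      (ψ (1 * t.1 0 * s) * φ ((2 * Real.pi)⁻¹ * t.1 1 * s) * φ ((2 * Real.pi)⁻¹ * t.1 2 * s) *
        φ ((2 * Real.pi)⁻¹ * t.1 3 * s) * φ ((2 * Real.pi)⁻¹ * t.1 4 * s))) =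
      ∫ s : ℝ, G (s / ε) := by
    congr 1
    ext s
    simp only [hG, hφ, hψ]
    have t0 : t.1 0 = lam⁻¹ / ε := rfl
    have t1 : t.1 1 = a / ε := rfl
    have t2 : t.1 2 = b / ε := rfl
    have t3 : t.1 3 = c / ε := rfl
    have t4 : t.1 4 = d / ε := rfl
    rw [t0, t1, t2, t3, t4]
    have r0 : 1 * (lam⁻¹ / ε) * s = s / ε / lam := by ring
    have r : ∀ y : ℝ, (2 * Real.pi)⁻¹ * (y / ε) * s = (2 * Real.pi)⁻¹ * (y * (s / ε)) :=
      fun y => by ring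
    have r5 : -Complex.I * ((s : ℂ) * ((x / ε : ℝ) : ℂ)) =
      -Complex.I * (((s / ε : ℝ) : ℂ) * (x : ℂ)) := by push_cast; ring
    rw [r0, r, r, r, r, r5]
  rw [heq, hs, norm_smul, Real.norm_eq_abs, abs_abs, abs_of_pos hεpos, abs_div,
    abs_of_pos hεpos] at hb
  calc ‖∫ ξ, G ξ‖ = ε⁻¹ * (ε * ‖∫ ξ, G ξ‖) := by field_simp
    _ ≤ ε⁻¹ * (C * ((1 + |x| / ε) ^ N)⁻¹) := by gcongr
    _ = _ := by ring

/-- the kernel `K^λ(z,w)` of `(T^λ)* T^λ` satisfies, for every `N`, the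
uniform product-kernel bound
`|K^λ(z,w)| ≤ C_N (ε'ε'')⁻¹ (1+|z₁−w₁|/ε')^{−N} (1+|z₂−w₂|/ε'')^{−N}`, where
`ε' = ε'(z,w,λ)`, `ε'' = ε''(z,w,λ)` are the maxima of the corresponding scale values
and `λ⁻¹`, with `C_N` depending only on `N`, `χ` and `χ₀`. -/
theorem maximal_restriction_stmt9
    (χ : 𝓢(ℝ, ℝ)) (hχeven : ∀ u, χ (-u) = χ u)
    (χ₀ : ℝ → ℝ) (hχ₀smooth : ContDiff ℝ (⊤ : ℕ∞) χ₀)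
    (hχ₀supp : Function.support χ₀ ⊆ Icc (-2 : ℝ) 2)
    (hχ₀one : ∀ x ∈ Icc (-1 : ℝ) 1, χ₀ x = 1) :
    ∀ N : ℕ, ∃ C : ℝ, 0 < C ∧
      ∀ (lam : ℝ), 1 ≤ lam →
      ∀ (e₁' e₂' e₁'' e₂'' : ℝ × ℝ → ℝ),
        (∀ z, e₁' z ∈ Ioo (0 : ℝ) 1) → (∀ z, e₂' z ∈ Ioo (0 : ℝ) 1) →
        (∀ z, e₁'' z ∈ Ioo (0 : ℝ) 1) → (∀ z, e₂'' z ∈ Ioo (0 : ℝ) 1) →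
      ∀ z w : ℝ × ℝ,
        ‖∫ v : ℝ × ℝ,
            Complex.exp (-Complex.I * (v.1 * (z.1 - w.1) + v.2 * (z.2 - w.2))) *
            ((χ₀ (v.1 / lam) ^ 4 * χ₀ (v.2 / lam) ^ 4 : ℝ) : ℂ) *
            fourierTransform1 (fun u => (χ u : ℂ)) (e₁' z * v.1) *
            fourierTransform1 (fun u => (χ u : ℂ)) (e₂' z * v.1) *
            fourierTransform1 (fun u => (χ u : ℂ)) (e₁' w * v.1) *
            fourierTransform1 (fun u => (χ u : ℂ)) (e₂' w * v.1) *
            fourierTransform1 (fun u => (χ u : ℂ)) (e₁'' z * v.2) *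
            fourierTransform1 (fun u => (χ u : ℂ)) (e₂'' z * v.2) *
            fourierTransform1 (fun u => (χ u : ℂ)) (e₁'' w * v.2) *
            fourierTransform1 (fun u => (χ u : ℂ)) (e₂'' w * v.2)‖ ≤
          C * (max (max (max (e₁' z) (e₂' z)) (max (e₁' w) (e₂' w))) lam⁻¹ *
                max (max (max (e₁'' z) (e₂'' z)) (max (e₁'' w) (e₂'' w))) lam⁻¹)⁻¹ *
            ((1 + |z.1 - w.1| / max (max (max (e₁' z) (e₂' z)) (max (e₁' w) (e₂' w))) lam⁻¹) ^ N)⁻¹ *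
            ((1 + |z.2 - w.2| / max (max (max (e₁'' z) (e₂'' z)) (max (e₁'' w) (e₂'' w))) lam⁻¹) ^ N)⁻¹ := by
  intro N
  obtain ⟨C, hC, h⟩ := one_dim χ χ₀ hχ₀smooth hχ₀supp N
  refine ⟨C * C, by positivity, ?_⟩
  intro lam hlam e₁' e₂' e₁'' e₂'' h1 h2 h3 h4 z w
  have A := h lam hlam (e₁' z) (e₂' z) (e₁' w) (e₂' w) (h1 z).1 (h2 z).1 (h1 w).1 (h2 w).1
    (z.1 - w.1)
  have B := h lam hlam (e₁'' z) (e₂'' z) (e₁'' w) (e₂'' w) (h3 z).1 (h4 z).1 (h3 w).1 (h4 w).1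
    (z.2 - w.2)
  have M := mul_le_mul A B (norm_nonneg _) ((norm_nonneg _).trans A)
  rw [← norm_mul, ← integral_prod_mul] at M
  refine le_of_eq_of_le ?_ (M.trans_eq ?_)
  · rw [← Measure.volume_eq_prod]
    congr 2
    ext v
    have : -Complex.I * ((v.1 : ℂ) * (z.1 - w.1) + v.2 * (z.2 - w.2)) =
      -Complex.I * (v.1 * ((z.1 - w.1 : ℝ) : ℂ)) + -Complex.I * (v.2 * ((z.2 - w.2 : ℝ) : ℂ)) := by
      push_cast; ring
    rw [this, Complex.exp_add]
    push_cast
    ring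
  · rw [mul_inv]
    ring
end

section
/- Let I ⊆ ℝ be an interval, φ : I → ℝ a convex C² function, and U = {x ∈ I : φ''(x) > 0}. Define Φ : I × I → ℝ² by Φ(x,y) = (x + y, φ(x) + φ(y)). Then: (a) Φ is injective on U²₊ = {(x,y) ∈ U × U : x < y}; (b) the Jacobian determinant of Φ is det Φ'(x,y) = φ'(y) − φ'(x), and it is strictly positive at every point of U²₊. -/
open Set

/-- for a convex `C²` function `φ` on an open interval `I`, with
`U = {x ∈ I : φ''(x) > 0}`, the map `Φ(x,y) = (x + y, φ(x) + φ(y))` is injective on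
`U²₊ = {(x,y) ∈ U × U : x < y}`; its Jacobian determinant at any `(x,y) ∈ I × I` equals
`φ'(y) − φ'(x)`, and this is strictly positive on `U²₊`. -/
theorem maximal_restriction_stmt13
    (I : Set ℝ) (hIopen : IsOpen I) (hIinterval : I.OrdConnected)
    (φ : ℝ → ℝ) (hφ : ContDiffOn ℝ 2 φ I) (hconv : ConvexOn ℝ I φ)
    (U : Set ℝ) (hU : U = {x ∈ I | 0 < deriv (deriv φ) x})
    (Φ : ℝ × ℝ → ℝ × ℝ) (hΦ : ∀ p : ℝ × ℝ, Φ p = (p.1 + p.2, φ p.1 + φ p.2)) :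
    Set.InjOn Φ {p : ℝ × ℝ | p.1 ∈ U ∧ p.2 ∈ U ∧ p.1 < p.2} ∧
    (∀ x ∈ I, ∀ y ∈ I,
      LinearMap.det (fderiv ℝ Φ (x, y) : (ℝ × ℝ) →ₗ[ℝ] (ℝ × ℝ)) = deriv φ y - deriv φ x) ∧
    (∀ x ∈ U, ∀ y ∈ U, x < y →
      0 < LinearMap.det (fderiv ℝ Φ (x, y) : (ℝ × ℝ) →ₗ[ℝ] (ℝ × ℝ))) := by
  have hdiff : ∀ x ∈ I, DifferentiableAt ℝ φ x := fun x hx =>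
    ((hφ.differentiableOn (by norm_num)) x hx).differentiableAt (hIopen.mem_nhds hx)
  have hmono : MonotoneOn (deriv φ) I := hconv.monotoneOn_deriv hdiff
  have hstrict : ∀ x ∈ U, ∀ y ∈ U, x < y → deriv φ x < deriv φ y := by
    intro x hx y hy hxy
    rw [hU] at hx hy
    obtain ⟨hxI, hx2⟩ := hx
    obtain ⟨hyI, -⟩ := hy
    rcases (hmono hxI hyI hxy.le).lt_or_eq with h | h
    · exact h
    exfalso
    have hd : HasDerivAt (deriv φ) (deriv (deriv φ) x) x :=
      (differentiableAt_of_deriv_ne_zero hx2.ne').hasDerivAt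
    have h1 : HasDerivWithinAt (deriv φ) (deriv (deriv φ) x) (Icc x y) x :=
      hd.hasDerivWithinAt
    have h2 : HasDerivWithinAt (deriv φ) 0 (Icc x y) x := by
      refine (hasDerivWithinAt_const x (Icc x y) (deriv φ x)).congr ?_ rfl
      intro z hz
      have hzI : z ∈ I := hIinterval.out hxI hyI hz
      exact le_antisymm (h ▸ hmono hzI hyI hz.2) (hmono hxI hzI hz.1)
    have := (uniqueDiffOn_Icc hxy x (left_mem_Icc.2 hxy.le)).eq_deriv _ h1 h2
    linarith
  have hdet : ∀ x ∈ I, ∀ y ∈ I,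
      LinearMap.det (fderiv ℝ Φ (x, y) : (ℝ × ℝ) →ₗ[ℝ] (ℝ × ℝ)) = deriv φ y - deriv φ x := by
    intro x hx y hy
    have hΦ' : Φ = fun p : ℝ × ℝ => (p.1 + p.2, φ p.1 + φ p.2) := funext hΦ
    have hfx : HasFDerivAt (fun p : ℝ × ℝ => φ p.1)
        (deriv φ x • ContinuousLinearMap.fst ℝ ℝ ℝ) (x, y) :=
      HasDerivAt.comp_hasFDerivAt (x, y) (h₂ := φ) (hdiff x hx).hasDerivAt hasFDerivAt_fst
    have hfy : HasFDerivAt (fun p : ℝ × ℝ => φ p.2)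
        (deriv φ y • ContinuousLinearMap.snd ℝ ℝ ℝ) (x, y) :=
      HasDerivAt.comp_hasFDerivAt (x, y) (h₂ := φ) (hdiff y hy).hasDerivAt hasFDerivAt_snd
    have hF : HasFDerivAt Φ
        ((ContinuousLinearMap.fst ℝ ℝ ℝ + ContinuousLinearMap.snd ℝ ℝ ℝ).prod
          (deriv φ x • ContinuousLinearMap.fst ℝ ℝ ℝ +
            deriv φ y • ContinuousLinearMap.snd ℝ ℝ ℝ)) (x, y) := by
      rw [hΦ']
      exact (hasFDerivAt_fst.add hasFDerivAt_snd).prodMk (hfx.add hfy)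
    rw [hF.fderiv, ← LinearMap.det_toMatrix (Module.Basis.finTwoProd ℝ), Matrix.det_fin_two]
    simp [LinearMap.toMatrix_apply]
  have key : ∀ a b c d : ℝ, a ∈ U → b ∈ U → c ∈ U → d ∈ U → a < c → c < d → d < b →
      a + b = c + d → φ a + φ b = φ c + φ d → False := by
    intro a b c d ha hb hc hd hac hcd hdb hs hφs
    have hlt := hstrict c hc d hd hcd
    rw [hU] at ha hb hc hd
    have hI1 : ∀ z ∈ Icc a c, z ∈ I := fun z hz => hIinterval.out ha.1 hc.1 hz
    have hI2 : ∀ z ∈ Icc d b, z ∈ I := fun z hz => hIinterval.out hd.1 hb.1 hz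
    obtain ⟨u, hu, hu'⟩ := exists_deriv_eq_slope φ hac
      (fun z hz => (hdiff z (hI1 z hz)).continuousAt.continuousWithinAt)
      (fun z hz => (hdiff z (hI1 z (Ioo_subset_Icc_self hz))).differentiableWithinAt)
    obtain ⟨v, hv, hv'⟩ := exists_deriv_eq_slope φ hdb
      (fun z hz => (hdiff z (hI2 z hz)).continuousAt.continuousWithinAt)
      (fun z hz => (hdiff z (hI2 z (Ioo_subset_Icc_self hz))).differentiableWithinAt)
    have e1 : φ c - φ a = φ b - φ d := by linarith
    have e2 : c - a = b - d := by linarith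
    rw [e1, e2, ← hv'] at hu'
    have m1 := hmono (hI1 u (Ioo_subset_Icc_self hu)) hc.1 hu.2.le
    have m2 := hmono hd.1 (hI2 v (Ioo_subset_Icc_self hv)) hv.1.le
    linarith
  refine ⟨?_, hdet, ?_⟩
  · rintro ⟨a, b⟩ ⟨ha, hb, hab⟩ ⟨c, d⟩ ⟨hc, hd, hcd⟩ h
    rw [hΦ, hΦ, Prod.mk.injEq] at h
    obtain ⟨h1, h2⟩ := h
    simp only at ha hb hab hc hd hcd h1 h2
    rcases lt_trichotomy a c with hlt | heq | hgt
    · exact (key a b c d ha hb hc hd hlt hcd (by linarith) h1 h2).elim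
    · exact Prod.ext heq (by simp only; linarith)
    · exact (key c d a b hc hd ha hb hgt hab (by linarith) h1.symm h2.symm).elim
  · intro x hx y hy hxy
    have hx' := hx
    have hy' := hy
    rw [hU] at hx' hy'
    rw [hdet x hx'.1 y hy'.1]
    linarith [hstrict x hx y hy hxy]
end
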